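/- arXiv:1405.1575 — 3 statements merged into one kernel-verified Lean document; each statement's English description precedes it below -/
import Mathlib

section
/- Let n > 2 and p > 2. Up to equivalence, there are exactly 6 maximal elements among the linear subspaces of n×p matrices over F2 with upper rank 2, namely: R(2,0), R(0,2), R(1,1), and the embeddings into the top-left 3×3 corner (with all other entries zero) of J3(F2), of Mata3(F2), and of V3(F2). -/
/-!
Why the classification holds.

*Every space `V` of upper rank `2` fits into one of the six.* Normalize a member of rank `2` to
`E = diag (1, 1, 0, …)` (`exists_normal_form`).

Suppose first that some member `N` has an entry `N i j ≠ 0` with both indices outside the first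
two. The minors of `N` and of `N + E` bordering that entry say that its Schur complement `T` in `N`
and `T + E` both have rank at most `1`. So `T` is, on the first two indices, a `2 × 2` idempotent of
rank one, and vanishes elsewhere; hence `V` contains a copy of the four diagonal `3 × 3` matrices
of trace zero (`exists_diag`). That set is *rigid*: looking at `3 × 3` minors, a space of rank at
most `2` containing it lives in the same `3 × 3` corner (`Rigid.exists_eq_sand`). The remaining
`3 × 3` problem is settled in `three_dg` and gives `J3` or `V3`.

Otherwise all members vanish outside the first two rows and columns. Write `b` for
the first two entries of a later row, and `c` for the first two entries of a later column; these are pairs of linear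
forms on `V`. The minors bordering the upper left `2 × 2` block, for `N` and for `N + E`, give
`b₀ c₀ + b₁ c₁ = 0` and a cubic identity. If all `b` or all `c` vanish, `V` fits into `R(2,0)` or
`R(0,2)`. Otherwise the elementary facts `forms_two`, `forms_three`, `forms_pair` on products of
linear forms over `F2` leave two possibilities: `b` and `c` are multiples of constant vectors, which
gives `R(1,1)` or `J3` (`fits_of_corner`), or `c` is `b` with its components exchanged, which
reduces to the `3 × 3` problem `three_cross` and gives `Mata3` or `V3`.

A maximal space which fits into a space of upper rank `2` is equivalent to it (`matEquiv_of_fits`).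

*The six spaces are maximal.* For the `R(s,t)`, a matrix outside the space can be completed by a
member to one with a nonzero `3 × 3` minor. For the embeddings, each of the three `3 × 3` spaces
contains, up to a right factor, a rigid set, so that a larger space of upper rank `2` stays in the
corner, where the claim is about singular `3 × 3` matrices (`isMax_embed`).

*They are pairwise inequivalent.* The properties `HasRow` and `HasCol` are invariant under
equivalence; they separate the `R(s,t)` from each other and from the embeddings. The three
embeddings have `2 ^ 5`, `2 ^ 3` and `2 ^ 4` members (`le_of_fits_embed`).
-/

open Matrix

/-- Two linear subspaces of `n × p` matrices over `K` are *equivalent* when one is obtained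
from the other by multiplying on the left and on the right by fixed invertible matrices. -/
def MatEquiv (K : Type*) [Field K] {n p : ℕ}
    (V₁ V₂ : Submodule K (Matrix (Fin n) (Fin p) K)) : Prop :=
  ∃ (P : Matrix (Fin n) (Fin n) K) (Q : Matrix (Fin p) (Fin p) K),
    IsUnit P ∧ IsUnit Q ∧
      (V₂ : Set (Matrix (Fin n) (Fin p) K)) =
        (fun M => P * M * Q) '' (V₁ : Set (Matrix (Fin n) (Fin p) K))

/-- A linear subspace of matrices is *reduced* when no nonzero vector is annihilated by every
matrix of the space, and the column spaces of the matrices of the space together span the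
whole target space. -/
def Reduced (K : Type*) [Field K] {n p : ℕ}
    (V : Submodule K (Matrix (Fin n) (Fin p) K)) : Prop :=
  (∀ x : Fin p → K, (∀ M ∈ V, M.mulVec x = 0) → x = 0) ∧
  Submodule.span K {y : Fin n → K | ∃ M ∈ V, ∃ x : Fin p → K, M.mulVec x = y} = ⊤

/-- The *upper rank* of a linear subspace of matrices: the maximal rank of a matrix in it. -/
noncomputable def urk {K : Type*} [Field K] {n p : ℕ}
    (V : Submodule K (Matrix (Fin n) (Fin p) K)) : ℕ :=
  sSup (Matrix.rank '' (V : Set (Matrix (Fin n) (Fin p) K)))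

/-- The matrix obtained by deleting the last column. -/
def dropCol {K : Type*} [Field K] {n p : ℕ} (M : Matrix (Fin n) (Fin p) K) :
    Matrix (Fin n) (Fin (p - 1)) K :=
  M.submatrix id (Fin.castLE (Nat.sub_le p 1))

/-- The matrix obtained by deleting the last row. -/
def dropRow {K : Type*} [Field K] {n p : ℕ} (M : Matrix (Fin n) (Fin p) K) :
    Matrix (Fin (n - 1)) (Fin p) K :=
  M.submatrix (Fin.castLE (Nat.sub_le n 1)) id

/-- A linear subspace of matrices (of upper rank `r = urk V`) is *semi-primitive* when it is
reduced and it is not equivalent to a subspace `T` such that the space obtained by deleting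
the last column of each matrix of `T` has upper rank at most `r - 1`. -/
def SemiPrimitive (K : Type*) [Field K] {n p : ℕ}
    (V : Submodule K (Matrix (Fin n) (Fin p) K)) : Prop :=
  Reduced K V ∧
    ¬ ∃ T : Submodule K (Matrix (Fin n) (Fin p) K),
        MatEquiv K V T ∧ ∀ M ∈ T, (dropCol M).rank ≤ urk V - 1

/-- A linear subspace of matrices (of upper rank `r = urk V`) is *primitive* when it is
semi-primitive and it is not equivalent to a subspace `T` such that the space obtained by
deleting the last row of each matrix of `T` has upper rank at most `r - 1`. -/
def Primitive (K : Type*) [Field K] {n p : ℕ}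
    (V : Submodule K (Matrix (Fin n) (Fin p) K)) : Prop :=
  SemiPrimitive K V ∧
    ¬ ∃ T : Submodule K (Matrix (Fin n) (Fin p) K),
        MatEquiv K V T ∧ ∀ M ∈ T, (dropRow M).rank ≤ urk V - 1

/-- `R(s, t)`: the space of `n × p` matrices whose `(i, j)` entry vanishes whenever `i ≥ s`
and `j ≥ t` (rows and columns being indexed from `0`). -/
def Rst (K : Type*) [Field K] (n p s t : ℕ) : Submodule K (Matrix (Fin n) (Fin p) K) where
  carrier := {M | ∀ (i : Fin n) (j : Fin p), s ≤ (i : ℕ) → t ≤ (j : ℕ) → M i j = 0}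
  add_mem' := by
    intro M N hM hN i j hi hj
    simp [Matrix.add_apply, hM i j hi hj, hN i j hi hj]
  zero_mem' := fun i j _ _ => rfl
  smul_mem' := by
    intro c M hM i j hi hj
    simp [Matrix.smul_apply, hM i j hi hj]

/-- `J3(F2)`: the space of upper-triangular `3 × 3` matrices over `F2` with trace zero. -/
def J3 : Submodule (ZMod 2) (Matrix (Fin 3) (Fin 3) (ZMod 2)) where
  carrier := {M | M.trace = 0 ∧ ∀ i j : Fin 3, j < i → M i j = 0}
  add_mem' := by
    rintro M N ⟨hM1, hM2⟩ ⟨hN1, hN2⟩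
    refine ⟨by simp [Matrix.trace_add, hM1, hN1], ?_⟩
    intro i j h
    simp [Matrix.add_apply, hM2 i j h, hN2 i j h]
  zero_mem' := by
    refine ⟨by simp, ?_⟩
    intro i j h
    simp
  smul_mem' := by
    rintro c M ⟨hM1, hM2⟩
    refine ⟨by simp [Matrix.trace_smul, hM1], ?_⟩
    intro i j h
    simp [Matrix.smul_apply, hM2 i j h]

/-- `Mata3(F2)`: the space of alternating (skew-symmetric with zero diagonal) `3 × 3`
matrices over `F2`. -/
def Mata3 : Submodule (ZMod 2) (Matrix (Fin 3) (Fin 3) (ZMod 2)) where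
  carrier := {M | Mᵀ = -M ∧ ∀ i : Fin 3, M i i = 0}
  add_mem' := by
    rintro M N ⟨hM1, hM2⟩ ⟨hN1, hN2⟩
    refine ⟨by rw [Matrix.transpose_add, hM1, hN1]; abel, fun i => by
      simp [Matrix.add_apply, hM2 i, hN2 i]⟩
  zero_mem' := ⟨by simp, fun i => rfl⟩
  smul_mem' := by
    rintro c M ⟨hM1, hM2⟩
    exact ⟨by rw [Matrix.transpose_smul, hM1, smul_neg], fun i => by
      simp [Matrix.smul_apply, hM2 i]⟩

/-- `V3(F2)`: the `3 × 3` matrices over `F2` with zero diagonal satisfying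
`M 0 1 + M 1 2 + M 2 0 = 0` and `M 2 1 + M 1 0 + M 0 2 = 0`. -/
def V3 : Submodule (ZMod 2) (Matrix (Fin 3) (Fin 3) (ZMod 2)) where
  carrier := {M | (∀ i : Fin 3, M i i = 0) ∧
    M 0 1 + M 1 2 + M 2 0 = 0 ∧ M 2 1 + M 1 0 + M 0 2 = 0}
  add_mem' := by
    rintro M N ⟨hM1, hM2, hM3⟩ ⟨hN1, hN2, hN3⟩
    refine ⟨fun i => by simp [Matrix.add_apply, hM1 i, hN1 i], ?_, ?_⟩
    · simp only [Matrix.add_apply]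
      linear_combination hM2 + hN2
    · simp only [Matrix.add_apply]
      linear_combination hM3 + hN3
  zero_mem' := by
    refine ⟨fun i => rfl, ?_, ?_⟩ <;> simp
  smul_mem' := by
    rintro c M ⟨hM1, hM2, hM3⟩
    refine ⟨fun i => by simp [Matrix.smul_apply, hM1 i], ?_, ?_⟩
    · simp only [Matrix.smul_apply, smul_eq_mul]
      linear_combination c * hM2
    · simp only [Matrix.smul_apply, smul_eq_mul]
      linear_combination c * hM3

/-- The embedding of a space `W` of `3 × 3` matrices into the top-left corner of the
`n × p` matrices (all other entries being zero). -/
def embed (n p : ℕ) (hn : 3 ≤ n) (hp : 3 ≤ p)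
    (W : Submodule (ZMod 2) (Matrix (Fin 3) (Fin 3) (ZMod 2))) :
    Submodule (ZMod 2) (Matrix (Fin n) (Fin p) (ZMod 2)) where
  carrier := {M | M.submatrix (Fin.castLE hn) (Fin.castLE hp) ∈ W ∧
    ∀ (i : Fin n) (j : Fin p), 3 ≤ (i : ℕ) ∨ 3 ≤ (j : ℕ) → M i j = 0}
  add_mem' := by
    rintro M N ⟨hM1, hM2⟩ ⟨hN1, hN2⟩
    exact ⟨W.add_mem hM1 hN1, fun i j h => by simp [Matrix.add_apply, hM2 i j h, hN2 i j h]⟩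
  zero_mem' := ⟨W.zero_mem, fun i j _ => rfl⟩
  smul_mem' := by
    rintro c M ⟨hM1, hM2⟩
    exact ⟨W.smul_mem c hM1, fun i j h => by simp [Matrix.smul_apply, hM2 i j h]⟩

/-- A maximal element among the linear subspaces of matrices with upper rank `2`. -/
def IsMaxUrk2 {n p : ℕ} (V : Submodule (ZMod 2) (Matrix (Fin n) (Fin p) (ZMod 2))) : Prop :=
  urk V = 2 ∧ ∀ W : Submodule (ZMod 2) (Matrix (Fin n) (Fin p) (ZMod 2)),
    urk W = 2 → V ≤ W → W = V

/-- The list of the six maximal spaces with upper rank `2`. -/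
def maxList (n p : ℕ) (hn : 2 < n) (hp : 2 < p) :
    List (Submodule (ZMod 2) (Matrix (Fin n) (Fin p) (ZMod 2))) :=
  [Rst (ZMod 2) n p 2 0, Rst (ZMod 2) n p 0 2, Rst (ZMod 2) n p 1 1,
   embed n p hn hp J3, embed n p hn hp Mata3, embed n p hn hp V3]


/-! ### Linear forms over the field with two elements -/

theorem F2_cases (x : ZMod 2) : x = 0 ∨ x = 1 := by revert x; decide

theorem F2_ne_zero {x : ZMod 2} (h : x ≠ 0) : x = 1 := (F2_cases x).resolve_left h

theorem F2_eq_of_add {x y : ZMod 2} (h : x + y = 0) : x = y := by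
  revert x y; decide

/-- Over `F2`, the product of two nonzero linear forms does not vanish identically. -/
theorem forms_two {E : Type*} [AddCommGroup E] [Module (ZMod 2) E] (V : Submodule (ZMod 2) E)
    (f g : E → ZMod 2) (hf : ∀ a b, f (a + b) = f a + f b) (hg : ∀ a b, g (a + b) = g a + g b)
    (h : ∀ v ∈ V, f v * g v = 0) : (∀ v ∈ V, f v = 0) ∨ (∀ v ∈ V, g v = 0) := by
  by_contra! hc
  obtain ⟨⟨u, hu, hfu⟩, v, hv, hgv⟩ := hc
  have h1 := h u hu
  have h2 := h v hv
  have h3 := h _ (V.add_mem hu hv)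
  rw [hf, hg] at h3
  rcases F2_cases (f u) with e|e <;> rcases F2_cases (g v) with e'|e' <;> simp_all

set_option synthInstance.maxHeartbeats 400000 in
set_option synthInstance.maxSize 1000 in
/-- Over `F2`, three nonzero linear forms have an identically zero product only if they sum
to zero. -/
theorem forms_three {E : Type*} [AddCommGroup E] [Module (ZMod 2) E] (V : Submodule (ZMod 2) E)
    (f g k : E → ZMod 2) (hf : ∀ a b, f (a + b) = f a + f b) (hg : ∀ a b, g (a + b) = g a + g b)
    (hk : ∀ a b, k (a + b) = k a + k b)
    (h : ∀ v ∈ V, f v * g v * k v = 0) :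
    (∀ v ∈ V, f v = 0) ∨ (∀ v ∈ V, g v = 0) ∨ (∀ v ∈ V, k v = 0) ∨
      (∀ v ∈ V, f v + g v + k v = 0) := by
  by_cases h3 : ∀ v ∈ V, k v = 0
  · exact Or.inr (Or.inr (Or.inl h3))
  by_contra! hc
  obtain ⟨⟨u, hu, hfu⟩, ⟨v, hv, hgv⟩, ⟨w, hw, hkw⟩, z, hz, hfz⟩ := hc
  have key : ∀ s ∈ V, ∀ t ∈ V, (f s + f t) * (g s + g t) * (k s + k t) = 0 := by
    intro s hs t ht
    rw [← hf, ← hg, ← hk]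
    exact h _ (V.add_mem hs ht)
  have huv := V.add_mem hu hv
  have huw := V.add_mem hu hw
  have hvw := V.add_mem hv hw
  have a1 := h u hu
  have a2 := h v hv
  have a3 := h w hw
  have a4 := h z hz
  have b1 := key u hu v hv
  have b2 := key u hu w hw
  have b3 := key v hv w hw
  have b4 := key u hu z hz
  have b5 := key v hv z hz
  have b6 := key w hw z hz
  have c1 := key _ huv z hz
  have c2 := key _ huw z hz
  have c3 := key _ hvw z hz
  rw [hf, hg, hk] at c1 c2 c3
  have hfu := F2_ne_zero hfu
  have hgv := F2_ne_zero hgv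
  have hkw := F2_ne_zero hkw
  have hfz := F2_ne_zero hfz
  clear h key h3 hu hv hw hz huv huw hvw
  simp only [hfu, hgv, hkw] at a1 a2 a3 b1 b2 b3 b4 b5 b6 c1 c2 c3
  generalize g u = gu at *
  generalize k u = ku at *
  generalize f v = fv at *
  generalize k v = kv at *
  generalize f w = fw at *
  generalize g w = gw at *
  generalize f z = fz at *
  generalize g z = gz at *
  generalize k z = kz at *
  clear hfu hgv hkw
  rcases F2_cases fz with e|e <;> rcases F2_cases gz with e'|e' <;>
    rcases F2_cases kz with e''|e'' <;> subst e e' e'' <;> revert hfz a4 gu ku fv kv fw gw <;> decide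

/-- The solutions in linear forms over `F2` of `b₀ c₀ + b₁ c₁ = 0` (pointwise) with both
`b` and `c` nonzero: either `c` is `b` with its components exchanged, or `b` and `c` are
proportional to constant vectors that are orthogonal to each other. -/
theorem forms_pair {E : Type*} [AddCommGroup E] [Module (ZMod 2) E] (V : Submodule (ZMod 2) E)
    (b₀ b₁ c₀ c₁ : E → ZMod 2)
    (hb₀ : ∀ a b, b₀ (a + b) = b₀ a + b₀ b) (hb₁ : ∀ a b, b₁ (a + b) = b₁ a + b₁ b)
    (hc₀ : ∀ a b, c₀ (a + b) = c₀ a + c₀ b) (hc₁ : ∀ a b, c₁ (a + b) = c₁ a + c₁ b)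
    (h : ∀ v ∈ V, b₀ v * c₀ v + b₁ v * c₁ v = 0)
    (hb : ¬ ∀ v ∈ V, b₀ v = 0 ∧ b₁ v = 0) (hc : ¬ ∀ v ∈ V, c₀ v = 0 ∧ c₁ v = 0) :
    ((∀ v ∈ V, b₀ v = 0) ∧ (∀ v ∈ V, c₁ v = 0)) ∨
    ((∀ v ∈ V, b₁ v = 0) ∧ (∀ v ∈ V, c₀ v = 0)) ∨
    ((∀ v ∈ V, b₀ v = b₁ v) ∧ (∀ v ∈ V, c₀ v = c₁ v)) ∨
    ((∀ v ∈ V, c₀ v = b₁ v) ∧ (∀ v ∈ V, c₁ v = b₀ v) ∧ (¬ ∀ v ∈ V, b₀ v = 0) ∧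
      (¬ ∀ v ∈ V, b₁ v = 0) ∧ (¬ ∀ v ∈ V, b₀ v = b₁ v)) := by
  by_cases h0 : ∀ v ∈ V, b₀ v = 0
  · have := forms_two V b₁ c₁ hb₁ hc₁ (fun v hv => by simpa [h0 v hv] using h v hv)
    rcases this with h1 | h1
    · exact absurd (fun v hv => ⟨h0 v hv, h1 v hv⟩) hb
    · exact Or.inl ⟨h0, h1⟩
  by_cases h1 : ∀ v ∈ V, b₁ v = 0
  · have := forms_two V b₀ c₀ hb₀ hc₀ (fun v hv => by simpa [h1 v hv] using h v hv)
    rcases this with h2 | h2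
    · exact absurd h2 h0
    · exact Or.inr (Or.inl ⟨h1, h2⟩)
  by_cases h2 : ∀ v ∈ V, b₀ v = b₁ v
  · have := forms_two V b₀ (fun v => c₀ v + c₁ v) hb₀ (fun a b => by rw [hc₀, hc₁]; ring)
      (fun v hv => by rw [mul_add]; nth_rewrite 2 [h2 v hv]; exact h v hv)
    rcases this with h3 | h3
    · exact absurd h3 h0
    · exact Or.inr (Or.inr (Or.inl ⟨h2, fun v hv => F2_eq_of_add (h3 v hv)⟩))
  have hsum : ¬ ∀ v ∈ V, b₀ v + b₁ v = 0 := fun h => h2 fun v hv => F2_eq_of_add (h v hv)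
  have hadd : ∀ a b, b₀ (a + b) + b₁ (a + b) = (b₀ a + b₁ a) + (b₀ b + b₁ b) :=
    fun a b => by rw [hb₀, hb₁]; ring
  -- where `b₀ = 1` and `b₁ = 0` one has `c₀ = 0`, and symmetrically
  have e0 := forms_three V c₀ b₀ (fun v => b₀ v + b₁ v) hc₀ hb₀ hadd (fun v hv => by
    have := h v hv
    generalize b₀ v = x at *
    generalize b₁ v = y at *
    generalize c₀ v = z at *
    generalize c₁ v = w at *
    revert x y z w; decide)
  have e1 := forms_three V c₁ b₁ (fun v => b₀ v + b₁ v) hc₁ hb₁ hadd (fun v hv => by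
    have := h v hv
    generalize b₀ v = x at *
    generalize b₁ v = y at *
    generalize c₀ v = z at *
    generalize c₁ v = w at *
    revert x y z w; decide)
  have hc0 : ¬ ∀ v ∈ V, c₀ v = 0 := fun hz => by
    rcases forms_two V b₁ c₁ hb₁ hc₁ (fun v hv => by simpa [hz v hv] using h v hv) with h3 | h3
    · exact h1 h3
    · exact hc fun v hv => ⟨hz v hv, h3 v hv⟩
  have hc1 : ¬ ∀ v ∈ V, c₁ v = 0 := fun hz => by
    rcases forms_two V b₀ c₀ hb₀ hc₀ (fun v hv => by simpa [hz v hv] using h v hv) with h3 | h3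
    · exact h0 h3
    · exact hc fun v hv => ⟨h3 v hv, hz v hv⟩
  refine Or.inr (Or.inr (Or.inr ⟨?_, ?_, h0, h1, h2⟩))
  · intro v hv
    have := ((e0.resolve_left hc0).resolve_left h0).resolve_left hsum v hv
    generalize b₀ v = x at *
    generalize b₁ v = y at *
    generalize c₀ v = z at *
    revert x y z; decide
  · intro v hv
    have := ((e1.resolve_left hc1).resolve_left h1).resolve_left hsum v hv
    generalize b₀ v = x at *
    generalize b₁ v = y at *
    generalize c₁ v = z at *
    revert x y z; decide

/-! ### Ranks, minors and normal forms -/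

/-- The `n × k` matrix with the identity on top and zeros below. -/
def inc (n k : ℕ) : Matrix (Fin n) (Fin k) (ZMod 2) :=
  Matrix.of fun i a => if (i : ℕ) = a then 1 else 0

theorem inc_apply (n k : ℕ) (i : Fin n) (a : Fin k) :
    inc n k i a = if (i : ℕ) = a then 1 else 0 := rfl

theorem det_minor_eq_zero {n p : ℕ} {M : Matrix (Fin n) (Fin p) (ZMod 2)} (hM : M.rank ≤ 2)
    (r : Fin 3 → Fin n) (c : Fin 3 → Fin p) : (M.submatrix r c).det = 0 := by
  by_contra h
  have h1 := Matrix.rank_of_det_ne_zero h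
  have h2 := M.rank_submatrix_le r c
  simp at h1
  omega

theorem rank_eq_of_minor {n k : ℕ} (Y : Matrix (Fin n) (Fin k) (ZMod 2)) (r : Fin k → Fin n)
    (h : (Y.submatrix r id).det ≠ 0) : Y.rank = k := by
  have h1 := Matrix.rank_of_det_ne_zero h
  have h2 := Y.rank_submatrix_le r id
  have h3 := Y.rank_le_width
  simp at h1
  omega

theorem inc_submatrix {n k : ℕ} (h : k ≤ n) : (inc n k).submatrix (Fin.castLE h) id = 1 := by
  ext i j
  simp [inc_apply, Matrix.one_apply, Fin.ext_iff]

theorem rank_inc {n k : ℕ} (h : k ≤ n) : (inc n k).rank = k :=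
  rank_eq_of_minor _ (Fin.castLE h) (by rw [inc_submatrix]; simp)

theorem mulVec_injective_of_rank {n k : ℕ} {Y : Matrix (Fin n) (Fin k) (ZMod 2)}
    (h : Y.rank = k) : Function.Injective Y.mulVecLin := by
  have h1 := LinearMap.finrank_range_add_finrank_ker Y.mulVecLin
  rw [Matrix.rank] at h
  rw [h, Module.finrank_fin_fun] at h1
  rw [← LinearMap.ker_eq_bot, ← Submodule.finrank_eq_zero (R := ZMod 2)]
  omega

/-- A matrix of full column rank is carried to `inc n k` by an invertible left factor. -/
theorem exists_mul_eq_inc {n k : ℕ} {Y : Matrix (Fin n) (Fin k) (ZMod 2)} (hY : Y.rank = k) :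
    ∃ P : Matrix (Fin n) (Fin n) (ZMod 2), IsUnit P ∧ P * Y = inc n k := by
  have hk : k ≤ n := by rw [← hY]; exact Y.rank_le_height
  let e₁ := LinearEquiv.ofInjective _ (mulVec_injective_of_rank hY)
  let e₂ := LinearEquiv.ofInjective _ (mulVec_injective_of_rank (rank_inc hk))
  obtain ⟨g, hg⟩ := Submodule.exists_linearEquiv_restrict_eq (e₁.symm.trans e₂)
  refine ⟨LinearMap.toMatrix' g.toLinearMap, ?_, ?_⟩
  · rw [Matrix.isUnit_iff_isUnit_det]
    simpa using LinearEquiv.isUnit_det' g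
  · apply Matrix.toLin'.injective
    rw [Matrix.toLin'_mul, Matrix.toLin'_toMatrix']
    ext1 x
    ext1
    have := hg (e₁ (Pi.single x 1))
    simp only [LinearEquiv.trans_apply, LinearEquiv.symm_apply_apply] at this
    have h2 : (e₂ (Pi.single x 1) : Fin n → ZMod 2) = (inc n k).mulVec (Pi.single x 1) := rfl
    have h3 : (e₁ (Pi.single x 1) : Fin n → ZMod 2) = Y.mulVec (Pi.single x 1) := rfl
    rw [h2, h3] at this
    simpa using this.symm

theorem exists_mul_eq_inc_transpose {p k : ℕ} {X : Matrix (Fin k) (Fin p) (ZMod 2)}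
    (hX : X.rank = k) :
    ∃ Q : Matrix (Fin p) (Fin p) (ZMod 2), IsUnit Q ∧ X * Q = (inc p k)ᵀ := by
  obtain ⟨P, hP, h⟩ := exists_mul_eq_inc (Y := Xᵀ) (by rwa [Matrix.rank_transpose])
  refine ⟨Pᵀ, by simpa [Matrix.isUnit_iff_isUnit_det] using hP, ?_⟩
  rw [← h, Matrix.transpose_mul, Matrix.transpose_transpose]

theorem rank_mul_unit {n k : ℕ} {Y : Matrix (Fin n) (Fin k) (ZMod 2)} (hY : Y.rank = k)
    {G : Matrix (Fin k) (Fin k) (ZMod 2)} (hG : IsUnit G) : (Y * G).rank = k := by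
  rw [Matrix.rank_mul_eq_left_of_isUnit_det _ _ ((Matrix.isUnit_iff_isUnit_det _).1 hG), hY]

theorem rank_unit_mul {p k : ℕ} {X : Matrix (Fin k) (Fin p) (ZMod 2)} (hX : X.rank = k)
    {G : Matrix (Fin k) (Fin k) (ZMod 2)} (hG : IsUnit G) : (G * X).rank = k := by
  rw [Matrix.rank_mul_eq_right_of_isUnit_det _ _ ((Matrix.isUnit_iff_isUnit_det _).1 hG), hX]

/-- The rank factorization `M = Y X` through a space of dimension `rank M`, brought to normal
form by invertible factors on both sides. -/
theorem exists_normal_form {n p k : ℕ} {M : Matrix (Fin n) (Fin p) (ZMod 2)} (hM : M.rank = k) :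
    ∃ (P : Matrix (Fin n) (Fin n) (ZMod 2)) (Q : Matrix (Fin p) (Fin p) (ZMod 2)),
      IsUnit P ∧ IsUnit Q ∧ P * M * Q = inc n k * (inc p k)ᵀ := by
  let b := Module.finBasisOfFinrankEq (ZMod 2) (LinearMap.range M.mulVecLin) hM
  let Y : Matrix (Fin n) (Fin k) (ZMod 2) := Matrix.of fun i a => (b a : Fin n → ZMod 2) i
  let X : Matrix (Fin k) (Fin p) (ZMod 2) :=
    Matrix.of fun a j => b.repr ⟨M.mulVecLin (Pi.single j 1), LinearMap.mem_range_self _ _⟩ a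
  have hYX : Y * X = M := by
    ext i j
    have h := b.sum_repr ⟨M.mulVecLin (Pi.single j 1), LinearMap.mem_range_self _ _⟩
    have h := congrFun (congrArg Subtype.val h) i
    simp only [AddSubmonoidClass.coe_finsetSum, Submodule.coe_smul, Finset.sum_apply,
      Pi.smul_apply, smul_eq_mul] at h
    have h' : M.mulVecLin (Pi.single j 1) i = M i j := by simp
    rw [Matrix.mul_apply, ← h', ← h]
    exact Finset.sum_congr rfl fun a _ => mul_comm _ _
  have hY : Y.rank = k := by
    have h1 := Y.rank_mul_le_left X
    have h2 := Y.rank_le_width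
    rw [hYX] at h1; omega
  have hX : X.rank = k := by
    have h1 := Y.rank_mul_le_right X
    have h2 := X.rank_le_height
    rw [hYX] at h1; omega
  obtain ⟨P, hP, h1⟩ := exists_mul_eq_inc hY
  obtain ⟨Q, hQ, h2⟩ := exists_mul_eq_inc_transpose hX
  refine ⟨P, Q, hP, hQ, ?_⟩
  rw [← h1, ← h2, Matrix.mul_assoc P Y, ← Matrix.mul_assoc Y, hYX, ← Matrix.mul_assoc]

/-! ### Equivalence and embeddings -/

/-- `V` is carried into `S` by an equivalence. -/
def Fits {n p : ℕ} (V S : Submodule (ZMod 2) (Matrix (Fin n) (Fin p) (ZMod 2))) : Prop :=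
  ∃ (P : Matrix (Fin n) (Fin n) (ZMod 2)) (Q : Matrix (Fin p) (Fin p) (ZMod 2)),
    IsUnit P ∧ IsUnit Q ∧ ∀ M ∈ V, P * M * Q ∈ S

/-- The linear map `A ↦ Y A X`. -/
def sand {n a b p : ℕ} (Y : Matrix (Fin n) (Fin a) (ZMod 2)) (X : Matrix (Fin b) (Fin p) (ZMod 2)) :
    Matrix (Fin a) (Fin b) (ZMod 2) →ₗ[ZMod 2] Matrix (Fin n) (Fin p) (ZMod 2) where
  toFun A := Y * A * X
  map_add' A B := by rw [Matrix.mul_add, Matrix.add_mul]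
  map_smul' c A := by simp

theorem sand_apply {n a b p : ℕ} (Y : Matrix (Fin n) (Fin a) (ZMod 2))
    (X : Matrix (Fin b) (Fin p) (ZMod 2)) (A : Matrix (Fin a) (Fin b) (ZMod 2)) :
    sand Y X A = Y * A * X := rfl

theorem rank_sand_le {n a b p : ℕ} (Y : Matrix (Fin n) (Fin a) (ZMod 2))
    (X : Matrix (Fin b) (Fin p) (ZMod 2)) (A : Matrix (Fin a) (Fin b) (ZMod 2)) :
    (Y * A * X).rank ≤ A.rank :=
  (Matrix.rank_mul_le_left _ _).trans (Matrix.rank_mul_le_right _ _)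

theorem sand_cancel {n p : ℕ} {P : Matrix (Fin n) (Fin n) (ZMod 2)}
    {Q : Matrix (Fin p) (Fin p) (ZMod 2)} (hP : IsUnit P) (hQ : IsUnit Q)
    {M N : Matrix (Fin n) (Fin p) (ZMod 2)} (h : P * M * Q = P * N * Q) : M = N := by
  obtain ⟨P', hP'⟩ := hP.exists_left_inv
  obtain ⟨Q', hQ'⟩ := hQ.exists_right_inv
  have key : ∀ A : Matrix (Fin n) (Fin p) (ZMod 2), A = P' * (P * A * Q) * Q' := fun A => by
    calc A = (P' * P) * A * (Q * Q') := by rw [hP', hQ', Matrix.one_mul, Matrix.mul_one]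
      _ = _ := by simp only [Matrix.mul_assoc]
  rw [key M, key N, h]

theorem Fits.of_map {n p : ℕ} {V S : Submodule (ZMod 2) (Matrix (Fin n) (Fin p) (ZMod 2))}
    {P : Matrix (Fin n) (Fin n) (ZMod 2)} {Q : Matrix (Fin p) (Fin p) (ZMod 2)}
    (hP : IsUnit P) (hQ : IsUnit Q) (h : Fits (V.map (sand P Q)) S) : Fits V S := by
  obtain ⟨P', Q', hP', hQ', h⟩ := h
  refine ⟨P' * P, Q * Q', hP'.mul hP, hQ.mul hQ', fun M hM => ?_⟩
  have := h _ (Submodule.mem_map_of_mem (f := sand P Q) hM)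
  simpa only [sand_apply, Matrix.mul_assoc] using this

/-- Permuting rows and columns is multiplying by permutation matrices. -/
theorem submatrix_eq_sand {n p : ℕ} (σ : Equiv.Perm (Fin n)) (τ : Equiv.Perm (Fin p))
    (M : Matrix (Fin n) (Fin p) (ZMod 2)) :
    (1 : Matrix (Fin n) (Fin n) (ZMod 2)).submatrix σ id * M *
      (1 : Matrix (Fin p) (Fin p) (ZMod 2)).submatrix id τ = M.submatrix σ τ := by
  ext i j
  simp [Matrix.mul_apply, Matrix.one_apply]

theorem isUnit_perm_left {n : ℕ} (σ : Equiv.Perm (Fin n)) :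
    IsUnit ((1 : Matrix (Fin n) (Fin n) (ZMod 2)).submatrix σ id) := by
  rw [Matrix.isUnit_iff_isUnit_det, Matrix.det_permute]
  rcases Int.units_eq_one_or (Equiv.Perm.sign σ) with h | h <;> simp [h]

theorem isUnit_perm_right {n : ℕ} (σ : Equiv.Perm (Fin n)) :
    IsUnit ((1 : Matrix (Fin n) (Fin n) (ZMod 2)).submatrix id σ) := by
  rw [Matrix.isUnit_iff_isUnit_det, Matrix.det_permute']
  rcases Int.units_eq_one_or (Equiv.Perm.sign σ) with h | h <;> simp [h]

theorem inc_sand_apply {n p k : ℕ} (A : Matrix (Fin k) (Fin k) (ZMod 2)) (i : Fin n) (j : Fin p) :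
    (inc n k * A * (inc p k)ᵀ) i j =
      if h : (i : ℕ) < k ∧ (j : ℕ) < k then A ⟨i, h.1⟩ ⟨j, h.2⟩ else 0 := by
  have h1 : ∀ b, (inc n k * A) i b = if h : (i : ℕ) < k then A ⟨i, h⟩ b else 0 := by
    intro b
    rw [Matrix.mul_apply]
    split_ifs with h
    · rw [Finset.sum_eq_single ⟨i, h⟩]
      · simp [inc_apply]
      · intro c _ hc
        have : (i : ℕ) ≠ c := fun e => hc (Fin.ext e.symm)
        simp [inc_apply, this]
      · simp
    · refine Finset.sum_eq_zero fun c _ => ?_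
      have : (i : ℕ) ≠ c := by have := c.2; omega
      simp [inc_apply, this]
  rw [Matrix.mul_apply]
  simp only [h1, Matrix.transpose_apply]
  by_cases hj : (j : ℕ) < k
  · rw [Finset.sum_eq_single ⟨j, hj⟩]
    · by_cases hi : (i : ℕ) < k <;> simp [inc_apply, hi, hj]
    · intro c _ hc
      have : (j : ℕ) ≠ c := fun e => hc (Fin.ext e.symm)
      simp [inc_apply, this]
    · simp
  · rw [dif_neg (fun h => hj h.2)]
    refine Finset.sum_eq_zero fun c _ => ?_
    have : (j : ℕ) ≠ c := by have := c.2; omega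
    simp [inc_apply, this]

theorem inc_sand_submatrix {n p k : ℕ} (hn : k ≤ n) (hp : k ≤ p)
    (A : Matrix (Fin k) (Fin k) (ZMod 2)) :
    (inc n k * A * (inc p k)ᵀ).submatrix (Fin.castLE hn) (Fin.castLE hp) = A := by
  ext i j
  simp [inc_sand_apply]

theorem eq_inc_sand {n p k : ℕ} (hn : k ≤ n) (hp : k ≤ p) (M : Matrix (Fin n) (Fin p) (ZMod 2))
    (hM : ∀ (i : Fin n) (j : Fin p), k ≤ (i : ℕ) ∨ k ≤ (j : ℕ) → M i j = 0) :
    M = inc n k * M.submatrix (Fin.castLE hn) (Fin.castLE hp) * (inc p k)ᵀ := by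
  ext i j
  rw [inc_sand_apply]
  split_ifs with h
  · rfl
  · exact hM i j (by omega)

theorem mem_embed_iff {n p : ℕ} (hn : 3 ≤ n) (hp : 3 ≤ p)
    (W : Submodule (ZMod 2) (Matrix (Fin 3) (Fin 3) (ZMod 2)))
    (M : Matrix (Fin n) (Fin p) (ZMod 2)) :
    M ∈ embed n p hn hp W ↔ ∃ A ∈ W, M = inc n 3 * A * (inc p 3)ᵀ := by
  constructor
  · rintro ⟨h1, h2⟩
    exact ⟨_, h1, eq_inc_sand hn hp M h2⟩
  · rintro ⟨A, hA, rfl⟩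
    refine ⟨by rwa [inc_sand_submatrix], fun i j h => ?_⟩
    rw [inc_sand_apply, dif_neg (by omega)]

/-- A space all of whose members factor as `Y A X` with fixed `Y`, `X` of rank `3`, and `A` in
a space equivalent to a subspace of `W`, fits into the embedding of `W`. -/
theorem fits_embed {n p : ℕ} (hn : 3 ≤ n) (hp : 3 ≤ p)
    {W : Submodule (ZMod 2) (Matrix (Fin 3) (Fin 3) (ZMod 2))}
    {V : Submodule (ZMod 2) (Matrix (Fin n) (Fin p) (ZMod 2))}
    {Y : Matrix (Fin n) (Fin 3) (ZMod 2)} {X : Matrix (Fin 3) (Fin p) (ZMod 2)}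
    (hY : Y.rank = 3) (hX : X.rank = 3)
    {G H : Matrix (Fin 3) (Fin 3) (ZMod 2)} (hG : IsUnit G) (hH : IsUnit H)
    (h : ∀ M ∈ V, ∃ A, M = Y * A * X ∧ G * A * H ∈ W) : Fits V (embed n p hn hp W) := by
  obtain ⟨G', hG'⟩ := hG.exists_left_inv
  obtain ⟨H', hH'⟩ := hH.exists_right_inv
  obtain ⟨P, hP, h1⟩ := exists_mul_eq_inc (rank_mul_unit hY (IsUnit.of_mul_eq_one _ hG'))
  obtain ⟨Q, hQ, h2⟩ := exists_mul_eq_inc_transpose (rank_unit_mul hX (IsUnit.of_mul_eq_one_right _ hH'))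
  refine ⟨P, Q, hP, hQ, fun M hM => ?_⟩
  obtain ⟨A, rfl, hA⟩ := h M hM
  rw [mem_embed_iff]
  refine ⟨_, hA, ?_⟩
  calc P * (Y * A * X) * Q = P * (Y * (G' * G * A * (H * H')) * X) * Q := by
        rw [hG', hH', Matrix.one_mul, Matrix.mul_one]
    _ = (P * (Y * G')) * (G * A * H) * ((H' * X) * Q) := by simp only [Matrix.mul_assoc]
    _ = _ := by rw [h1, h2]

/-! ### Reducing the size to three -/

/-- The diagonal matrices of trace zero. -/
def dg (r s : ZMod 2) : Matrix (Fin 3) (Fin 3) (ZMod 2) := !![r, 0, 0; 0, s, 0; 0, 0, r + s]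

/-- A set `W` of `3 × 3` matrices is *rigid* when a space of larger matrices of rank at most `2`
containing its embedding must live in the `3 × 3` corner. The conditions are what the `3 × 3`
minors see: bordering `A + W` by a nonzero column makes some minor nonzero, and no `A + W`
consists of matrices of rank at most `1`. -/
structure Rigid (W : Set (Matrix (Fin 3) (Fin 3) (ZMod 2))) : Prop where
  transpose : ∀ B ∈ W, Bᵀ ∈ W
  col : ∀ (A : Matrix (Fin 3) (Fin 3) (ZMod 2)) (c : Fin 3 → ZMod 2),
    (∀ B ∈ W, ∀ l l' : Fin 3,
      (Matrix.of fun a b => ![(A + B) a l, (A + B) a l', c a] b).det = 0) → c = 0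
  two : ∀ A : Matrix (Fin 3) (Fin 3) (ZMod 2),
    ¬ ∀ B ∈ W, ∀ l l' m m' : Fin 3,
      (A + B) l m * (A + B) l' m' = (A + B) l m' * (A + B) l' m

/-- A space of matrices of rank at most `2` that contains the embedding of a rigid set is contained
in the upper left `3 × 3` corner. -/
theorem Rigid.eq_sand_inc {W : Set (Matrix (Fin 3) (Fin 3) (ZMod 2))} (hW : Rigid W) {n p : ℕ}
    (hn : 3 ≤ n) (hp : 3 ≤ p) {V : Submodule (ZMod 2) (Matrix (Fin n) (Fin p) (ZMod 2))}
    (hV : ∀ M ∈ V, M.rank ≤ 2) (hWV : ∀ B ∈ W, inc n 3 * B * (inc p 3)ᵀ ∈ V)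
    {M : Matrix (Fin n) (Fin p) (ZMod 2)} (hM : M ∈ V) :
    M = inc n 3 * M.submatrix (Fin.castLE hn) (Fin.castLE hp) * (inc p 3)ᵀ := by
  have hrank : ∀ B ∈ W, (M + inc n 3 * B * (inc p 3)ᵀ).rank ≤ 2 :=
    fun B hB => hV _ (V.add_mem hM (hWV B hB))
  have hcol : ∀ (j : Fin p), 3 ≤ (j : ℕ) → ∀ a : Fin 3, M (Fin.castLE hn a) j = 0 := by
    intro j hj a
    refine congrFun (hW.col (M.submatrix (Fin.castLE hn) (Fin.castLE hp))
      (fun a => M (Fin.castLE hn a) j) fun B hB l l' => ?_) a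
    rw [← det_minor_eq_zero (hrank B hB) (Fin.castLE hn)
      ![Fin.castLE hp l, Fin.castLE hp l', j]]
    congr 1
    ext a b
    fin_cases b <;> simp [inc_sand_apply]
    intro h; omega
  have hrow : ∀ (i : Fin n), 3 ≤ (i : ℕ) → ∀ b : Fin 3, M i (Fin.castLE hp b) = 0 := by
    intro i hi b
    refine congrFun (hW.col (M.submatrix (Fin.castLE hn) (Fin.castLE hp))ᵀ
      (fun b => M i (Fin.castLE hp b)) fun B hB l l' => ?_) b
    rw [← det_minor_eq_zero (hrank _ (hW.transpose B hB))
      ![Fin.castLE hn l, Fin.castLE hn l', i] (Fin.castLE hp), ← Matrix.det_transpose]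
    congr 1
    ext a b
    fin_cases a <;> simp [inc_sand_apply]
    intro h; omega
  apply eq_inc_sand
  intro i j hij
  by_cases hi : (i : ℕ) < 3
  · exact hcol j (by omega) ⟨i, hi⟩
  by_cases hj : (j : ℕ) < 3
  · exact hrow i (by omega) ⟨j, hj⟩
  by_contra hne
  apply hW.two (M.submatrix (Fin.castLE hn) (Fin.castLE hp))
  intro B hB l l' m m'
  have h := det_minor_eq_zero (hrank B hB)
    ![Fin.castLE hn l, Fin.castLE hn l', i] ![Fin.castLE hp m, Fin.castLE hp m', j]
  have hz : ∀ a : Fin 3, a.val < 3 := fun a => a.2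
  rw [Matrix.det_fin_three] at h
  simp [inc_sand_apply, hcol j (by omega), hrow i (by omega), hi, hj, F2_ne_zero hne] at h
  simp only [Matrix.add_apply, Matrix.submatrix_apply]
  exact sub_eq_zero.1 h

/-- The version of `Rigid.eq_sand_inc` for a copy `Y W X` of the rigid set in general position. -/
theorem Rigid.exists_eq_sand {W : Set (Matrix (Fin 3) (Fin 3) (ZMod 2))} (hW : Rigid W) {n p : ℕ}
    (hn : 3 ≤ n) (hp : 3 ≤ p) {V : Submodule (ZMod 2) (Matrix (Fin n) (Fin p) (ZMod 2))}
    (hV : ∀ M ∈ V, M.rank ≤ 2)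
    {Y : Matrix (Fin n) (Fin 3) (ZMod 2)} {X : Matrix (Fin 3) (Fin p) (ZMod 2)}
    (hY : Y.rank = 3) (hX : X.rank = 3) (hWV : ∀ B ∈ W, Y * B * X ∈ V)
    {M : Matrix (Fin n) (Fin p) (ZMod 2)} (hM : M ∈ V) :
    ∃ A : Matrix (Fin 3) (Fin 3) (ZMod 2), M = Y * A * X := by
  obtain ⟨P, hP, h1⟩ := exists_mul_eq_inc hY
  obtain ⟨Q, hQ, h2⟩ := exists_mul_eq_inc_transpose hX
  have h := hW.eq_sand_inc hn hp (V := V.map (sand P Q))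
    (by
      rintro _ ⟨M, hM, rfl⟩
      exact (rank_sand_le _ _ _).trans (hV M hM))
    (fun B hB => ⟨_, hWV B hB, by rw [sand_apply, ← h1, ← h2]; simp only [Matrix.mul_assoc]⟩)
    (Submodule.mem_map_of_mem (f := sand P Q) hM)
  rw [sand_apply] at h
  generalize (P * M * Q).submatrix (Fin.castLE hn) (Fin.castLE hp) = A at h
  refine ⟨A, ?_⟩
  rw [← h1, ← h2] at h
  have h3 : P * M * Q = P * (Y * A * X) * Q := by rw [h]; simp only [Matrix.mul_assoc]
  exact sand_cancel hP hQ h3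

theorem rigid_dg : Rigid {B | ∃ r s, B = dg r s} where
  transpose := by
    rintro _ ⟨r, s, rfl⟩
    refine ⟨r, s, ?_⟩
    ext i j; fin_cases i <;> fin_cases j <;> rfl
  col := by
    intro A c h
    -- The minor on two columns of `A + B` and `c` is a polynomial in `r, s` whose coefficient of
    -- `r s` is an entry of `c`; that coefficient is the sum of the four values.
    have h' := fun r s : ZMod 2 => h (dg r s) ⟨r, s, rfl⟩
    simp only [Matrix.det_fin_three, dg] at h'
    have e0 : ∀ l l' : Fin 3, _ := fun l l' => congrArg₂ (· + ·)
      (congrArg₂ (· + ·) (h' 0 0 l l') (h' 0 1 l l')) (congrArg₂ (· + ·) (h' 1 0 l l') (h' 1 1 l l'))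
    have e1 := e0 0 1
    have e2 := e0 0 2
    have e3 := e0 1 2
    clear e0 h' h
    simp at e1 e2 e3
    ext i
    fin_cases i
    · simp
      generalize c 0 = c0 at *
      generalize c 1 = c1 at *
      generalize c 2 = c2 at *
      grind
    · simp
      grind
    · simp
      grind
  two := by
    intro A h
    have h' := fun r s : ZMod 2 => h (dg r s) ⟨r, s, rfl⟩ 0 1 0 1
    simp [dg] at h'
    generalize A 0 0 = x at *
    generalize A 1 1 = y at *
    generalize A 0 1 = z at *
    generalize A 1 0 = w at *
    clear h
    revert x y z w; decide

/-- The alternating matrix with entries `x, y, z` above the diagonal. -/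
def alt (x y z : ZMod 2) : Matrix (Fin 3) (Fin 3) (ZMod 2) := !![0, x, y; x, 0, z; y, z, 0]

theorem rigid_alt : Rigid {B | ∃ x y z, B = alt x y z} where
  transpose := by
    rintro _ ⟨x, y, z, rfl⟩
    refine ⟨x, y, z, ?_⟩
    ext i j; fin_cases i <;> fin_cases j <;> rfl
  col := by
    intro A c h
    -- As for diagonal matrices: read off coefficients of `x z` and `x y` in the minors.
    have h' := fun x y z : ZMod 2 => h (alt x y z) ⟨x, y, z, rfl⟩
    simp only [Matrix.det_fin_three, alt] at h'
    have e1 := congrArg₂ (· + ·) (congrArg₂ (· + ·) (h' 0 0 0 0 1) (h' 1 0 0 0 1))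
      (congrArg₂ (· + ·) (h' 0 0 1 0 1) (h' 1 0 1 0 1))
    have e2 := congrArg₂ (· + ·) (congrArg₂ (· + ·) (h' 0 0 0 0 1) (h' 1 0 0 0 1))
      (congrArg₂ (· + ·) (h' 0 1 0 0 1) (h' 1 1 0 0 1))
    have e3 := congrArg₂ (· + ·) (congrArg₂ (· + ·) (h' 0 0 0 0 2) (h' 1 0 0 0 2))
      (congrArg₂ (· + ·) (h' 0 1 0 0 2) (h' 1 1 0 0 2))
    clear h' h
    simp at e1 e2 e3
    ext i
    fin_cases i
    · simp
      grind
    · simp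
      grind
    · simp
      grind
  two := by
    intro A h
    have h' := fun x z : ZMod 2 => h (alt x 0 z) ⟨x, 0, z, rfl⟩ 0 1 1 2
    simp [alt] at h'
    generalize A 0 1 = x at *
    generalize A 1 2 = y at *
    generalize A 0 2 = z at *
    generalize A 1 1 = w at *
    clear h
    revert x y z w; decide

/-! ### Spaces of three by three matrices containing the diagonal matrices of trace zero -/

theorem mem_J3_iff (A : Matrix (Fin 3) (Fin 3) (ZMod 2)) :
    A ∈ J3 ↔ A 0 0 + A 1 1 + A 2 2 = 0 ∧ A 1 0 = 0 ∧ A 2 0 = 0 ∧ A 2 1 = 0 := by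
  change (A.trace = 0 ∧ ∀ i j : Fin 3, j < i → A i j = 0) ↔ _
  rw [Matrix.trace_fin_three]
  simp [Fin.forall_fin_succ]

theorem mem_Mata3_iff (A : Matrix (Fin 3) (Fin 3) (ZMod 2)) :
    A ∈ Mata3 ↔ A 0 0 = 0 ∧ A 1 1 = 0 ∧ A 2 2 = 0 ∧ A 0 1 = A 1 0 ∧ A 0 2 = A 2 0 ∧
      A 1 2 = A 2 1 := by
  change (Aᵀ = -A ∧ ∀ i : Fin 3, A i i = 0) ↔ _
  rw [← Matrix.ext_iff]
  have : ∀ x : ZMod 2, -x = x := by decide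
  simp [Fin.forall_fin_succ, this]
  grind

theorem mem_V3_iff (A : Matrix (Fin 3) (Fin 3) (ZMod 2)) :
    A ∈ V3 ↔ A 0 0 = 0 ∧ A 1 1 = 0 ∧ A 2 2 = 0 ∧ A 0 1 + A 1 2 + A 2 0 = 0 ∧
      A 2 1 + A 1 0 + A 0 2 = 0 := by
  change ((∀ i : Fin 3, A i i = 0) ∧ A 0 1 + A 1 2 + A 2 0 = 0 ∧ A 2 1 + A 1 0 + A 0 2 = 0) ↔ _
  simp [Fin.forall_fin_succ, and_assoc]

/-- The space `V` of `3 × 3` matrices is carried into `W` by an equivalence. -/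
def Fits3 (V W : Submodule (ZMod 2) (Matrix (Fin 3) (Fin 3) (ZMod 2))) : Prop :=
  ∃ G H : Matrix (Fin 3) (Fin 3) (ZMod 2), IsUnit G ∧ IsUnit H ∧ ∀ A ∈ V, G * A * H ∈ W

theorem Fits3.of_perm {V W : Submodule (ZMod 2) (Matrix (Fin 3) (Fin 3) (ZMod 2))}
    (σ τ : Equiv.Perm (Fin 3)) (G H : Matrix (Fin 3) (Fin 3) (ZMod 2)) (hG : IsUnit G)
    (hH : IsUnit H) (h : ∀ A ∈ V, G * A.submatrix σ τ * H ∈ W) : Fits3 V W := by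
  refine ⟨G * (1 : Matrix (Fin 3) (Fin 3) (ZMod 2)).submatrix σ id,
    (1 : Matrix (Fin 3) (Fin 3) (ZMod 2)).submatrix id τ * H,
    hG.mul (isUnit_perm_left σ), (isUnit_perm_right τ).mul hH, fun A hA => ?_⟩
  have := h A hA
  rw [← submatrix_eq_sand] at this
  simpa only [Matrix.mul_assoc] using this

/-- If, in the order of the indices given by `σ`, all members of `V` are triangular, then `V`
fits into `J3`. -/
theorem fits_J3_of_perm {V : Submodule (ZMod 2) (Matrix (Fin 3) (Fin 3) (ZMod 2))}
    (σ : Equiv.Perm (Fin 3)) (ht : ∀ A ∈ V, A 0 0 + A 1 1 + A 2 2 = 0)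
    (h : ∀ A ∈ V, A (σ 1) (σ 0) = 0 ∧ A (σ 2) (σ 0) = 0 ∧ A (σ 2) (σ 1) = 0) : Fits3 V J3 := by
  refine Fits3.of_perm σ σ 1 1 isUnit_one isUnit_one fun A hA => ?_
  rw [Matrix.one_mul, Matrix.mul_one, mem_J3_iff]
  refine ⟨?_, h A hA⟩
  have := (Equiv.sum_comp σ fun i => A i i).trans (Fin.sum_univ_three _)
  rw [Fin.sum_univ_three, ht A hA] at this
  exact this

/-- The entries of `A` off the diagonal depend only on whether they are above or below it. -/
def UpDown (A : Matrix (Fin 3) (Fin 3) (ZMod 2)) : Prop :=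
  A 0 1 = A 0 2 ∧ A 0 2 = A 1 2 ∧ A 1 0 = A 2 0 ∧ A 2 0 = A 2 1

/-- If, in the order of the indices given by `σ`, all members of `V` satisfy `UpDown`, then `V`
fits into `V3`; the two invertible factors in the proof are explicit. -/
theorem fits_V3_of_upDown {V : Submodule (ZMod 2) (Matrix (Fin 3) (Fin 3) (ZMod 2))}
    (σ : Equiv.Perm (Fin 3)) (ht : ∀ A ∈ V, A 0 0 + A 1 1 + A 2 2 = 0)
    (h : ∀ A ∈ V, UpDown (A.submatrix σ σ)) : Fits3 V V3 := by
  refine Fits3.of_perm σ σ !![0, 0, 1; 0, 1, 1; 1, 0, 0] !![1, 1, 0; 1, 0, 1; 0, 0, 1]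
    ((Matrix.isUnit_iff_isUnit_det _).2 (by simp [Matrix.det_fin_three]))
    ((Matrix.isUnit_iff_isUnit_det _).2 (by simp [Matrix.det_fin_three])) fun A hA => ?_
  have h1 := h A hA
  have h2 : A (σ 0) (σ 0) + A (σ 1) (σ 1) + A (σ 2) (σ 2) = 0 := by
    have := (Equiv.sum_comp σ fun i => A i i).trans (Fin.sum_univ_three _)
    rwa [Fin.sum_univ_three, ht A hA] at this
  simp only [UpDown, Matrix.submatrix_apply] at h1
  rw [mem_V3_iff]
  simp only [Matrix.mul_apply, Fin.sum_univ_three]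
  simp
  grind

/-- What the determinants of `A + D`, `D` diagonal of trace zero, say about `A`. -/
theorem dg_facts {A : Matrix (Fin 3) (Fin 3) (ZMod 2)} (h : ∀ r s, (A + dg r s).det = 0) :
    A 0 0 + A 1 1 + A 2 2 = 0 ∧ A 0 1 * A 1 0 = A 1 2 * A 2 1 ∧ A 0 1 * A 1 0 = A 0 2 * A 2 0 ∧
      A 0 1 * A 1 2 * A 2 0 = A 0 2 * A 2 1 * A 1 0 := by
  simp only [Matrix.det_fin_three, dg] at h
  simp at h
  generalize A 0 0 = a at *
  generalize A 0 1 = b at *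
  generalize A 0 2 = c at *
  generalize A 1 0 = d at *
  generalize A 1 1 = e at *
  generalize A 1 2 = f at *
  generalize A 2 0 = g at *
  generalize A 2 1 = k at *
  generalize A 2 2 = l at *
  have h1 := h 0 0
  have h2 := h 0 1
  have h3 := h 1 0
  have h4 := h 1 1
  clear h
  revert a b c d e f g k l
  decide +kernel

set_option synthInstance.maxHeartbeats 400000 in
set_option synthInstance.maxSize 1000 in
/-- The case where some member has a nonzero product `A 0 1 * A 1 0`. -/
theorem three_dg_symm {V : Submodule (ZMod 2) (Matrix (Fin 3) (Fin 3) (ZMod 2))}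
    (hf : ∀ A ∈ V, A 0 0 + A 1 1 + A 2 2 = 0 ∧ A 0 1 * A 1 0 = A 1 2 * A 2 1 ∧
      A 0 1 * A 1 0 = A 0 2 * A 2 0 ∧ A 0 1 * A 1 2 * A 2 0 = A 0 2 * A 2 1 * A 1 0)
    {J : Matrix (Fin 3) (Fin 3) (ZMod 2)} (hJ : J ∈ V) (hJ1 : J 0 1 * J 1 0 ≠ 0) : Fits3 V V3 := by
  have hall : J 0 1 = 1 ∧ J 1 0 = 1 ∧ J 1 2 = 1 ∧ J 2 1 = 1 ∧ J 0 2 = 1 ∧ J 2 0 = 1 := by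
    obtain ⟨-, h1, h2, -⟩ := hf J hJ
    clear hf
    generalize J 0 1 = a at *
    generalize J 1 0 = b at *
    generalize J 1 2 = c at *
    generalize J 2 1 = d at *
    generalize J 0 2 = e at *
    generalize J 2 0 = f at *
    revert a b c d e f
    decide
  obtain ⟨j1, j2, j3, j4, j5, j6⟩ := hall
  have s1 : (Equiv.swap (0 : Fin 3) 1) 2 = 2 := by decide
  have s2 : (Equiv.swap (1 : Fin 3) 2) 0 = 0 := by decide
  -- Off the diagonal, a member is either constant or a transitive tournament.
  have key : ∀ B ∈ V, UpDown B ∨ UpDown (B.submatrix (Equiv.swap 0 1) (Equiv.swap 0 1)) ∨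
      UpDown (B.submatrix (Equiv.swap 1 2) (Equiv.swap 1 2)) := by
    intro B hB
    obtain ⟨-, h1, h2, h3⟩ := hf B hB
    obtain ⟨-, k1, k2, k3⟩ := hf _ (V.add_mem hB hJ)
    simp only [Matrix.add_apply, j1, j2, j3, j4, j5, j6] at k1 k2 k3
    simp only [UpDown, Matrix.submatrix_apply, s1, s2, Equiv.swap_apply_left,
      Equiv.swap_apply_right]
    clear hf
    generalize B 0 1 = a at *
    generalize B 1 0 = b at *
    generalize B 1 2 = c at *
    generalize B 2 1 = d at *
    generalize B 0 2 = e at *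
    generalize B 2 0 = f at *
    revert a b c d e f
    decide
  have ht : ∀ A ∈ V, A 0 0 + A 1 1 + A 2 2 = 0 := fun A hA => (hf A hA).1
  by_cases hT : ∀ T ∈ V, T 0 1 = T 1 0
  · refine fits_V3_of_upDown 1 ht fun B hB => ?_
    have h1 := key B hB
    have h2 := hT B hB
    simp only [UpDown, Matrix.submatrix_apply, s1, s2, Equiv.swap_apply_left,
      Equiv.swap_apply_right, Equiv.Perm.coe_one, id] at h1 ⊢
    clear * - h1 h2
    grind
  push Not at hT
  obtain ⟨T, hT, hT1⟩ := hT
  -- A member which is not constant off the diagonal fixes the middle vertex for all the others.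
  have hadd : ∀ B ∈ V, _ := fun B hB => key _ (V.add_mem hB hT)
  have hT2 := key T hT
  simp only [UpDown, Matrix.submatrix_apply, s1, s2, Equiv.swap_apply_left,
    Equiv.swap_apply_right, Matrix.add_apply] at hadd hT2 key
  rcases hT2 with h | h | h
  · refine fits_V3_of_upDown 1 ht fun B hB => ?_
    have h1 := key B hB
    have h2 := hadd B hB
    simp only [UpDown, Matrix.submatrix_apply, Equiv.Perm.coe_one, id]
    clear * - h1 h2 h hT1
    grind
  · refine fits_V3_of_upDown (Equiv.swap 0 1) ht fun B hB => ?_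
    have h1 := key B hB
    have h2 := hadd B hB
    simp only [UpDown, Matrix.submatrix_apply, s1, Equiv.swap_apply_left, Equiv.swap_apply_right]
    clear * - h1 h2 h hT1
    grind
  · refine fits_V3_of_upDown (Equiv.swap 1 2) ht fun B hB => ?_
    have h1 := key B hB
    have h2 := hadd B hB
    simp only [UpDown, Matrix.submatrix_apply, s2, Equiv.swap_apply_left, Equiv.swap_apply_right]
    clear * - h1 h2 h hT1
    grind

/-- A space of singular `3 × 3` matrices containing the diagonal matrices of trace zero fits into
`J3` or `V3`. If no two opposite entries are ever both nonzero, then of each two opposite entries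
one is identically zero. Unless the remaining entries form a `3`-cycle, `V` is triangular for some
order of the indices; for a `3`-cycle, `forms_three` removes one of its entries or leads to `V3`. -/
theorem three_dg {V : Submodule (ZMod 2) (Matrix (Fin 3) (Fin 3) (ZMod 2))}
    (hdet : ∀ A ∈ V, A.det = 0) (hd : ∀ r s, dg r s ∈ V) : Fits3 V J3 ∨ Fits3 V V3 := by
  have hf := fun A hA => dg_facts (A := A) fun r s => hdet _ (V.add_mem hA (hd r s))
  by_cases hJ : ∃ J ∈ V, J 0 1 * J 1 0 ≠ 0
  · obtain ⟨J, hJ, hJ1⟩ := hJ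
    exact Or.inr (three_dg_symm hf hJ hJ1)
  push Not at hJ
  have ht : ∀ A ∈ V, A 0 0 + A 1 1 + A 2 2 = 0 := fun A hA => (hf A hA).1
  have h01 := forms_two V (fun A => A 0 1) (fun A => A 1 0) (fun _ _ => rfl) (fun _ _ => rfl) hJ
  have h12 := forms_two V (fun A => A 1 2) (fun A => A 2 1) (fun _ _ => rfl) (fun _ _ => rfl)
    fun A hA => by rw [← (hf A hA).2.1, hJ A hA]
  have h02 := forms_two V (fun A => A 0 2) (fun A => A 2 0) (fun _ _ => rfl) (fun _ _ => rfl)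
    fun A hA => by rw [← (hf A hA).2.2.1, hJ A hA]
  -- Orderings of the indices, listed so that `A (σ i) (σ j) = 0` for `j < i`.
  have t012 := fits_J3_of_perm (V := V) 1 ht
  have t021 := fits_J3_of_perm (V := V) (Equiv.swap 1 2) ht
  have t102 := fits_J3_of_perm (V := V) (Equiv.swap 0 1) ht
  have t210 := fits_J3_of_perm (V := V) (Equiv.swap 0 2) ht
  have t120 := fits_J3_of_perm (V := V) ⟨![1, 2, 0], ![2, 0, 1], by decide, by decide⟩ ht
  have t201 := fits_J3_of_perm (V := V) ⟨![2, 0, 1], ![1, 2, 0], by decide, by decide⟩ ht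
  have s1 : (Equiv.swap (0 : Fin 3) 1) 2 = 2 := by decide
  have s2 : (Equiv.swap (1 : Fin 3) 2) 0 = 0 := by decide
  have s3 : (Equiv.swap (0 : Fin 3) 2) 1 = 1 := by decide
  simp only [s1, s2, s3, Equiv.swap_apply_left, Equiv.swap_apply_right, Equiv.coe_fn_mk,
    Equiv.Perm.coe_one, id] at t012 t021 t102 t210 t120 t201
  simp at t120 t201
  rcases h01 with h01 | h01 <;> rcases h12 with h12 | h12 <;> rcases h02 with h02 | h02
  · exact Or.inl (t210 fun A hA => ⟨h12 A hA, h02 A hA, h01 A hA⟩)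
  · have h := forms_three V (fun A => A 0 2) (fun A => A 2 1) (fun A => A 1 0) (fun _ _ => rfl)
      (fun _ _ => rfl) (fun _ _ => rfl) fun A hA => by
        rw [← (hf A hA).2.2.2, h01 A hA, zero_mul, zero_mul]
    rcases h with h | h | h | h
    · exact Or.inl (t210 fun A hA => ⟨h12 A hA, h A hA, h01 A hA⟩)
    · exact Or.inl (t102 fun A hA => ⟨h01 A hA, h A hA, h02 A hA⟩)
    · exact Or.inl (t021 fun A hA => ⟨h02 A hA, h A hA, h12 A hA⟩)
    · refine Or.inr (Fits3.of_perm 1 ⟨![1, 2, 0], ![2, 0, 1], by decide, by decide⟩ 1 1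
        isUnit_one isUnit_one fun A hA => ?_)
      have h1 := h A hA
      have h2 := ht A hA
      rw [Matrix.one_mul, Matrix.mul_one, mem_V3_iff]
      simp [h01 A hA, h12 A hA, h02 A hA]
      grind
  · exact Or.inl (t120 fun A hA => ⟨h12 A hA, h01 A hA, h02 A hA⟩)
  · exact Or.inl (t102 fun A hA => ⟨h01 A hA, h12 A hA, h02 A hA⟩)
  · exact Or.inl (t201 fun A hA => ⟨h02 A hA, h12 A hA, h01 A hA⟩)
  · exact Or.inl (t021 fun A hA => ⟨h02 A hA, h01 A hA, h12 A hA⟩)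
  · have h := forms_three V (fun A => A 0 1) (fun A => A 1 2) (fun A => A 2 0) (fun _ _ => rfl)
      (fun _ _ => rfl) (fun _ _ => rfl) fun A hA => by
        rw [(hf A hA).2.2.2, h01 A hA, mul_zero]
    rcases h with h | h | h | h
    · exact Or.inl (t120 fun A hA => ⟨h12 A hA, h A hA, h02 A hA⟩)
    · exact Or.inl (t201 fun A hA => ⟨h02 A hA, h A hA, h01 A hA⟩)
    · exact Or.inl (t012 fun A hA => ⟨h01 A hA, h A hA, h12 A hA⟩)
    · refine Or.inr (Fits3.of_perm 1 ⟨![2, 0, 1], ![1, 2, 0], by decide, by decide⟩ 1 1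
        isUnit_one isUnit_one fun A hA => ?_)
      have h1 := h A hA
      have h2 := ht A hA
      rw [Matrix.one_mul, Matrix.mul_one, mem_V3_iff]
      simp [h01 A hA, h12 A hA, h02 A hA]
      grind
  · exact Or.inl (t012 fun A hA => ⟨h01 A hA, h02 A hA, h12 A hA⟩)

/-! ### Spaces with a nonzero entry away from the first two rows and columns -/

/-- Spaces of `n × p` matrices containing a copy of the diagonal matrices of trace zero. -/
theorem fits_of_diag {n p : ℕ} (hn : 3 ≤ n) (hp : 3 ≤ p)
    {V : Submodule (ZMod 2) (Matrix (Fin n) (Fin p) (ZMod 2))} (hV : ∀ M ∈ V, M.rank ≤ 2)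
    {Y : Matrix (Fin n) (Fin 3) (ZMod 2)} {X : Matrix (Fin 3) (Fin p) (ZMod 2)}
    (hY : Y.rank = 3) (hX : X.rank = 3) (hd : ∀ r s, Y * dg r s * X ∈ V) :
    Fits V (embed n p hn hp J3) ∨ Fits V (embed n p hn hp V3) := by
  have hdet : ∀ A ∈ V.comap (sand Y X), A.det = 0 := by
    intro A hA
    obtain ⟨P, hP, h1⟩ := exists_mul_eq_inc hY
    obtain ⟨Q, hQ, h2⟩ := exists_mul_eq_inc_transpose hX
    have h3 : (P * (Y * A * X) * Q).rank ≤ 2 := (rank_sand_le _ _ _).trans (hV _ hA)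
    have h4 : P * (Y * A * X) * Q = inc n 3 * A * (inc p 3)ᵀ := by
      rw [← h1, ← h2]; simp only [Matrix.mul_assoc]
    rw [h4] at h3
    have := det_minor_eq_zero h3 (Fin.castLE hn) (Fin.castLE hp)
    rwa [inc_sand_submatrix] at this
  have hM : ∀ M ∈ V, ∃ A ∈ V.comap (sand Y X), M = Y * A * X := by
    intro M hM
    obtain ⟨A, rfl⟩ := rigid_dg.exists_eq_sand hn hp hV hY hX
      (by rintro _ ⟨r, s, rfl⟩; exact hd r s) hM
    exact ⟨A, hM, rfl⟩
  rcases three_dg hdet hd with ⟨G, H, hG, hH, h⟩ | ⟨G, H, hG, hH, h⟩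
  · refine Or.inl (fits_embed hn hp hY hX hG hH fun M hM' => ?_)
    obtain ⟨A, hA, rfl⟩ := hM M hM'
    exact ⟨A, rfl, h A hA⟩
  · refine Or.inr (fits_embed hn hp hY hX hG hH fun M hM' => ?_)
    obtain ⟨A, hA, rfl⟩ := hM M hM'
    exact ⟨A, rfl, h A hA⟩

theorem unitBlock_apply (n p : ℕ) (k : Fin n) (l : Fin p) :
    (inc n 2 * (inc p 2)ᵀ) k l = if (k : ℕ) = l ∧ (k : ℕ) < 2 then 1 else 0 := by
  have := inc_sand_apply (k := 2) 1 k l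
  rw [Matrix.mul_one] at this
  rw [this]
  simp only [Matrix.one_apply, Fin.mk.injEq]
  split_ifs <;> first | rfl | omega

/-- Over `F2`, a `2 × 2` matrix `T` with `T` and `T + 1` singular is conjugate to
`diag (1, 0)`. -/
theorem idempotent_factor : ∀ t₀ t₁ t₂ t₃ : ZMod 2, t₀ * t₃ = t₁ * t₂ →
    (t₀ + 1) * (t₃ + 1) = t₁ * t₂ →
    ∃ a b c d : ZMod 2, a * d + b * c = 1 ∧ a * d = t₀ ∧ a * b = t₁ ∧ c * d = t₂ ∧ c * b = t₃ := by
  decide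

/-- The vanishing of a `3 × 3` minor, expanded without signs. -/
theorem minor_expand {n p : ℕ} {M : Matrix (Fin n) (Fin p) (ZMod 2)} (hM : M.rank ≤ 2)
    (i k m : Fin n) (j l o : Fin p) :
    M i j * M k l * M m o + M i j * M k o * M m l + M i l * M k j * M m o +
      M i l * M k o * M m j + M i o * M k j * M m l + M i o * M k l * M m j = 0 := by
  have h := det_minor_eq_zero hM ![i, k, m] ![j, l, o]
  rw [Matrix.det_fin_three] at h
  simp at h
  clear hM
  grind

/-- A member with a nonzero entry `N i j` outside the first two rows and columns produces, together
with `diag (1, 1, 0, …)`, a copy of the diagonal `3 × 3` matrices of trace zero. -/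
theorem exists_diag {n p : ℕ} (hn : 3 ≤ n) (hp : 3 ≤ p)
    {V : Submodule (ZMod 2) (Matrix (Fin n) (Fin p) (ZMod 2))} (hV : ∀ M ∈ V, M.rank ≤ 2)
    (hE : inc n 2 * (inc p 2)ᵀ ∈ V) {N : Matrix (Fin n) (Fin p) (ZMod 2)} (hN : N ∈ V)
    {i : Fin n} {j : Fin p} (hi : 2 ≤ (i : ℕ)) (hj : 2 ≤ (j : ℕ)) (hij : N i j ≠ 0) :
    ∃ (Y : Matrix (Fin n) (Fin 3) (ZMod 2)) (X : Matrix (Fin 3) (Fin p) (ZMod 2)),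
      Y.rank = 3 ∧ X.rank = 3 ∧ ∀ r s, Y * dg r s * X ∈ V := by
  have hij1 := F2_ne_zero hij
  -- The Schur complement of the entry `N i j`.
  let T : Fin n → Fin p → ZMod 2 := fun k l => N k l + N k j * N i l
  let e : Fin n → Fin p → ZMod 2 := fun k l => if (k : ℕ) = l ∧ (k : ℕ) < 2 then 1 else 0
  have h1 : ∀ k k' l l', T k l * T k' l' = T k l' * T k' l := by
    intro k k' l l'
    have h := minor_expand (hV N hN) i k k' j l l'
    rw [hij1] at h
    simp only [T]
    clear * - h
    grind
  have h2 : ∀ k k' l l', (T k l + e k l) * (T k' l' + e k' l') =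
      (T k l' + e k l') * (T k' l + e k' l) := by
    intro k k' l l'
    have h := minor_expand (hV _ (V.add_mem hN hE)) i k k' j l l'
    have e1 : ∀ l, e i l = 0 := fun l => if_neg (by omega)
    have e2 : ∀ k, e k j = 0 := fun k => if_neg (by omega)
    have e3 : ∀ k l, (inc n 2 * (inc p 2)ᵀ) k l = e k l := unitBlock_apply n p
    simp only [Matrix.add_apply, hij1, e3, e1, e2, add_zero] at h
    simp only [T]
    clear_value e
    clear * - h
    grind
  have h3 : ∀ (k : Fin n) (l : Fin p), 2 ≤ (k : ℕ) ∨ 2 ≤ (l : ℕ) → T k l = 0 := by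
    intro k l hkl
    obtain ⟨a, ha, hak, hal⟩ : ∃ a : ℕ, a < 2 ∧ a ≠ k ∧ a ≠ l := by
      rcases hkl with h | h
      · by_cases h0 : (l : ℕ) = 0
        · exact ⟨1, by omega, by omega, by omega⟩
        · exact ⟨0, by omega, by omega, by omega⟩
      · by_cases h0 : (k : ℕ) = 0
        · exact ⟨1, by omega, by omega, by omega⟩
        · exact ⟨0, by omega, by omega, by omega⟩
    have g1 := h1 k ⟨a, by omega⟩ l ⟨a, by omega⟩
    have g2 := h2 k ⟨a, by omega⟩ l ⟨a, by omega⟩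
    have e1 : e k l = 0 := if_neg (by omega)
    have e2 : e k ⟨a, by omega⟩ = 0 := if_neg (by simp; omega)
    have e3 : e ⟨a, by omega⟩ l = 0 := if_neg (by simp; omega)
    have e4 : e ⟨a, by omega⟩ ⟨a, by omega⟩ = 1 := if_pos (by simp; omega)
    rw [e1, e2, e3, e4] at g2
    grind
  let z : Fin n := ⟨0, by omega⟩
  let o : Fin n := ⟨1, by omega⟩
  let z' : Fin p := ⟨0, by omega⟩
  let o' : Fin p := ⟨1, by omega⟩
  obtain ⟨a, b, c, d, had, q0, q1, q2, q3⟩ := idempotent_factor (T z z') (T z o') (T o z') (T o o')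
    (h1 _ _ _ _) (by have := h2 z o z' o'; simpa [e, z, z', o, o'] using this)
  let Y : Matrix (Fin n) (Fin 3) (ZMod 2) :=
    Matrix.of fun k => ![if (k : ℕ) = 0 then 1 else 0, if (k : ℕ) = 1 then 1 else 0, N k j]
  let X : Matrix (Fin 3) (Fin p) (ZMod 2) :=
    Matrix.of ![fun l => if (l : ℕ) = 0 then 1 else 0, fun l => if (l : ℕ) = 1 then 1 else 0, N i]
  have hY : Y.rank = 3 := by
    refine rank_eq_of_minor Y ![z, o, i] ?_
    have : (i : ℕ) ≠ 0 := by omega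
    have : (i : ℕ) ≠ 1 := by omega
    rw [Matrix.det_fin_three]
    simp [Y, z, o, *]
  have hX : X.rank = 3 := by
    rw [← Matrix.rank_transpose]
    refine rank_eq_of_minor Xᵀ ![z', o', j] ?_
    have : (j : ℕ) ≠ 0 := by omega
    have : (j : ℕ) ≠ 1 := by omega
    rw [Matrix.det_fin_three]
    simp [X, z', o', *]
  let g : Matrix (Fin 3) (Fin 3) (ZMod 2) := !![a, b, 0; c, d, 0; 0, 0, 1]
  let h : Matrix (Fin 3) (Fin 3) (ZMod 2) := !![d, b, 0; c, a, 0; 0, 0, 1]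
  have hgh : g * h = 1 := by
    ext u v
    fin_cases u <;> fin_cases v <;> simp [g, h, Matrix.mul_apply, Fin.sum_univ_three] <;> grind
  have hE1 : (Y * g) * dg 1 1 * (h * X) ∈ V := by
    have : (Y * g) * dg 1 1 * (h * X) = inc n 2 * (inc p 2)ᵀ := by
      have : g * dg 1 1 * h = dg 1 1 := by
        ext u v
        fin_cases u <;> fin_cases v <;>
          simp [g, h, dg, Matrix.mul_apply, Fin.sum_univ_three] <;> grind
      calc _ = Y * (g * dg 1 1 * h) * X := by simp only [Matrix.mul_assoc]
        _ = _ := by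
          rw [this]
          ext k l
          rw [unitBlock_apply]
          have h11 : (1 + 1 : ZMod 2) = 0 := by decide
          simp [Matrix.mul_apply, Fin.sum_univ_three, dg, Y, X, h11]
          split_ifs <;> first | omega | simp
    rw [this]; exact hE
  have hN1 : (Y * g) * dg 1 0 * (h * X) ∈ V := by
    have : (Y * g) * dg 1 0 * (h * X) = N := by
      have : g * dg 1 0 * h = !![T z z', T z o', 0; T o z', T o o', 0; 0, 0, 1] := by
        rw [← q0, ← q1, ← q2, ← q3]
        ext u v
        fin_cases u <;> fin_cases v <;>
          simp [g, h, dg, Matrix.mul_apply, Fin.sum_univ_three]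
      calc _ = Y * (g * dg 1 0 * h) * X := by simp only [Matrix.mul_assoc]
        _ = _ := by
          rw [this]
          ext k l
          have hT : N k l = T k l + N k j * N i l := by simp only [T]; grind
          have hk : (k = z ∨ k = o) ∨ 2 ≤ (k : ℕ) := by simp only [Fin.ext_iff, z, o]; omega
          have hl : (l = z' ∨ l = o') ∨ 2 ≤ (l : ℕ) := by simp only [Fin.ext_iff, z', o']; omega
          rw [hT]
          simp only [Matrix.mul_apply, Fin.sum_univ_three, Y, X]
          clear_value T
          have k0 : 2 ≤ (k : ℕ) → (k : ℕ) ≠ 0 ∧ (k : ℕ) ≠ 1 := by omega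
          have l0 : 2 ≤ (l : ℕ) → (l : ℕ) ≠ 0 ∧ (l : ℕ) ≠ 1 := by omega
          rcases hk with (rfl | rfl) | hk <;> rcases hl with (rfl | rfl) | hl <;>
            simp [z, o, z', o', *]
    rw [this]; exact hN
  refine ⟨Y * g, h * X, rank_mul_unit hY (IsUnit.of_mul_eq_one _ hgh),
    rank_unit_mul hX (IsUnit.of_mul_eq_one_right _ hgh), fun r s => ?_⟩
  have hsum : (Y * g) * dg 0 1 * (h * X) ∈ V := by
    have : dg 0 1 = dg 1 1 + dg 1 0 := by
      ext u v; fin_cases u <;> fin_cases v <;> rfl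
    rw [this, Matrix.mul_add, Matrix.add_mul]
    exact V.add_mem hE1 hN1
  have hzero : dg 0 0 = 0 := by
    ext u v; fin_cases u <;> fin_cases v <;> rfl
  rcases F2_cases r with rfl | rfl <;> rcases F2_cases s with rfl | rfl
  · rw [hzero]; simp
  · exact hsum
  · exact hN1
  · exact hE1

/-! ### Spaces vanishing away from two rows and two columns -/

/-- Extraction of the submatrix on the rows `r` and the columns `c`, as a linear map. -/
def minorMap {n p : ℕ} (r : Fin 3 → Fin n) (c : Fin 3 → Fin p) :
    Matrix (Fin n) (Fin p) (ZMod 2) →ₗ[ZMod 2] Matrix (Fin 3) (Fin 3) (ZMod 2) where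
  toFun M := M.submatrix r c
  map_add' _ _ := rfl
  map_smul' _ _ := rfl

theorem minorMap_apply {n p : ℕ} (r : Fin 3 → Fin n) (c : Fin 3 → Fin p)
    (M : Matrix (Fin n) (Fin p) (ZMod 2)) : minorMap r c M = M.submatrix r c := rfl

/-- `z` and `o` are the first two indices, in some order. -/
structure FirstTwo {n : ℕ} (z o : Fin n) : Prop where
  ne : (z : ℕ) ≠ o
  lt : (z : ℕ) < 2
  lt' : (o : ℕ) < 2

theorem FirstTwo.cover {n : ℕ} {z o : Fin n} (h : FirstTwo z o) (k : Fin n) :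
    (k = z ∨ k = o) ∨ 2 ≤ (k : ℕ) := by
  have := h.ne
  have := h.lt
  have := h.lt'
  simp only [Fin.ext_iff]
  omega

/-- Half of the factorization below: the rows beyond the first two are all multiples of the
row `i₀`, with coefficients independent of the member of `V`. -/
theorem exists_coeff {E : Type*} {n : ℕ} (V : Set E) (f g : E → Fin n → ZMod 2)
    {z o i₀ : Fin n} (hzo : FirstTwo z o) (hi₀ : 2 ≤ (i₀ : ℕ))
    (hB : ∀ i : Fin n, 2 ≤ (i : ℕ) → (∀ N ∈ V, f N i = 0 ∧ g N i = 0) ∨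
      ∀ N ∈ V, f N i = f N i₀ ∧ g N i = g N i₀) :
    ∃ Y : Matrix (Fin n) (Fin 3) (ZMod 2), Y.rank = 3 ∧ Y z = ![1, 0, 0] ∧ Y o = ![0, 1, 0] ∧
      ∀ k : Fin n, 2 ≤ (k : ℕ) → Y k 0 = 0 ∧ Y k 1 = 0 ∧
        ∀ N ∈ V, f N k = Y k 2 * f N i₀ ∧ g N k = Y k 2 * g N i₀ := by
  classical
  let ε : Fin n → ZMod 2 := fun k => if ∀ N ∈ V, f N k = f N i₀ ∧ g N k = g N i₀ then 1 else 0
  let Y : Matrix (Fin n) (Fin 3) (ZMod 2) := Matrix.of fun k =>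
    if k = z then ![1, 0, 0] else if k = o then ![0, 1, 0] else ![0, 0, ε k]
  have hne : o ≠ z := fun h => hzo.ne (by rw [h])
  have hz : Y z = ![1, 0, 0] := if_pos rfl
  have ho : Y o = ![0, 1, 0] := (if_neg hne).trans (if_pos rfl)
  have hk : ∀ k : Fin n, 2 ≤ (k : ℕ) → Y k = ![0, 0, ε k] := by
    intro k hk
    have h1 : k ≠ z := fun h => by have := hzo.lt; rw [← h] at this; omega
    have h2 : k ≠ o := fun h => by have := hzo.lt'; rw [← h] at this; omega
    exact (if_neg h1).trans (if_neg h2)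
  refine ⟨Y, ?_, hz, ho, fun k hk' => ?_⟩
  · refine rank_eq_of_minor Y ![z, o, i₀] ?_
    rw [Matrix.det_fin_three]
    simp [hz, ho, hk i₀ hi₀, ε]
  · rw [hk k hk']
    refine ⟨rfl, rfl, fun N hN => ?_⟩
    rcases hB k hk' with h | h
    · by_cases h' : ∀ N ∈ V, f N k = f N i₀ ∧ g N k = g N i₀
      · simp [ε, if_pos h', h' N hN]
      · simp [ε, if_neg h', h N hN]
    · simp [ε, if_pos h, h N hN]

/-- If the rows of index at least `2` are proportional to one of them, the columns likewise, and
the entries with both indices at least `2` vanish, then the space factors through its `3 × 3`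
submatrices on the corresponding rows and columns. -/
theorem fits_of_proportional {n p : ℕ} (hn : 3 ≤ n) (hp : 3 ≤ p)
    {W : Submodule (ZMod 2) (Matrix (Fin 3) (Fin 3) (ZMod 2))}
    {V : Submodule (ZMod 2) (Matrix (Fin n) (Fin p) (ZMod 2))}
    {z o i₀ : Fin n} {z' o' j₀ : Fin p} (hzo : FirstTwo z o) (hzo' : FirstTwo z' o')
    (hD : ∀ N ∈ V, ∀ (i : Fin n) (j : Fin p), 2 ≤ (i : ℕ) → 2 ≤ (j : ℕ) → N i j = 0)
    (hi₀ : 2 ≤ (i₀ : ℕ)) (hj₀ : 2 ≤ (j₀ : ℕ))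
    (hB : ∀ i : Fin n, 2 ≤ (i : ℕ) → (∀ N ∈ V, N i z' = 0 ∧ N i o' = 0) ∨
      ∀ N ∈ V, N i z' = N i₀ z' ∧ N i o' = N i₀ o')
    (hC : ∀ j : Fin p, 2 ≤ (j : ℕ) → (∀ N ∈ V, N z j = 0 ∧ N o j = 0) ∨
      ∀ N ∈ V, N z j = N z j₀ ∧ N o j = N o j₀)
    (hW : Fits3 (V.map (minorMap ![z, o, i₀] ![z', o', j₀])) W) : Fits V (embed n p hn hp W) := by
  obtain ⟨Y, hY, y0, y1, y2⟩ := exists_coeff (V : Set (Matrix (Fin n) (Fin p) (ZMod 2)))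
    (fun N i => N i z') (fun N i => N i o') hzo hi₀ hB
  obtain ⟨X, hX, x0, x1, x2⟩ := exists_coeff (V : Set (Matrix (Fin n) (Fin p) (ZMod 2)))
    (fun N j => N z j) (fun N j => N o j) hzo' hj₀ hC
  obtain ⟨G, H, hG, hH, h⟩ := hW
  refine fits_embed hn hp hY (X := Xᵀ) (by rwa [Matrix.rank_transpose]) hG hH fun N hN =>
    ⟨_, ?_, h _ (Submodule.mem_map_of_mem hN)⟩
  ext k l
  rw [minorMap_apply]
  simp only [Matrix.mul_apply, Fin.sum_univ_three, Matrix.transpose_apply]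
  have d := hD N hN
  rcases hzo.cover k with (rfl | rfl) | hk <;> rcases hzo'.cover l with (rfl | rfl) | hl
  · simp [y0, x0]
  · simp [y0, x1]
  · obtain ⟨a, b, c⟩ := x2 l hl
    simp [y0, a, b, (c N hN).1, mul_comm]
  · simp [y1, x0]
  · simp [y1, x1]
  · obtain ⟨a, b, c⟩ := x2 l hl
    simp [y1, a, b, (c N hN).2, mul_comm]
  · obtain ⟨a, b, c⟩ := y2 k hk
    simp [x0, a, b, (c N hN).1]
  · obtain ⟨a, b, c⟩ := y2 k hk
    simp [x1, a, b, (c N hN).2]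
  · obtain ⟨a, b, c⟩ := x2 l hl
    obtain ⟨a', b', c'⟩ := y2 k hk
    simp [a, b, a', b', d _ _ hi₀ hj₀, d _ _ hk hl]

/-- The case where, in suitable bases, the rows beyond the first two only meet the column `o'`
and the columns beyond the first two only meet the row `z`. -/
theorem fits_of_corner {n p : ℕ} (hn : 3 ≤ n) (hp : 3 ≤ p)
    {V : Submodule (ZMod 2) (Matrix (Fin n) (Fin p) (ZMod 2))}
    {z o i₀ : Fin n} {z' o' j₀ : Fin p} (hzo : FirstTwo z o) (hzo' : FirstTwo z' o')
    (hD : ∀ N ∈ V, ∀ (i : Fin n) (j : Fin p), 2 ≤ (i : ℕ) → 2 ≤ (j : ℕ) → N i j = 0)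
    (h0 : ∀ i : Fin n, 2 ≤ (i : ℕ) → ∀ N ∈ V, N i z' = 0)
    (h1 : ∀ j : Fin p, 2 ≤ (j : ℕ) → ∀ N ∈ V, N o j = 0)
    (h3 : ∀ (i : Fin n) (j : Fin p), 2 ≤ (i : ℕ) → 2 ≤ (j : ℕ) → ∀ N ∈ V,
      N i o' * N o z' * N z j = 0)
    (hi₀ : 2 ≤ (i₀ : ℕ)) (hj₀ : 2 ≤ (j₀ : ℕ))
    (hβ : ¬ ∀ N ∈ V, N i₀ o' = 0) (hγ : ¬ ∀ N ∈ V, N z j₀ = 0) :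
    Fits V (Rst (ZMod 2) n p 1 1) ∨ Fits V (embed n p hn hp J3) := by
  by_cases hc : ∀ N ∈ V, N o z' = 0
  · left
    -- Row `z` and column `o'` carry all the nonzero entries.
    have key : ∀ N ∈ V, ∀ k l, k ≠ z → l ≠ o' → N k l = 0 := by
      intro N hN k l hk hl
      rcases hzo.cover k with (rfl | rfl) | hk' <;> rcases hzo'.cover l with (rfl | rfl) | hl'
      · exact absurd rfl hk
      · exact absurd rfl hk
      · exact absurd rfl hk
      · exact hc N hN
      · exact absurd rfl hl
      · exact h1 l hl' N hN
      · exact h0 k hk' N hN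
      · exact absurd rfl hl
      · exact hD N hN k l hk' hl'
    refine ⟨_, _, isUnit_perm_left (Equiv.swap (⟨0, by omega⟩ : Fin n) z),
      isUnit_perm_right (Equiv.swap (⟨0, by omega⟩ : Fin p) o'), fun N hN => ?_⟩
    rw [submatrix_eq_sand]
    intro k l hk hl
    refine key N hN _ _ (fun h => ?_) (fun h => ?_)
    · rw [Equiv.swap_apply_eq_iff, Equiv.swap_apply_right] at h
      rw [h] at hk
      simp at hk
    · rw [Equiv.swap_apply_eq_iff, Equiv.swap_apply_right] at h
      rw [h] at hl
      simp at hl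
  · right
    have hf := fun (i : Fin n) (j : Fin p) hi hj => forms_three V (fun N => N i o')
      (fun N => N o z') (fun N => N z j) (fun _ _ => rfl) (fun _ _ => rfl) (fun _ _ => rfl)
      (h3 i j hi hj)
    have h00 : ∀ N ∈ V, N i₀ o' + N o z' + N z j₀ = 0 := by
      rcases hf i₀ j₀ hi₀ hj₀ with h | h | h | h
      · exact absurd h hβ
      · exact absurd h hc
      · exact absurd h hγ
      · exact h
    refine fits_of_proportional hn hp hzo hzo' hD hi₀ hj₀ ?_ ?_ ?_
    · intro i hi
      rcases hf i j₀ hi hj₀ with h | h | h | h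
      · exact Or.inl fun N hN => ⟨h0 i hi N hN, h N hN⟩
      · exact absurd h hc
      · exact absurd h hγ
      · refine Or.inr fun N hN => ⟨by rw [h0 i hi N hN, h0 i₀ hi₀ N hN], ?_⟩
        have := h N hN
        have := h00 N hN
        grind
    · intro j hj
      rcases hf i₀ j hi₀ hj with h | h | h | h
      · exact absurd h hβ
      · exact absurd h hc
      · exact Or.inl fun N hN => ⟨h N hN, h1 j hj N hN⟩
      · refine Or.inr fun N hN => ⟨?_, by rw [h1 j hj N hN, h1 j₀ hj₀ N hN]⟩
        have := h N hN
        have := h00 N hN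
        grind
    · refine Fits3.of_perm 1 ⟨![2, 0, 1], ![1, 2, 0], by decide, by decide⟩ 1 1
        isUnit_one isUnit_one ?_
      rintro _ ⟨N, hN, rfl⟩
      rw [Matrix.one_mul, Matrix.mul_one, mem_J3_iff, minorMap_apply]
      have := h00 N hN
      refine ⟨?_, h1 j₀ hj₀ N hN, hD N hN i₀ j₀ hi₀ hj₀, h0 i₀ hi₀ N hN⟩
      change N z j₀ + N o z' + N i₀ o' = 0
      rw [← this]; ring

/-- The `3 × 3` matrices `[a, b, x; c, d, y; y, x, 0]` of determinant zero, where the forms `x`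
and `y` are independent. -/
theorem three_cross {V : Submodule (ZMod 2) (Matrix (Fin 3) (Fin 3) (ZMod 2))}
    (hdet : ∀ A ∈ V, A.det = 0) (h22 : ∀ A ∈ V, A 2 2 = 0) (h20 : ∀ A ∈ V, A 2 0 = A 1 2)
    (h21 : ∀ A ∈ V, A 2 1 = A 0 2) (hx : ¬ ∀ A ∈ V, A 0 2 = 0) (hy : ¬ ∀ A ∈ V, A 1 2 = 0)
    (hxy : ¬ ∀ A ∈ V, A 0 2 + A 1 2 = 0) : Fits3 V Mata3 ∨ Fits3 V V3 := by
  have hsq : ∀ u : ZMod 2, u * u = u := by decide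
  have hf : ∀ A ∈ V, A 0 2 * A 1 2 * (A 0 0 + A 1 1) + A 0 1 * A 1 2 + A 1 0 * A 0 2 = 0 := by
    intro A hA
    have h := hdet A hA
    rw [Matrix.det_fin_three, h22 A hA, h20 A hA, h21 A hA] at h
    have h1 := hsq (A 0 2)
    have h2 := hsq (A 1 2)
    clear * - h h1 h2
    grind
  have hb : ∃ l : ZMod 2, ∀ A ∈ V, A 0 1 = l * A 0 2 := by
    have h := forms_three V (fun A => A 0 1) (fun A => A 1 2) (fun A => A 0 2 + A 1 2)
      (fun _ _ => rfl) (fun _ _ => rfl)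
      (fun A B => by simp only [Matrix.add_apply]; ring) fun A hA => by
        have h := hf A hA
        have h1 := hsq (A 0 2)
        have h2 := hsq (A 1 2)
        clear * - h h1 h2
        grind
    rcases h with h | h | h | h
    · exact ⟨0, fun A hA => by simp [h A hA]⟩
    · exact absurd h hy
    · exact absurd h hxy
    · exact ⟨1, fun A hA => by have := h A hA; grind⟩
  have hc : ∃ k : ZMod 2, ∀ A ∈ V, A 1 0 = k * A 1 2 := by
    have h := forms_three V (fun A => A 1 0) (fun A => A 0 2) (fun A => A 0 2 + A 1 2)
      (fun _ _ => rfl) (fun _ _ => rfl)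
      (fun A B => by simp only [Matrix.add_apply]; ring) fun A hA => by
        have h := hf A hA
        have h1 := hsq (A 0 2)
        have h2 := hsq (A 1 2)
        clear * - h h1 h2
        grind
    rcases h with h | h | h | h
    · exact ⟨0, fun A hA => by simp [h A hA]⟩
    · exact absurd h hx
    · exact absurd h hxy
    · exact ⟨1, fun A hA => by have := h A hA; grind⟩
  have hd : ∃ m : ZMod 2, ∀ A ∈ V, A 0 0 + A 0 1 + A 1 0 + A 1 1 = m * (A 0 2 + A 1 2) := by
    have h := forms_three V (fun A => A 0 0 + A 0 1 + A 1 0 + A 1 1) (fun A => A 0 2)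
      (fun A => A 1 2) (fun A B => by simp only [Matrix.add_apply]; ring)
      (fun _ _ => rfl) (fun _ _ => rfl) fun A hA => by
        have h := hf A hA
        have h1 := hsq (A 0 2)
        have h2 := hsq (A 1 2)
        clear * - h h1 h2
        grind
    rcases h with h | h | h | h
    · exact ⟨0, fun A hA => by simp [h A hA]⟩
    · exact absurd h hx
    · exact absurd h hy
    · exact ⟨1, fun A hA => by have := h A hA; grind⟩
  obtain ⟨l, hl⟩ := hb
  obtain ⟨k, hk⟩ := hc
  obtain ⟨m, hm⟩ := hd
  -- Adding multiples of the last row to the others clears the entries `0 1` and `1 0`; the sum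
  -- of the first two diagonal entries then becomes `(l + k + m) (x + y)`.
  rcases F2_cases (l + k + m) with he | he
  · refine Or.inl ⟨!![0, 0, 1; 0, 1, k; 1, 0, l], !![0, 1, 0; 0, 0, 1; 1, 0, 0],
      (Matrix.isUnit_iff_isUnit_det _).2 (by simp [Matrix.det_fin_three]),
      (Matrix.isUnit_iff_isUnit_det _).2 (by simp [Matrix.det_fin_three]), fun A hA => ?_⟩
    have e1 := hl A hA
    have e2 := hk A hA
    have e3 := hm A hA
    rw [mem_Mata3_iff]
    simp only [Matrix.mul_apply, Fin.sum_univ_three]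
    simp [h22 A hA, h20 A hA, h21 A hA]
    clear * - e1 e2 e3 he
    grind
  · refine Or.inr ⟨!![0, 1, k; 0, 1, k + 1; 1, 0, l], !![1, 1, 0; 0, 0, 1; 0, 1, 0],
      (Matrix.isUnit_iff_isUnit_det _).2 (by simp [Matrix.det_fin_three]),
      (Matrix.isUnit_iff_isUnit_det _).2 (by simp [Matrix.det_fin_three]), fun A hA => ?_⟩
    have e1 := hl A hA
    have e2 := hk A hA
    have e3 := hm A hA
    rw [mem_V3_iff]
    simp only [Matrix.mul_apply, Fin.sum_univ_three]
    simp [h22 A hA, h20 A hA, h21 A hA]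
    clear * - e1 e2 e3 he
    grind

/-- The classification of the spaces whose members vanish outside the first two rows and the first
two columns. -/
theorem fits_of_cross {n p : ℕ} (hn : 3 ≤ n) (hp : 3 ≤ p)
    {V : Submodule (ZMod 2) (Matrix (Fin n) (Fin p) (ZMod 2))} (hV : ∀ M ∈ V, M.rank ≤ 2)
    (hE : inc n 2 * (inc p 2)ᵀ ∈ V)
    (hD : ∀ N ∈ V, ∀ (i : Fin n) (j : Fin p), 2 ≤ (i : ℕ) → 2 ≤ (j : ℕ) → N i j = 0) :
    ∃ S ∈ maxList n p hn hp, Fits V S := by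
  obtain ⟨z, hz⟩ : ∃ z : Fin n, (z : ℕ) = 0 := ⟨⟨0, by omega⟩, rfl⟩
  obtain ⟨o, ho⟩ : ∃ o : Fin n, (o : ℕ) = 1 := ⟨⟨1, by omega⟩, rfl⟩
  obtain ⟨z', hz'⟩ : ∃ z : Fin p, (z : ℕ) = 0 := ⟨⟨0, by omega⟩, rfl⟩
  obtain ⟨o', ho'⟩ : ∃ o : Fin p, (o : ℕ) = 1 := ⟨⟨1, by omega⟩, rfl⟩
  have hzo : FirstTwo z o := ⟨by omega, by omega, by omega⟩
  have hzo' : FirstTwo z' o' := ⟨by omega, by omega, by omega⟩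
  -- The minor bordering the upper left `2 × 2` block by row `i` and column `j`.
  have f2 : ∀ (i : Fin n) (j : Fin p), 2 ≤ (i : ℕ) → 2 ≤ (j : ℕ) → ∀ N ∈ V,
      N i z' * N o o' * N z j + N i z' * N z o' * N o j + N i o' * N o z' * N z j +
        N i o' * N z z' * N o j = 0 := by
    intro i j hi hj N hN
    have h := minor_expand (hV N hN) z o i z' o' j
    rw [hD N hN i j hi hj] at h
    clear * - h
    grind
  -- The difference of the previous identities for `N` and for `N + diag (1, 1, 0, …)`.
  have f1 : ∀ (i : Fin n) (j : Fin p), 2 ≤ (i : ℕ) → 2 ≤ (j : ℕ) → ∀ N ∈ V,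
      N i z' * N z j + N i o' * N o j = 0 := by
    intro i j hi hj N hN
    have h := f2 i j hi hj N hN
    have h' := f2 i j hi hj _ (V.add_mem hN hE)
    have e1 : ∀ l : Fin p, 2 ≤ (l : ℕ) → (inc n 2 * (inc p 2)ᵀ) z l = 0 := fun l hl => by
      rw [unitBlock_apply, if_neg (by omega)]
    have e2 : ∀ l : Fin p, 2 ≤ (l : ℕ) → (inc n 2 * (inc p 2)ᵀ) o l = 0 := fun l hl => by
      rw [unitBlock_apply, if_neg (by omega)]
    have e3 : ∀ l, (inc n 2 * (inc p 2)ᵀ) i l = 0 := fun l => by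
      rw [unitBlock_apply, if_neg (by omega)]
    have e4 : (inc n 2 * (inc p 2)ᵀ) z z' = 1 := by rw [unitBlock_apply, if_pos (by omega)]
    have e5 : (inc n 2 * (inc p 2)ᵀ) o o' = 1 := by rw [unitBlock_apply, if_pos (by omega)]
    have e6 : (inc n 2 * (inc p 2)ᵀ) z o' = 0 := by rw [unitBlock_apply, if_neg (by omega)]
    have e7 : (inc n 2 * (inc p 2)ᵀ) o z' = 0 := by rw [unitBlock_apply, if_neg (by omega)]
    simp only [Matrix.add_apply, e1 j hj, e2 j hj, e3, e4, e5, e6, e7, add_zero] at h'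
    clear * - h h'
    grind
  by_cases hB : ∀ i : Fin n, 2 ≤ (i : ℕ) → ∀ N ∈ V, N i z' = 0 ∧ N i o' = 0
  · refine ⟨Rst (ZMod 2) n p 2 0, by simp [maxList], 1, 1, isUnit_one, isUnit_one,
      fun N hN => ?_⟩
    rw [Matrix.one_mul, Matrix.mul_one]
    intro k l hk _
    rcases hzo'.cover l with (rfl | rfl) | hl
    · exact (hB k hk N hN).1
    · exact (hB k hk N hN).2
    · exact hD N hN k l hk hl
  by_cases hC : ∀ j : Fin p, 2 ≤ (j : ℕ) → ∀ N ∈ V, N z j = 0 ∧ N o j = 0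
  · refine ⟨Rst (ZMod 2) n p 0 2, by simp [maxList], 1, 1, isUnit_one, isUnit_one,
      fun N hN => ?_⟩
    rw [Matrix.one_mul, Matrix.mul_one]
    intro k l _ hl
    rcases hzo.cover k with (rfl | rfl) | hk
    · exact (hC l hl N hN).1
    · exact (hC l hl N hN).2
    · exact hD N hN k l hk hl
  simp only [not_forall, exists_prop] at hB hC
  obtain ⟨i₀, hi₀, hB⟩ := hB
  obtain ⟨j₀, hj₀, hC⟩ := hC
  have hB' : ¬ ∀ N ∈ V, N i₀ z' = 0 ∧ N i₀ o' = 0 := by push Not; grind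
  have hC' : ¬ ∀ N ∈ V, N z j₀ = 0 ∧ N o j₀ = 0 := by push Not; grind
  have hfp := fun (i : Fin n) (j : Fin p) hi hj => forms_pair V (fun N => N i z')
    (fun N => N i o') (fun N => N z j) (fun N => N o j) (fun _ _ => rfl) (fun _ _ => rfl)
    (fun _ _ => rfl) (fun _ _ => rfl) (f1 i j hi hj)
  have hlist : ∀ {V' : Submodule (ZMod 2) (Matrix (Fin n) (Fin p) (ZMod 2))},
      Fits V' (Rst (ZMod 2) n p 1 1) ∨ Fits V' (embed n p hn hp J3) →
      ∃ S ∈ maxList n p hn hp, Fits V' S := by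
    rintro V' (h | h)
    · exact ⟨_, by simp [maxList], h⟩
    · exact ⟨_, by simp [maxList], h⟩
  rcases hfp i₀ j₀ hi₀ hj₀ hB' hC' with ⟨hb, hc⟩ | ⟨hb, hc⟩ | ⟨hb, hc⟩ | ⟨hb, hc, hx, hy, hxy⟩
  · have hβ : ¬ ∀ N ∈ V, N i₀ o' = 0 := fun h => hB' fun N hN => ⟨hb N hN, h N hN⟩
    have hγ : ¬ ∀ N ∈ V, N z j₀ = 0 := fun h => hC' fun N hN => ⟨h N hN, hc N hN⟩
    have h0 : ∀ i : Fin n, 2 ≤ (i : ℕ) → ∀ N ∈ V, N i z' = 0 := fun i hi =>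
      (forms_two V (fun N => N i z') (fun N => N z j₀) (fun _ _ => rfl) (fun _ _ => rfl)
        fun N hN => by have := f1 i j₀ hi hj₀ N hN; rwa [hc N hN, mul_zero, add_zero] at this
        ).resolve_right hγ
    have h1 : ∀ j : Fin p, 2 ≤ (j : ℕ) → ∀ N ∈ V, N o j = 0 := fun j hj =>
      (forms_two V (fun N => N i₀ o') (fun N => N o j) (fun _ _ => rfl) (fun _ _ => rfl)
        fun N hN => by have := f1 i₀ j hi₀ hj N hN; rwa [hb N hN, zero_mul, zero_add] at this
        ).resolve_left hβ
    refine hlist (fits_of_corner hn hp hzo hzo' hD h0 h1 (fun i j hi hj N hN => ?_) hi₀ hj₀ hβ hγ)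
    have := f2 i j hi hj N hN
    simpa [h0 i hi N hN, h1 j hj N hN] using this
  · have hβ : ¬ ∀ N ∈ V, N i₀ z' = 0 := fun h => hB' fun N hN => ⟨h N hN, hb N hN⟩
    have hγ : ¬ ∀ N ∈ V, N o j₀ = 0 := fun h => hC' fun N hN => ⟨hc N hN, h N hN⟩
    have h0 : ∀ i : Fin n, 2 ≤ (i : ℕ) → ∀ N ∈ V, N i o' = 0 := fun i hi =>
      (forms_two V (fun N => N i o') (fun N => N o j₀) (fun _ _ => rfl) (fun _ _ => rfl)
        fun N hN => by have := f1 i j₀ hi hj₀ N hN; rwa [hc N hN, mul_zero, zero_add] at this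
        ).resolve_right hγ
    have h1 : ∀ j : Fin p, 2 ≤ (j : ℕ) → ∀ N ∈ V, N z j = 0 := fun j hj =>
      (forms_two V (fun N => N i₀ z') (fun N => N z j) (fun _ _ => rfl) (fun _ _ => rfl)
        fun N hN => by have := f1 i₀ j hi₀ hj N hN; rwa [hb N hN, zero_mul, add_zero] at this
        ).resolve_left hβ
    refine hlist (fits_of_corner hn hp ⟨hzo.ne.symm, hzo.lt', hzo.lt⟩
      ⟨hzo'.ne.symm, hzo'.lt', hzo'.lt⟩ hD h0 h1 (fun i j hi hj N hN => ?_) hi₀ hj₀ hβ hγ)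
    have := f2 i j hi hj N hN
    simpa [h0 i hi N hN, h1 j hj N hN] using this
  · have hβ : ¬ ∀ N ∈ V, N i₀ o' = 0 := fun h => hB' fun N hN =>
      ⟨(hb N hN).trans (h N hN), h N hN⟩
    have hγ : ¬ ∀ N ∈ V, N z j₀ = 0 := fun h => hC' fun N hN =>
      ⟨h N hN, (hc N hN).symm.trans (h N hN)⟩
    have h0 : ∀ i : Fin n, 2 ≤ (i : ℕ) → ∀ N ∈ V, N i z' + N i o' = 0 := fun i hi =>
      (forms_two V (fun N => N i z' + N i o') (fun N => N z j₀)
        (fun A B => by simp only [Matrix.add_apply]; ring) (fun _ _ => rfl)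
        fun N hN => by have := f1 i j₀ hi hj₀ N hN; rwa [← hc N hN, ← add_mul] at this
        ).resolve_right hγ
    have h1 : ∀ j : Fin p, 2 ≤ (j : ℕ) → ∀ N ∈ V, N z j + N o j = 0 := fun j hj =>
      (forms_two V (fun N => N i₀ o') (fun N => N z j + N o j) (fun _ _ => rfl)
        (fun A B => by simp only [Matrix.add_apply]; ring)
        fun N hN => by have := f1 i₀ j hi₀ hj N hN; rwa [hb N hN, ← mul_add] at this
        ).resolve_left hβ
    -- Adding row `z` to row `o` and column `o'` to column `z'` leads back to the first case.
    have hne : o ≠ z := fun h => hzo.ne (by rw [h])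
    have hne' : o' ≠ z' := fun h => hzo'.ne (by rw [h])
    have hP : IsUnit (Matrix.transvection o z (1 : ZMod 2)) :=
      (Matrix.isUnit_iff_isUnit_det _).2 (by rw [Matrix.det_transvection_of_ne _ _ hne]; simp)
    have hQ : IsUnit (Matrix.transvection o' z' (1 : ZMod 2)) :=
      (Matrix.isUnit_iff_isUnit_det _).2 (by rw [Matrix.det_transvection_of_ne _ _ hne']; simp)
    have ez : ∀ i : Fin n, 2 ≤ (i : ℕ) → i ≠ o := by rintro i hi rfl; omega
    have ez' : ∀ j : Fin p, 2 ≤ (j : ℕ) → j ≠ z' := by rintro j hj rfl; omega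
    suffices h : ∃ S ∈ maxList n p hn hp, Fits
        (V.map (sand (Matrix.transvection o z 1) (Matrix.transvection o' z' 1))) S by
      obtain ⟨S, hS, hfit⟩ := h
      exact ⟨S, hS, hfit.of_map hP hQ⟩
    refine hlist (fits_of_corner hn hp (i₀ := i₀) (j₀ := j₀) hzo hzo' ?_ ?_ ?_ ?_ hi₀ hj₀ ?_ ?_)
    · rintro _ ⟨N, hN, rfl⟩ i j hi hj
      simp [sand_apply, ez i hi, ez' j hj, hD N hN i j hi hj]
    · rintro i hi _ ⟨N, hN, rfl⟩
      simp [sand_apply, ez i hi, h0 i hi N hN]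
    · rintro j hj _ ⟨N, hN, rfl⟩
      have := h1 j hj N hN
      simp [sand_apply, ez' j hj]
      rw [← this]; ring
    · rintro i j hi hj _ ⟨N, hN, rfl⟩
      have e0 := h0 i hi N hN
      have e1 := h1 j hj N hN
      have := f2 i j hi hj N hN
      simp [sand_apply, ez i hi, ez' j hj, hne', hne.symm]
      clear * - e0 e1 this
      grind
    · refine fun h => hβ fun N hN => ?_
      have := h _ (Submodule.mem_map_of_mem hN)
      simpa [sand_apply, ez i₀ hi₀, hne'] using this
    · refine fun h => hγ fun N hN => ?_
      have := h _ (Submodule.mem_map_of_mem hN)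
      simpa [sand_apply, ez' j₀ hj₀, hne.symm] using this
  · have hB2 : ∀ i : Fin n, 2 ≤ (i : ℕ) → (∀ N ∈ V, N i z' = 0 ∧ N i o' = 0) ∨
        ∀ N ∈ V, N i z' = N i₀ z' ∧ N i o' = N i₀ o' := by
      intro i hi
      by_cases h : ∀ N ∈ V, N i z' = 0 ∧ N i o' = 0
      · exact Or.inl h
      · right
        rcases hfp i j₀ hi hj₀ h hC' with ⟨-, h⟩ | ⟨-, h⟩ | ⟨-, h⟩ | ⟨h, h', -⟩
        · exact absurd (fun N hN => (hc N hN).symm.trans (h N hN)) hx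
        · exact absurd (fun N hN => (hb N hN).symm.trans (h N hN)) hy
        · exact absurd (fun N hN => (hc N hN).symm.trans ((h N hN).symm.trans (hb N hN))) hxy
        · exact fun N hN => ⟨(h' N hN).symm.trans (hc N hN), (h N hN).symm.trans (hb N hN)⟩
    have hC2 : ∀ j : Fin p, 2 ≤ (j : ℕ) → (∀ N ∈ V, N z j = 0 ∧ N o j = 0) ∨
        ∀ N ∈ V, N z j = N z j₀ ∧ N o j = N o j₀ := by
      intro j hj
      by_cases h : ∀ N ∈ V, N z j = 0 ∧ N o j = 0
      · exact Or.inl h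
      · right
        rcases hfp i₀ j hi₀ hj hB' h with ⟨h, -⟩ | ⟨h, -⟩ | ⟨h, -⟩ | ⟨h, h', -⟩
        · exact absurd h hx
        · exact absurd h hy
        · exact absurd h hxy
        · exact fun N hN => ⟨(h N hN).trans (hb N hN).symm, (h' N hN).trans (hc N hN).symm⟩
    have h3 := three_cross (V := V.map (minorMap ![z, o, i₀] ![z', o', j₀]))
      (by rintro _ ⟨N, hN, rfl⟩; exact det_minor_eq_zero (hV N hN) _ _)
      (by rintro _ ⟨N, hN, rfl⟩; exact hD N hN _ _ hi₀ hj₀)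
      (by rintro _ ⟨N, hN, rfl⟩; exact (hc N hN).symm)
      (by rintro _ ⟨N, hN, rfl⟩; exact (hb N hN).symm)
      (fun h => hy fun N hN => (hb N hN).symm.trans (h _ (Submodule.mem_map_of_mem hN)))
      (fun h => hx fun N hN => (hc N hN).symm.trans (h _ (Submodule.mem_map_of_mem hN)))
      (fun h => hxy fun N hN => by
        have h' : N z j₀ + N o j₀ = 0 := h _ (Submodule.mem_map_of_mem hN)
        rw [hb N hN, hc N hN] at h'
        exact (F2_eq_of_add h').symm)
    rcases h3 with h3 | h3
    · exact ⟨embed n p hn hp Mata3, by simp [maxList],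
        fits_of_proportional hn hp hzo hzo' hD hi₀ hj₀ hB2 hC2 h3⟩
    · exact ⟨embed n p hn hp V3, by simp [maxList],
        fits_of_proportional hn hp hzo hzo' hD hi₀ hj₀ hB2 hC2 h3⟩

/-! ### Every space of upper rank two fits into one of the six -/

/-- The existence half of the classification, before maximality enters. -/
theorem exists_fits {n p : ℕ} (hn : 3 ≤ n) (hp : 3 ≤ p)
    {V : Submodule (ZMod 2) (Matrix (Fin n) (Fin p) (ZMod 2))} (hV : ∀ M ∈ V, M.rank ≤ 2)
    {M : Matrix (Fin n) (Fin p) (ZMod 2)} (hM : M ∈ V) (hM2 : M.rank = 2) :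
    ∃ S ∈ maxList n p hn hp, Fits V S := by
  obtain ⟨P, Q, hP, hQ, hE⟩ := exists_normal_form hM2
  suffices h : ∃ S ∈ maxList n p hn hp, Fits (V.map (sand P Q)) S by
    obtain ⟨S, hS, hfit⟩ := h
    exact ⟨S, hS, hfit.of_map hP hQ⟩
  have hE' : inc n 2 * (inc p 2)ᵀ ∈ V.map (sand P Q) := ⟨M, hM, hE⟩
  have hV' : ∀ N ∈ V.map (sand P Q), N.rank ≤ 2 := by
    rintro _ ⟨N, hN, rfl⟩
    exact (rank_sand_le _ _ _).trans (hV N hN)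
  by_cases hD : ∀ N ∈ V.map (sand P Q), ∀ (i : Fin n) (j : Fin p), 2 ≤ (i : ℕ) → 2 ≤ (j : ℕ) →
      N i j = 0
  · exact fits_of_cross hn hp hV' hE' hD
  · push Not at hD
    obtain ⟨N, hN, i, j, hi, hj, hij⟩ := hD
    obtain ⟨Y, X, hY, hX, hd⟩ := exists_diag hn hp hV' hE' hN hi hj hij
    rcases fits_of_diag hn hp hV' hY hX hd with h | h
    · exact ⟨_, by simp [maxList], h⟩
    · exact ⟨_, by simp [maxList], h⟩

theorem urk_eq_two_iff {n p : ℕ} {V : Submodule (ZMod 2) (Matrix (Fin n) (Fin p) (ZMod 2))} :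
    urk V = 2 ↔ (∀ M ∈ V, M.rank ≤ 2) ∧ ∃ M ∈ V, M.rank = 2 := by
  have hb : BddAbove (Matrix.rank '' (V : Set (Matrix (Fin n) (Fin p) (ZMod 2)))) :=
    ⟨n, by rintro _ ⟨M, -, rfl⟩; simpa using M.rank_le_card_height⟩
  have hne : (Matrix.rank '' (V : Set (Matrix (Fin n) (Fin p) (ZMod 2)))).Nonempty :=
    ⟨_, 0, V.zero_mem, rfl⟩
  constructor
  · intro h
    have hm := Nat.sSup_mem hne hb
    rw [show sSup _ = 2 from h] at hm
    obtain ⟨M, hM, hM2⟩ := hm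
    exact ⟨fun N hN => (le_csSup hb ⟨N, hN, rfl⟩).trans h.le, M, hM, hM2⟩
  · rintro ⟨h1, M, hM, hM2⟩
    apply le_antisymm
    · exact csSup_le hne (by rintro _ ⟨N, hN, rfl⟩; exact h1 N hN)
    · exact hM2.ge.trans (le_csSup hb ⟨M, hM, rfl⟩)

theorem rank_sand_unit {n p : ℕ} {P : Matrix (Fin n) (Fin n) (ZMod 2)}
    {Q : Matrix (Fin p) (Fin p) (ZMod 2)} (hP : IsUnit P) (hQ : IsUnit Q)
    (M : Matrix (Fin n) (Fin p) (ZMod 2)) : (P * M * Q).rank = M.rank := by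
  rw [Matrix.rank_mul_eq_left_of_isUnit_det _ _ ((Matrix.isUnit_iff_isUnit_det _).1 hQ),
    Matrix.rank_mul_eq_right_of_isUnit_det _ _ ((Matrix.isUnit_iff_isUnit_det _).1 hP)]

/-- A maximal space carried into a space of upper rank `2` is equivalent to it. -/
theorem matEquiv_of_fits {n p : ℕ} {V S : Submodule (ZMod 2) (Matrix (Fin n) (Fin p) (ZMod 2))}
    (hV : IsMaxUrk2 V) (hS : urk S = 2) (h : Fits V S) : MatEquiv (ZMod 2) V S := by
  obtain ⟨P, Q, hP, hQ, h⟩ := h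
  have hVS : V ≤ S.comap (sand P Q) := h
  have hurk : urk (S.comap (sand P Q)) = 2 := by
    obtain ⟨M, hM, hM2⟩ := (urk_eq_two_iff.1 hV.1).2
    refine urk_eq_two_iff.2 ⟨fun N hN => ?_, M, hVS hM, hM2⟩
    rw [← rank_sand_unit hP hQ]
    exact (urk_eq_two_iff.1 hS).1 _ hN
  have hVeq := hV.2 _ hurk hVS
  refine ⟨P, Q, hP, hQ, Set.Subset.antisymm (fun N hN => ?_) ?_⟩
  · obtain ⟨P', hP'⟩ := hP.exists_right_inv
    obtain ⟨Q', hQ'⟩ := hQ.exists_left_inv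
    have hN' : P * (P' * N * Q') * Q = N := by
      calc P * (P' * N * Q') * Q = (P * P') * N * (Q' * Q) := by simp only [Matrix.mul_assoc]
        _ = N := by rw [hP', hQ', Matrix.one_mul, Matrix.mul_one]
    refine ⟨P' * N * Q', ?_, hN'⟩
    rw [← hVeq]
    change P * (P' * N * Q') * Q ∈ S
    rwa [hN']
  · rintro _ ⟨M, hM, rfl⟩
    exact h M hM

/-! ### The six spaces are maximal -/

theorem two_le_rank {n p : ℕ} {M : Matrix (Fin n) (Fin p) (ZMod 2)} (r : Fin 2 → Fin n)
    (c : Fin 2 → Fin p) (h : (M.submatrix r c).det ≠ 0) : 2 ≤ M.rank := by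
  have h1 := Matrix.rank_of_det_ne_zero h
  have h2 := M.rank_submatrix_le r c
  simp at h1
  omega

theorem rank_le_two_of_eq_add {n p : ℕ} {M : Matrix (Fin n) (Fin p) (ZMod 2)}
    (a c : Fin n → ZMod 2) (b d : Fin p → ZMod 2)
    (h : ∀ i j, M i j = a i * b j + c i * d j) : M.rank ≤ 2 := by
  have h' : M = (Matrix.of fun i k => ![a i, c i] k : Matrix (Fin n) (Fin 2) (ZMod 2)) *
      (Matrix.of fun k j => ![b j, d j] k : Matrix (Fin 2) (Fin p) (ZMod 2)) := by
    ext i j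
    simp [h, Matrix.mul_apply]
  rw [h']
  exact (Matrix.rank_mul_le_left _ _).trans (Matrix.rank_le_width _)

/-- In a space containing `R(s,t)`, the entries of a member outside the forced block of zeros can
be prescribed at will. -/
theorem prescribe_mem {n p s t : ℕ} {W : Submodule (ZMod 2) (Matrix (Fin n) (Fin p) (ZMod 2))}
    (hW : Rst (ZMod 2) n p s t ≤ W) {N : Matrix (Fin n) (Fin p) (ZMod 2)} (hN : N ∈ W)
    (F : Fin n → Fin p → ZMod 2) :
    (Matrix.of fun (i : Fin n) (j : Fin p) => if s ≤ (i : ℕ) ∧ t ≤ (j : ℕ) then N i j else F i j) ∈ W := by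
  rw [← Submodule.sub_mem_iff_left W hN]
  refine hW fun i j hi hj => ?_
  simp [hi, hj]

theorem isMaxUrk2_of {n p : ℕ} {S : Submodule (ZMod 2) (Matrix (Fin n) (Fin p) (ZMod 2))}
    (h1 : ∀ M ∈ S, M.rank ≤ 2) (h2 : ∃ M ∈ S, 2 ≤ M.rank)
    (h3 : ∀ W : Submodule (ZMod 2) (Matrix (Fin n) (Fin p) (ZMod 2)),
      (∀ M ∈ W, M.rank ≤ 2) → S ≤ W → ∀ N ∈ W, N ∈ S) : IsMaxUrk2 S := by
  obtain ⟨M, hM, hM2⟩ := h2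
  exact ⟨urk_eq_two_iff.2 ⟨h1, M, hM, le_antisymm (h1 M hM) hM2⟩,
    fun W hW hSW => le_antisymm (h3 W (urk_eq_two_iff.1 hW).1 hSW) hSW⟩

theorem exists_two_ne {p : ℕ} (hp : 3 ≤ p) (j : Fin p) : ∃ k l : Fin p, k ≠ l ∧ k ≠ j ∧ l ≠ j := by
  by_cases h0 : (j : ℕ) = 0
  · exact ⟨⟨1, by omega⟩, ⟨2, by omega⟩, by simp [Fin.ext_iff], by simp [Fin.ext_iff, h0],
      by simp [Fin.ext_iff, h0]⟩
  by_cases h1 : (j : ℕ) = 1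
  · exact ⟨⟨0, by omega⟩, ⟨2, by omega⟩, by simp [Fin.ext_iff], by simp [Fin.ext_iff, h1],
      by simp [Fin.ext_iff, h1]⟩
  · exact ⟨⟨0, by omega⟩, ⟨1, by omega⟩, by simp [Fin.ext_iff], by simp [Fin.ext_iff]; omega,
      by simp [Fin.ext_iff]; omega⟩

theorem exists_pos_ne {p : ℕ} (hp : 3 ≤ p) (j : Fin p) : ∃ k : Fin p, 1 ≤ (k : ℕ) ∧ k ≠ j := by
  by_cases h1 : (j : ℕ) = 1
  · exact ⟨⟨2, by omega⟩, by simp, by simp [Fin.ext_iff, h1]⟩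
  · exact ⟨⟨1, by omega⟩, by simp, by simp [Fin.ext_iff]; omega⟩

theorem isMax_Rst_two_zero {n p : ℕ} (hn : 3 ≤ n) (hp : 3 ≤ p) :
    IsMaxUrk2 (Rst (ZMod 2) n p 2 0) := by
  let z : Fin n := ⟨0, by omega⟩
  let o : Fin n := ⟨1, by omega⟩
  have hzo : z ≠ o := by simp [z, o]
  refine isMaxUrk2_of (fun M hM => ?_) ?_ fun W hW hS N hN i j hi _ => ?_
  · refine rank_le_two_of_eq_add (fun i => if i = z then 1 else 0) (fun i => if i = o then 1 else 0)
      (M z) (M o) fun i j => ?_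
    by_cases h0 : i = z
    · subst h0; simp [hzo]
    by_cases h1 : i = o
    · subst h1; simp [hzo.symm]
    simp only [h0, h1, if_false, zero_mul, add_zero]
    exact hM i j (by simp only [z, o, Fin.ext_iff] at h0 h1; omega) (Nat.zero_le _)
  · refine ⟨inc n 2 * (1 : Matrix (Fin 2) (Fin 2) (ZMod 2)) * (inc p 2)ᵀ, fun i j hi _ => ?_,
      two_le_rank (Fin.castLE (by omega)) (Fin.castLE (by omega))
        (by rw [inc_sand_submatrix (by omega) (by omega)]; simp)⟩
    rw [inc_sand_apply, dif_neg (by omega)]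
  · obtain ⟨k, l, hkl, hk, hl⟩ := exists_two_ne hp j
    -- The prescribed entries make this minor equal to `N i j`.
    have h := minor_expand (hW _ (prescribe_mem hS hN fun a b =>
      if (a = z ∧ b = k) ∨ (a = o ∧ b = l) then 1 else 0)) z o i k l j
    simpa [hzo, hzo.symm, hi, hkl, hkl.symm, hk.symm, hl.symm, z, o] using h

theorem isMax_Rst_zero_two {n p : ℕ} (hn : 3 ≤ n) (hp : 3 ≤ p) :
    IsMaxUrk2 (Rst (ZMod 2) n p 0 2) := by
  let z : Fin p := ⟨0, by omega⟩
  let o : Fin p := ⟨1, by omega⟩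
  have hzo : z ≠ o := by simp [z, o]
  refine isMaxUrk2_of (fun M hM => ?_) ?_ fun W hW hS N hN i j _ hj => ?_
  · refine rank_le_two_of_eq_add (fun i => M i z) (fun i => M i o)
      (fun j => if j = z then 1 else 0) (fun j => if j = o then 1 else 0) fun i j => ?_
    by_cases h0 : j = z
    · subst h0; simp [hzo]
    by_cases h1 : j = o
    · subst h1; simp [hzo.symm]
    simp only [h0, h1, if_false, mul_zero, add_zero]
    exact hM i j (Nat.zero_le _) (by simp only [z, o, Fin.ext_iff] at h0 h1; omega)
  · refine ⟨inc n 2 * (1 : Matrix (Fin 2) (Fin 2) (ZMod 2)) * (inc p 2)ᵀ, fun i j _ hj => ?_,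
      two_le_rank (Fin.castLE (by omega)) (Fin.castLE (by omega))
        (by rw [inc_sand_submatrix (by omega) (by omega)]; simp)⟩
    rw [inc_sand_apply, dif_neg (by omega)]
  · obtain ⟨k, l, hkl, hk, hl⟩ := exists_two_ne hn i
    -- The prescribed entries make this minor equal to `N i j`.
    have h := minor_expand (hW _ (prescribe_mem hS hN fun a b =>
      if (b = z ∧ a = k) ∨ (b = o ∧ a = l) then 1 else 0)) k l i z o j
    simpa [hzo, hzo.symm, hj, hkl, hkl.symm, hk.symm, hl.symm, z, o] using h

theorem isMax_Rst_one_one {n p : ℕ} (hn : 3 ≤ n) (hp : 3 ≤ p) :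
    IsMaxUrk2 (Rst (ZMod 2) n p 1 1) := by
  let z : Fin n := ⟨0, by omega⟩
  let z' : Fin p := ⟨0, by omega⟩
  have ez : ∀ i : Fin n, 1 ≤ (i : ℕ) → i ≠ z := by
    intro i hi h; simp only [h, z] at hi; omega
  have ez' : ∀ j : Fin p, 1 ≤ (j : ℕ) → j ≠ z' := by
    intro j hj h; simp only [h, z'] at hj; omega
  refine isMaxUrk2_of (fun M hM => ?_) ?_ fun W hW hS N hN i j hi hj => ?_
  · refine rank_le_two_of_eq_add (fun i => if i = z then 1 else 0)
      (fun i => if i = z then 0 else M i z') (M z) (fun j => if j = z' then 1 else 0) fun i j => ?_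
    by_cases h0 : i = z
    · simp [h0]
    by_cases h1 : j = z'
    · simp [h0, h1]
    simp only [h0, h1, if_false, zero_mul, mul_zero, add_zero]
    exact hM i j (by simp only [z, Fin.ext_iff] at h0; omega)
      (by simp only [z', Fin.ext_iff] at h1; omega)
  · refine ⟨inc n 2 * (!![0, 1; 1, 0] : Matrix (Fin 2) (Fin 2) (ZMod 2)) * (inc p 2)ᵀ, fun i j hi hj => ?_,
      two_le_rank (Fin.castLE (by omega)) (Fin.castLE (by omega))
        (by rw [inc_sand_submatrix (by omega) (by omega)]; simp)⟩
    rw [inc_sand_apply]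
    split_ifs with h
    · have h1 : (⟨i, h.1⟩ : Fin 2) = 1 := by simp only [Fin.ext_iff]; simp; omega
      have h2 : (⟨j, h.2⟩ : Fin 2) = 1 := by simp only [Fin.ext_iff]; simp; omega
      rw [h1, h2]; rfl
    · rfl
  · obtain ⟨i', hi', hne⟩ := exists_pos_ne hn i
    obtain ⟨j', hj', hne'⟩ := exists_pos_ne hp j
    -- The prescribed entries make this minor equal to `N i j`.
    have h := minor_expand (hW _ (prescribe_mem hS hN fun a b =>
      if (a = z ∧ b = j') ∨ (a = i' ∧ b = z') then 1 else 0)) z i i' z' j j'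
    have hz : (z : ℕ) = 0 := rfl
    have hz' : (z' : ℕ) = 0 := rfl
    simpa [ez i hi, ez i' hi', ez' j hj, ez' j' hj', (ez i' hi').symm, (ez' j' hj').symm, hi, hj,
      hi', hj', hne.symm, hne'.symm, hz, hz'] using h

theorem rank_le_two_of_det {A : Matrix (Fin 3) (Fin 3) (ZMod 2)} (h : A.det = 0) : A.rank ≤ 2 := by
  by_contra hr
  have h3 : A.rank = 3 := by have := A.rank_le_width; omega
  have hu := Matrix.mulVec_injective_iff_isUnit.1 (mulVec_injective_of_rank h3)
  rw [Matrix.isUnit_iff_isUnit_det, h] at hu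
  exact not_isUnit_zero hu

/-- Maximality of the embedding of `W₀`, given that `W₀` contains a multiple `R H` of a rigid set
and that no matrix outside `W₀` can be added to it. -/
theorem isMax_embed {n p : ℕ} (hn : 3 ≤ n) (hp : 3 ≤ p)
    {W₀ : Submodule (ZMod 2) (Matrix (Fin 3) (Fin 3) (ZMod 2))}
    {R : Set (Matrix (Fin 3) (Fin 3) (ZMod 2))} (hR : Rigid R)
    {H : Matrix (Fin 3) (Fin 3) (ZMod 2)} (hH : IsUnit H) (hRW : ∀ B ∈ R, B * H ∈ W₀)
    (hdet : ∀ A ∈ W₀, A.det = 0)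
    (h2 : ∃ A ∈ W₀, ∃ r c : Fin 2 → Fin 3, (A.submatrix r c).det ≠ 0)
    (hsat : ∀ A, (∀ B ∈ W₀, (A + B).det = 0) → A ∈ W₀) :
    IsMaxUrk2 (embed n p hn hp W₀) := by
  refine isMaxUrk2_of (fun M hM => ?_) ?_ fun W hW hS N hN => ?_
  · obtain ⟨A, hA, rfl⟩ := (mem_embed_iff hn hp W₀ M).1 hM
    exact (rank_sand_le _ _ _).trans (rank_le_two_of_det (hdet A hA))
  · obtain ⟨A, hA, r, c, hrc⟩ := h2
    refine ⟨_, (mem_embed_iff hn hp W₀ _).2 ⟨A, hA, rfl⟩,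
      two_le_rank (Fin.castLE hn ∘ r) (Fin.castLE hp ∘ c) ?_⟩
    rwa [← Matrix.submatrix_submatrix, inc_sand_submatrix hn hp]
  · have hX : (H * (inc p 3)ᵀ).rank = 3 :=
      rank_unit_mul (by rw [Matrix.rank_transpose, rank_inc hp]) hH
    obtain ⟨A, hA⟩ := hR.exists_eq_sand hn hp hW (rank_inc hn) hX
      (fun B hB => hS ((mem_embed_iff hn hp W₀ _).2
        ⟨_, hRW B hB, by simp only [Matrix.mul_assoc]⟩)) hN
    have hA' : N = inc n 3 * (A * H) * (inc p 3)ᵀ := by rw [hA]; simp only [Matrix.mul_assoc]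
    refine (mem_embed_iff hn hp W₀ N).2 ⟨_, hsat _ fun B hB => ?_, hA'⟩
    have h := det_minor_eq_zero (hW _ (W.add_mem hN (hS ((mem_embed_iff hn hp W₀ _).2
      ⟨B, hB, rfl⟩)))) (Fin.castLE hn) (Fin.castLE hp)
    rwa [hA', ← Matrix.add_mul, ← Matrix.mul_add, inc_sand_submatrix hn hp] at h

theorem isMax_embed_J3 {n p : ℕ} (hn : 3 ≤ n) (hp : 3 ≤ p) : IsMaxUrk2 (embed n p hn hp J3) := by
  refine isMax_embed hn hp rigid_dg isUnit_one ?_ (fun A hA => ?_) ?_ fun A hA => ?_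
  · rintro _ ⟨r, s, rfl⟩
    rw [Matrix.mul_one, mem_J3_iff]
    simp [dg]
    generalize r + s = x
    revert x; decide
  · rw [mem_J3_iff] at hA
    obtain ⟨h0, h1, h2, h3⟩ := hA
    rw [Matrix.det_fin_three, h1, h2, h3]
    generalize A 0 0 = x at *
    generalize A 1 1 = y at *
    generalize A 2 2 = z at *
    simp
    clear * - h0
    revert x y z; decide
  · exact ⟨dg 1 1, by rw [mem_J3_iff]; simp [dg]; decide, ![0, 1], ![0, 1], by
      rw [Matrix.det_fin_two]; simp [dg]⟩
  · have key : ∀ t a b c : ZMod 2,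
        (∀ x y u v w : ZMod 2, (!![x, u, v; a, y, w; b, c, x + y + t]).det = 0) →
          t = 0 ∧ a = 0 ∧ b = 0 ∧ c = 0 := by
      simp only [Matrix.det_fin_three]
      simp
      decide
    rw [mem_J3_iff]
    refine key _ _ _ _ fun x y u v w => ?_
    rw [← hA (!![x + A 0 0, u + A 0 1, v + A 0 2; 0, y + A 1 1, w + A 1 2; 0, 0,
      x + A 0 0 + (y + A 1 1)]) (by rw [mem_J3_iff]; simp; clear * -; grind)]
    congr 1
    ext i j
    fin_cases i <;> fin_cases j <;> simp <;> clear * - <;> grind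

theorem isMax_embed_Mata3 {n p : ℕ} (hn : 3 ≤ n) (hp : 3 ≤ p) :
    IsMaxUrk2 (embed n p hn hp Mata3) := by
  refine isMax_embed hn hp rigid_alt isUnit_one ?_ (fun A hA => ?_) ?_ fun A hA => ?_
  · rintro _ ⟨x, y, z, rfl⟩
    rw [Matrix.mul_one, mem_Mata3_iff]
    simp [alt]
  · rw [mem_Mata3_iff] at hA
    obtain ⟨h0, h1, h2, h3, h4, h5⟩ := hA
    rw [Matrix.det_fin_three, h0, h1, h2, h3, h4, h5]
    clear * -
    grind
  · exact ⟨alt 1 0 0, by rw [mem_Mata3_iff]; simp [alt], ![0, 1], ![0, 1], by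
      rw [Matrix.det_fin_two]; simp [alt]⟩
  · have key : ∀ x y z a b c : ZMod 2,
        (∀ u v w : ZMod 2, (!![x, u, v; a + u, y, w; b + v, c + w, z]).det = 0) →
          x = 0 ∧ y = 0 ∧ z = 0 ∧ a = 0 ∧ b = 0 ∧ c = 0 := by
      simp only [Matrix.det_fin_three]
      simp
      decide
    have h := key (A 0 0) (A 1 1) (A 2 2) (A 0 1 + A 1 0) (A 0 2 + A 2 0) (A 1 2 + A 2 1)
      fun u v w => by
        rw [← hA (alt (u + A 0 1) (v + A 0 2) (w + A 1 2))
          (by rw [mem_Mata3_iff]; simp [alt])]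
        congr 1
        ext i j
        fin_cases i <;> fin_cases j <;> simp [alt] <;> clear * - <;> grind
    rw [mem_Mata3_iff]
    exact ⟨h.1, h.2.1, h.2.2.1, F2_eq_of_add h.2.2.2.1, F2_eq_of_add h.2.2.2.2.1,
      F2_eq_of_add h.2.2.2.2.2⟩

theorem isMax_embed_V3 {n p : ℕ} (hn : 3 ≤ n) (hp : 3 ≤ p) : IsMaxUrk2 (embed n p hn hp V3) := by
  refine isMax_embed hn hp rigid_dg (H := !![0, 1, 0; 0, 0, 1; 1, 0, 0])
    ((Matrix.isUnit_iff_isUnit_det _).2 (by simp [Matrix.det_fin_three])) ?_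
    (fun A hA => ?_) ?_ fun A hA => ?_
  · rintro _ ⟨r, s, rfl⟩
    rw [mem_V3_iff]
    simp only [Matrix.mul_apply, Fin.sum_univ_three]
    simp [dg]
    generalize r + s = x
    revert x; decide
  · rw [mem_V3_iff] at hA
    obtain ⟨h0, h1, h2, h3, h4⟩ := hA
    rw [Matrix.det_fin_three, h0, h1, h2]
    generalize A 0 1 = a at *
    generalize A 1 2 = b at *
    generalize A 2 0 = c at *
    generalize A 2 1 = d at *
    generalize A 1 0 = e at *
    generalize A 0 2 = f at *
    clear * - h3 h4
    revert a b c d e f; decide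
  · exact ⟨!![0, 1, 0; 0, 0, 1; 0, 0, 0], by rw [mem_V3_iff]; simp; decide, ![0, 1], ![1, 2], by
      rw [Matrix.det_fin_two]; simp⟩
  · have key : ∀ x y z s t : ZMod 2,
        (∀ u v w r : ZMod 2, (!![x, u, v; w, y, r; u + r + s, v + w + t, z]).det = 0) →
          x = 0 ∧ y = 0 ∧ z = 0 ∧ s = 0 ∧ t = 0 := by
      simp only [Matrix.det_fin_three]
      simp
      decide
    rw [mem_V3_iff]
    refine key _ _ _ _ _ fun u v w r => ?_
    rw [← hA (!![0, u + A 0 1, v + A 0 2; w + A 1 0, 0, r + A 1 2;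
      u + A 0 1 + (r + A 1 2), v + A 0 2 + (w + A 1 0), 0])
      (by rw [mem_V3_iff]; simp; clear * -; grind)]
    congr 1
    ext i j
    fin_cases i <;> fin_cases j <;> simp <;> clear * - <;> grind

theorem isMax_maxList {n p : ℕ} (hn : 3 ≤ n) (hp : 3 ≤ p) :
    ∀ S ∈ maxList n p hn hp, IsMaxUrk2 S := by
  simp only [maxList, List.forall_mem_cons]
  exact ⟨isMax_Rst_two_zero hn hp, isMax_Rst_zero_two hn hp, isMax_Rst_one_one hn hp,
    isMax_embed_J3 hn hp, isMax_embed_Mata3 hn hp, isMax_embed_V3 hn hp, by simp⟩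

/-! ### The six spaces are pairwise inequivalent -/

/-- `V` contains all matrices with column space in some fixed line; a property invariant under
equivalence. -/
def HasRow {n p : ℕ} (V : Submodule (ZMod 2) (Matrix (Fin n) (Fin p) (ZMod 2))) : Prop :=
  ∃ u : Fin n → ZMod 2, u ≠ 0 ∧ ∀ q : Fin p → ZMod 2, Matrix.vecMulVec u q ∈ V

/-- `V` contains all matrices with row space in some fixed line; a property invariant under
equivalence. -/
def HasCol {n p : ℕ} (V : Submodule (ZMod 2) (Matrix (Fin n) (Fin p) (ZMod 2))) : Prop :=
  ∃ q : Fin p → ZMod 2, q ≠ 0 ∧ ∀ u : Fin n → ZMod 2, Matrix.vecMulVec u q ∈ V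

theorem MatEquiv.fits {n p : ℕ} {S T : Submodule (ZMod 2) (Matrix (Fin n) (Fin p) (ZMod 2))}
    (h : MatEquiv (ZMod 2) S T) : Fits S T := by
  obtain ⟨P, Q, hP, hQ, h⟩ := h
  refine ⟨P, Q, hP, hQ, fun M hM => ?_⟩
  rw [← SetLike.mem_coe, h]
  exact ⟨M, hM, rfl⟩

theorem MatEquiv.fits_symm {n p : ℕ}
    {S T : Submodule (ZMod 2) (Matrix (Fin n) (Fin p) (ZMod 2))}
    (h : MatEquiv (ZMod 2) S T) : Fits T S := by
  obtain ⟨P, Q, hP, hQ, h⟩ := h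
  obtain ⟨P', hP'⟩ := hP.exists_left_inv
  obtain ⟨Q', hQ'⟩ := hQ.exists_right_inv
  refine ⟨P', Q', IsUnit.of_mul_eq_one _ hP', IsUnit.of_mul_eq_one_right _ hQ', fun M hM => ?_⟩
  rw [← SetLike.mem_coe, h] at hM
  obtain ⟨N, hN, rfl⟩ := hM
  have : P' * (P * N * Q) * Q' = N := by
    calc P' * (P * N * Q) * Q' = (P' * P) * N * (Q * Q') := by simp only [Matrix.mul_assoc]
      _ = N := by rw [hP', hQ', Matrix.one_mul, Matrix.mul_one]
  rw [this]
  exact hN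

theorem sand_vecMulVec {n p : ℕ} (P : Matrix (Fin n) (Fin n) (ZMod 2))
    (Q : Matrix (Fin p) (Fin p) (ZMod 2)) (u : Fin n → ZMod 2) (q : Fin p → ZMod 2) :
    P * Matrix.vecMulVec u q * Q = Matrix.vecMulVec (P *ᵥ u) (q ᵥ* Q) := by
  rw [Matrix.mul_vecMulVec, Matrix.vecMulVec_mul]

theorem Fits.hasRow {n p : ℕ} {S T : Submodule (ZMod 2) (Matrix (Fin n) (Fin p) (ZMod 2))}
    (h : Fits S T) (hS : HasRow S) : HasRow T := by
  obtain ⟨P, Q, hP, hQ, h⟩ := h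
  obtain ⟨u, hu, hS⟩ := hS
  obtain ⟨Q', hQ'⟩ := hQ.exists_left_inv
  refine ⟨P *ᵥ u, fun h0 => hu ?_, fun q => ?_⟩
  · exact Matrix.mulVec_injective_of_isUnit hP (by rw [h0, Matrix.mulVec_zero])
  · have := h _ (hS (q ᵥ* Q'))
    rwa [sand_vecMulVec, Matrix.vecMul_vecMul, hQ', Matrix.vecMul_one] at this

theorem Fits.hasCol {n p : ℕ} {S T : Submodule (ZMod 2) (Matrix (Fin n) (Fin p) (ZMod 2))}
    (h : Fits S T) (hS : HasCol S) : HasCol T := by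
  obtain ⟨P, Q, hP, hQ, h⟩ := h
  obtain ⟨q, hq, hS⟩ := hS
  obtain ⟨P', hP'⟩ := hP.exists_right_inv
  refine ⟨q ᵥ* Q, fun h0 => hq ?_, fun u => ?_⟩
  · exact Matrix.vecMul_injective_of_isUnit hQ (h0.trans (Matrix.zero_vecMul Q).symm)
  · have := h _ (hS (P' *ᵥ u))
    rwa [sand_vecMulVec, Matrix.mulVec_mulVec, hP', Matrix.one_mulVec] at this

theorem hasRow_Rst {n p s t : ℕ} (hn : 3 ≤ n) (hs : 0 < s) : HasRow (Rst (ZMod 2) n p s t) := by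
  refine ⟨fun i => if (i : ℕ) = 0 then 1 else 0, fun h => ?_, fun q i j hi _ => ?_⟩
  · simpa using congrFun h ⟨0, by omega⟩
  · have : (i : ℕ) ≠ 0 := by omega
    simp [Matrix.vecMulVec_apply, this]

theorem hasCol_Rst {n p s t : ℕ} (hp : 3 ≤ p) (ht : 0 < t) : HasCol (Rst (ZMod 2) n p s t) := by
  refine ⟨fun j => if (j : ℕ) = 0 then 1 else 0, fun h => ?_, fun u i j _ hj => ?_⟩
  · simpa using congrFun h ⟨0, by omega⟩
  · have : (j : ℕ) ≠ 0 := by omega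
    simp [Matrix.vecMulVec_apply, this]

theorem not_hasRow_Rst {n p : ℕ} (hp : 3 ≤ p) : ¬ HasRow (Rst (ZMod 2) n p 0 2) := by
  rintro ⟨u, hu, h⟩
  refine hu (funext fun i => ?_)
  simpa [Matrix.vecMulVec_apply] using h (fun _ => 1) i ⟨2, by omega⟩ (Nat.zero_le _) le_rfl

theorem not_hasCol_Rst {n p : ℕ} (hn : 3 ≤ n) : ¬ HasCol (Rst (ZMod 2) n p 2 0) := by
  rintro ⟨q, hq, h⟩
  refine hq (funext fun j => ?_)
  simpa [Matrix.vecMulVec_apply] using h (fun _ => 1) ⟨2, by omega⟩ j le_rfl (Nat.zero_le _)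

theorem not_hasRow_embed {n p : ℕ} (hn : 3 ≤ n) (hp : 3 ≤ p)
    {W : Submodule (ZMod 2) (Matrix (Fin 3) (Fin 3) (ZMod 2))} (q : Fin 3 → ZMod 2)
    (hW : ∀ u : Fin 3 → ZMod 2, Matrix.vecMulVec u q ∈ W → u = 0) :
    ¬ HasRow (embed n p hn hp W) := by
  rintro ⟨u, hu, h⟩
  refine hu (funext fun i => ?_)
  by_cases hi : (i : ℕ) < 3
  · have h1 := (h fun j => if hj : (j : ℕ) < 3 then q ⟨j, hj⟩ else 0).1
    have h2 : (Matrix.vecMulVec u (fun j : Fin p => if hj : (j : ℕ) < 3 then q ⟨j, hj⟩ else 0)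
        ).submatrix (Fin.castLE hn) (Fin.castLE hp) =
        Matrix.vecMulVec (fun a => u (Fin.castLE hn a)) q := by
      ext a b
      simp [Matrix.vecMulVec_apply]
    rw [h2] at h1
    exact congrFun (hW _ h1) ⟨i, hi⟩
  · have := (h fun _ => 1).2 i ⟨0, by omega⟩ (Or.inl (by omega))
    simpa [Matrix.vecMulVec_apply] using this

theorem not_hasCol_embed {n p : ℕ} (hn : 3 ≤ n) (hp : 3 ≤ p)
    {W : Submodule (ZMod 2) (Matrix (Fin 3) (Fin 3) (ZMod 2))} (u : Fin 3 → ZMod 2)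
    (hW : ∀ q : Fin 3 → ZMod 2, Matrix.vecMulVec u q ∈ W → q = 0) :
    ¬ HasCol (embed n p hn hp W) := by
  rintro ⟨q, hq, h⟩
  refine hq (funext fun j => ?_)
  by_cases hj : (j : ℕ) < 3
  · have h1 := (h fun i => if hi : (i : ℕ) < 3 then u ⟨i, hi⟩ else 0).1
    have h2 : (Matrix.vecMulVec (fun i : Fin n => if hi : (i : ℕ) < 3 then u ⟨i, hi⟩ else 0) q
        ).submatrix (Fin.castLE hn) (Fin.castLE hp) =
        Matrix.vecMulVec u (fun b => q (Fin.castLE hp b)) := by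
      ext a b
      simp [Matrix.vecMulVec_apply]
    rw [h2] at h1
    exact congrFun (hW _ h1) ⟨j, hj⟩
  · have := (h fun _ => 1).2 ⟨0, by omega⟩ j (Or.inr (by omega))
    simpa [Matrix.vecMulVec_apply] using this

theorem not_hasRow_J3 {n p : ℕ} (hn : 3 ≤ n) (hp : 3 ≤ p) : ¬ HasRow (embed n p hn hp J3) :=
  not_hasRow_embed hn hp ![1, 0, 0] fun u h => by
    rw [mem_J3_iff] at h
    simp [Matrix.vecMulVec_apply] at h
    ext i; fin_cases i <;> simp [h]

theorem not_hasCol_J3 {n p : ℕ} (hn : 3 ≤ n) (hp : 3 ≤ p) : ¬ HasCol (embed n p hn hp J3) :=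
  not_hasCol_embed hn hp ![0, 0, 1] fun u h => by
    rw [mem_J3_iff] at h
    simp [Matrix.vecMulVec_apply] at h
    ext i; fin_cases i <;> simp [h]

theorem not_hasRow_Mata3 {n p : ℕ} (hn : 3 ≤ n) (hp : 3 ≤ p) :
    ¬ HasRow (embed n p hn hp Mata3) :=
  not_hasRow_embed hn hp ![1, 1, 1] fun u h => by
    rw [mem_Mata3_iff] at h
    simp [Matrix.vecMulVec_apply] at h
    ext i; fin_cases i <;> simp [h]

theorem not_hasCol_Mata3 {n p : ℕ} (hn : 3 ≤ n) (hp : 3 ≤ p) :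
    ¬ HasCol (embed n p hn hp Mata3) :=
  not_hasCol_embed hn hp ![1, 1, 1] fun u h => by
    rw [mem_Mata3_iff] at h
    simp [Matrix.vecMulVec_apply] at h
    ext i; fin_cases i <;> simp [h]

theorem not_hasRow_V3 {n p : ℕ} (hn : 3 ≤ n) (hp : 3 ≤ p) : ¬ HasRow (embed n p hn hp V3) :=
  not_hasRow_embed hn hp ![1, 1, 1] fun u h => by
    rw [mem_V3_iff] at h
    simp [Matrix.vecMulVec_apply] at h
    ext i; fin_cases i <;> simp [h]

theorem not_hasCol_V3 {n p : ℕ} (hn : 3 ≤ n) (hp : 3 ≤ p) : ¬ HasCol (embed n p hn hp V3) :=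
  not_hasCol_embed hn hp ![1, 1, 1] fun u h => by
    rw [mem_V3_iff] at h
    simp [Matrix.vecMulVec_apply] at h
    ext i; fin_cases i <;> simp [h]

/-- Comparison of cardinalities: `f` parametrizes members of `W₁` by `a` bits, and `g` determines
the members of `W₂` by `b` bits. -/
theorem le_of_fits_embed {n p a b : ℕ} (hn : 3 ≤ n) (hp : 3 ≤ p)
    {W₁ W₂ : Submodule (ZMod 2) (Matrix (Fin 3) (Fin 3) (ZMod 2))}
    (h : Fits (embed n p hn hp W₁) (embed n p hn hp W₂))
    (f : (Fin a → ZMod 2) → Matrix (Fin 3) (Fin 3) (ZMod 2)) (hf : Function.Injective f)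
    (hfW : ∀ x, f x ∈ W₁) (g : Matrix (Fin 3) (Fin 3) (ZMod 2) → (Fin b → ZMod 2))
    (hg : ∀ A ∈ W₂, ∀ B ∈ W₂, g A = g B → A = B) : a ≤ b := by
  obtain ⟨P, Q, hP, hQ, h⟩ := h
  have h' : ∀ x, ∃ A ∈ W₂, P * (inc n 3 * f x * (inc p 3)ᵀ) * Q = inc n 3 * A * (inc p 3)ᵀ :=
    fun x => (mem_embed_iff hn hp W₂ _).1 (h _ ((mem_embed_iff hn hp W₁ _).2 ⟨f x, hfW x, rfl⟩))
  choose k hk hkf using h'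
  have hinj : Function.Injective fun x => g (k x) := by
    intro x y hxy
    have h1 := hg _ (hk x) _ (hk y) hxy
    have h2 := hkf x
    rw [h1, ← hkf y] at h2
    have h3 := congrArg (fun M => M.submatrix (Fin.castLE hn) (Fin.castLE hp))
      (sand_cancel hP hQ h2)
    simp only [inc_sand_submatrix hn hp] at h3
    exact hf h3
  have hc := Fintype.card_le_of_injective _ hinj
  simp only [Fintype.card_fun, ZMod.card, Fintype.card_fin] at hc
  exact (Nat.pow_le_pow_iff_right (by norm_num)).1 hc

/-- The members of `J3`, by their five free entries. -/
def ofBitsJ3 (x : Fin 5 → ZMod 2) : Matrix (Fin 3) (Fin 3) (ZMod 2) :=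
  !![x 0, x 1, x 2; 0, x 3, x 4; 0, 0, x 0 + x 3]

theorem ofBitsJ3_injective : Function.Injective ofBitsJ3 := fun x y h => by
  have e := fun i j => congrFun (congrFun h i) j
  ext i
  fin_cases i
  exacts [e 0 0, e 0 1, e 0 2, e 1 1, e 1 2]

theorem ofBitsJ3_mem (x : Fin 5 → ZMod 2) : ofBitsJ3 x ∈ J3 := by
  rw [mem_J3_iff]
  simp [ofBitsJ3]
  grind

theorem bits_Mata3 {A B : Matrix (Fin 3) (Fin 3) (ZMod 2)} (hA : A ∈ Mata3) (hB : B ∈ Mata3)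
    (h : ![A 0 1, A 0 2, A 1 2] = ![B 0 1, B 0 2, B 1 2]) : A = B := by
  rw [mem_Mata3_iff] at hA hB
  have h0 : A 0 1 = B 0 1 := congrFun h 0
  have h1 : A 0 2 = B 0 2 := congrFun h 1
  have h2 : A 1 2 = B 1 2 := congrFun h 2
  ext i j
  fin_cases i <;> fin_cases j <;> simp <;> grind

theorem bits_V3 {A B : Matrix (Fin 3) (Fin 3) (ZMod 2)} (hA : A ∈ V3) (hB : B ∈ V3)
    (h : ![A 0 1, A 1 2, A 1 0, A 0 2] = ![B 0 1, B 1 2, B 1 0, B 0 2]) : A = B := by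
  rw [mem_V3_iff] at hA hB
  have h0 : A 0 1 = B 0 1 := congrFun h 0
  have h1 : A 1 2 = B 1 2 := congrFun h 1
  have h2 : A 1 0 = B 1 0 := congrFun h 2
  have h3 : A 0 2 = B 0 2 := congrFun h 3
  ext i j
  fin_cases i <;> fin_cases j <;> simp <;> grind

theorem not_fits_J3_Mata3 {n p : ℕ} (hn : 3 ≤ n) (hp : 3 ≤ p) :
    ¬ Fits (embed n p hn hp J3) (embed n p hn hp Mata3) := fun h =>
  absurd (le_of_fits_embed hn hp h ofBitsJ3 ofBitsJ3_injective ofBitsJ3_mem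
    (fun A => ![A 0 1, A 0 2, A 1 2]) fun _ hA _ hB => bits_Mata3 hA hB) (by norm_num)

theorem not_fits_J3_V3 {n p : ℕ} (hn : 3 ≤ n) (hp : 3 ≤ p) :
    ¬ Fits (embed n p hn hp J3) (embed n p hn hp V3) := fun h =>
  absurd (le_of_fits_embed hn hp h ofBitsJ3 ofBitsJ3_injective ofBitsJ3_mem
    (fun A => ![A 0 1, A 1 2, A 1 0, A 0 2]) fun _ hA _ hB => bits_V3 hA hB) (by norm_num)

/-- The members of `V3`, by their four free entries. -/
def ofBitsV3 (x : Fin 4 → ZMod 2) : Matrix (Fin 3) (Fin 3) (ZMod 2) :=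
  !![0, x 0, x 3; x 2, 0, x 1; x 0 + x 1, x 2 + x 3, 0]

theorem not_fits_V3_Mata3 {n p : ℕ} (hn : 3 ≤ n) (hp : 3 ≤ p) :
    ¬ Fits (embed n p hn hp V3) (embed n p hn hp Mata3) := fun h => by
  refine absurd (le_of_fits_embed hn hp h ofBitsV3 (fun x y h => ?_) (fun x => ?_)
    (fun A => ![A 0 1, A 0 2, A 1 2]) fun _ hA _ hB => bits_Mata3 hA hB) (by norm_num)
  · have e := fun i j => congrFun (congrFun h i) j
    ext i
    fin_cases i
    exacts [e 0 1, e 1 2, e 1 0, e 0 2]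
  · rw [mem_V3_iff]
    simp [ofBitsV3]
    clear * -
    grind

theorem pairwise_maxList {n p : ℕ} (hn : 3 ≤ n) (hp : 3 ≤ p) :
    (maxList n p hn hp).Pairwise (fun S T => ¬ MatEquiv (ZMod 2) S T) := by
  have hr20 : HasRow (Rst (ZMod 2) n p 2 0) := hasRow_Rst hn (by norm_num)
  have hc02 : HasCol (Rst (ZMod 2) n p 0 2) := hasCol_Rst hp (by norm_num)
  have hr11 : HasRow (Rst (ZMod 2) n p 1 1) := hasRow_Rst hn (by norm_num)
  have hc11 : HasCol (Rst (ZMod 2) n p 1 1) := hasCol_Rst hp (by norm_num)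
  simp only [maxList, List.pairwise_cons, List.forall_mem_cons]
  refine ⟨⟨fun h => ?_, fun h => ?_, fun h => ?_, fun h => ?_, fun h => ?_, by simp⟩,
    ⟨fun h => ?_, fun h => ?_, fun h => ?_, fun h => ?_, by simp⟩,
    ⟨fun h => ?_, fun h => ?_, fun h => ?_, by simp⟩,
    ⟨fun h => ?_, fun h => ?_, by simp⟩, ⟨fun h => ?_, by simp⟩, by simp⟩
  · exact not_hasRow_Rst hp (h.fits.hasRow hr20)
  · exact not_hasCol_Rst hn (h.fits_symm.hasCol hc11)
  · exact not_hasRow_J3 hn hp (h.fits.hasRow hr20)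
  · exact not_hasRow_Mata3 hn hp (h.fits.hasRow hr20)
  · exact not_hasRow_V3 hn hp (h.fits.hasRow hr20)
  · exact not_hasRow_Rst hp (h.fits_symm.hasRow hr11)
  · exact not_hasCol_J3 hn hp (h.fits.hasCol hc02)
  · exact not_hasCol_Mata3 hn hp (h.fits.hasCol hc02)
  · exact not_hasCol_V3 hn hp (h.fits.hasCol hc02)
  · exact not_hasRow_J3 hn hp (h.fits.hasRow hr11)
  · exact not_hasRow_Mata3 hn hp (h.fits.hasRow hr11)
  · exact not_hasRow_V3 hn hp (h.fits.hasRow hr11)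
  · exact not_fits_J3_Mata3 hn hp h.fits
  · exact not_fits_J3_V3 hn hp h.fits
  · exact not_fits_V3_Mata3 hn hp h.fits_symm

theorem classification_of_maximal_upper_rank_two_spaces {n p : ℕ} (hn : 2 < n) (hp : 2 < p) :
    (∀ S ∈ maxList n p hn hp, IsMaxUrk2 S) ∧
    (maxList n p hn hp).Pairwise (fun S T => ¬ MatEquiv (ZMod 2) S T) ∧
    ∀ V : Submodule (ZMod 2) (Matrix (Fin n) (Fin p) (ZMod 2)),
      IsMaxUrk2 V → ∃ S ∈ maxList n p hn hp, MatEquiv (ZMod 2) V S := by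
  refine ⟨isMax_maxList hn hp, pairwise_maxList hn hp, fun V hV => ?_⟩
  obtain ⟨hV2, M, hM, hM2⟩ := urk_eq_two_iff.1 hV.1
  obtain ⟨S, hS, hfit⟩ := exists_fits hn hp hV2 hM hM2
  exact ⟨S, hS, matEquiv_of_fits hV (isMax_maxList hn hp S hS).1 hfit⟩
end

section
/- Let V be a primitive linear subspace of J3(F2) of dimension 2. Then V is equivalent to the space of all diagonal 3×3 matrices over F2 of the form diag(a, a+b, b) with a, b ∈ F2. -/
/-!
Every matrix of `J3` has diagonal `(a, a + b, b)` with `a, b ∈ F2`, so the diagonals occurring in `V`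
form a subspace of the plane of such triples.

If this subspace is the whole plane, then `V` is spanned by a matrix `A` with diagonal `(1, 1, 0)` and a
matrix `B` with diagonal `(0, 1, 1)`. The matrices `A`, `B` and `A + B` each have one-dimensional left
and right kernels; taking right kernel vectors as columns of `Q` and left kernel vectors as rows of
`P` diagonalizes `V` (`diagonalize_pair`).

Otherwise at most one nonzero diagonal occurs, and `V` is not primitive: if all diagonals lie in the
line of `(1, 1, 0)` the last row of `V` vanishes, if they lie in the line of `(0, 1, 1)` the first
column of `V` vanishes, and if `(1, 0, 1)` occurs then `V` has upper rank at least `2` whereas deleting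
the last column leaves only the first row, hence matrices of rank at most `1`.
-/

open Matrix

/-- The space of diagonal matrices `diag (a, a + b, b)` with `a, b ∈ F2`. -/
def DiagSpace : Submodule (ZMod 2) (Matrix (Fin 3) (Fin 3) (ZMod 2)) where
  carrier := {M | ∃ a b : ZMod 2, M = !![a, 0, 0; 0, a + b, 0; 0, 0, b]}
  add_mem' := by
    rintro M N ⟨a, b, rfl⟩ ⟨a', b', rfl⟩
    exact ⟨a + a', b + b', by revert a b a' b'; decide⟩
  zero_mem' := ⟨0, 0, by decide⟩
  smul_mem' := by
    rintro k M ⟨a, b, rfl⟩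
    exact ⟨k * a, k * b, by revert k a b; decide⟩

/-- Shape of the elements of `J3`, parametrized by two diagonal and the three off-diagonal entries. -/
lemma J3_eq {M : Matrix (Fin 3) (Fin 3) (ZMod 2)} (hM : M ∈ J3) :
    M = !![M 0 0, M 0 1, M 0 2; 0, M 0 0 + M 2 2, M 1 2; 0, 0, M 2 2] := by
  obtain ⟨ht, hl⟩ := hM
  have h11 : M 1 1 = M 0 0 + M 2 2 := by
    rw [Matrix.trace_fin_three] at ht
    generalize M 0 0 = a at *
    generalize M 1 1 = b at *
    generalize M 2 2 = c at *
    revert a b c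
    decide
  have h10 := hl 1 0 (by decide)
  have h20 := hl 2 0 (by decide)
  have h21 := hl 2 1 (by decide)
  ext i j
  fin_cases i <;> fin_cases j <;> simp [h11, h10, h20, h21]

/-- The columns of the right factor span the right kernels of `B`, `A + B`, `A`, and the rows of the
left factor span their left kernels. -/
lemma diagonalize_pair (a b c p q r : ZMod 2) :
    !![1, p, p * r + q; 0, 1, c + r; 0, 0, 1] * !![1, a, b; 0, 1, c; 0, 0, 0] *
        !![1, a + p, a * c + b; 0, 1, c; 0, 0, 1] = !![1, 0, 0; 0, 1, 0; 0, 0, 0] ∧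
      !![1, p, p * r + q; 0, 1, c + r; 0, 0, 1] * !![0, p, q; 0, 1, r; 0, 0, 1] *
        !![1, a + p, a * c + b; 0, 1, c; 0, 0, 1] = !![0, 0, 0; 0, 1, 0; 0, 0, 1] := by
  revert a b c p q r
  decide

lemma isUnit_unitriangular (x y z : ZMod 2) : IsUnit !![1, x, y; 0, 1, z; 0, 0, 1] := by
  rw [Matrix.isUnit_iff_isUnit_det, Matrix.det_fin_three]
  simp

lemma matEquiv_diagSpace {V : Submodule (ZMod 2) (Matrix (Fin 3) (Fin 3) (ZMod 2))}
    (hdim : Module.finrank (ZMod 2) V = 2) {a b c p q r : ZMod 2}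
    (hA : !![1, a, b; 0, 1, c; 0, 0, 0] ∈ V) (hB : !![0, p, q; 0, 1, r; 0, 0, 1] ∈ V) :
    MatEquiv (ZMod 2) V DiagSpace := by
  obtain ⟨hPA, hPB⟩ := diagonalize_pair a b c p q r
  have hli : LinearIndependent (ZMod 2)
      ![!![1, a, b; 0, 1, c; 0, 0, 0], !![0, p, q; 0, 1, r; 0, 0, 1]] := by
    rw [LinearIndependent.pair_iff]
    intro s t h
    have h0 := congrFun (congrFun h 0) 0
    have h2 := congrFun (congrFun h 2) 2
    simp at h0 h2
    exact ⟨h0, h2⟩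
  have hspan : Submodule.span (ZMod 2)
      {!![1, a, b; 0, 1, c; 0, 0, 0], !![0, p, q; 0, 1, r; 0, 0, 1]} = V := by
    apply Submodule.eq_of_le_of_finrank_eq
    · rw [Submodule.span_le]
      rintro M (rfl | rfl)
      exacts [hA, hB]
    · have := finrank_span_eq_card hli
      rw [hdim]
      rwa [Matrix.range_cons_cons_empty, Fintype.card_fin] at this
  refine ⟨_, _, isUnit_unitriangular p (p * r + q) (c + r),
    isUnit_unitriangular (a + p) (a * c + b) c, ?_⟩
  have key (s t : ZMod 2) :
      !![1, p, p * r + q; 0, 1, c + r; 0, 0, 1] *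
        (s • !![1, a, b; 0, 1, c; 0, 0, 0] + t • !![0, p, q; 0, 1, r; 0, 0, 1]) *
        !![1, a + p, a * c + b; 0, 1, c; 0, 0, 1] = !![s, 0, 0; 0, s + t, 0; 0, 0, t] := by
    rw [Matrix.mul_add, Matrix.add_mul, Matrix.mul_smul, Matrix.mul_smul, Matrix.smul_mul,
      Matrix.smul_mul, hPA, hPB]
    revert s t
    decide
  ext M
  constructor
  · rintro ⟨s, t, rfl⟩
    exact ⟨_, V.add_mem (V.smul_mem s hA) (V.smul_mem t hB), key s t⟩
  · rintro ⟨N, hN, rfl⟩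
    rw [← hspan] at hN
    obtain ⟨s, t, rfl⟩ := Submodule.mem_span_pair.1 hN
    exact ⟨s, t, key s t⟩

lemma not_reduced_of_last_row {V : Submodule (ZMod 2) (Matrix (Fin 3) (Fin 3) (ZMod 2))}
    (hV : V ≤ J3) (h : ∀ M ∈ V, M 2 2 = 0) : ¬ Reduced (ZMod 2) V := by
  rintro ⟨-, hspan⟩
  have hle : Submodule.span (ZMod 2)
      {y : Fin 3 → ZMod 2 | ∃ M ∈ V, ∃ x : Fin 3 → ZMod 2, M.mulVec x = y} ≤
      LinearMap.ker (LinearMap.proj 2 : (Fin 3 → ZMod 2) →ₗ[ZMod 2] ZMod 2) := by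
    rw [Submodule.span_le]
    rintro _ ⟨M, hM, x, rfl⟩
    have h0 := (hV hM).2 2 0 (by decide)
    have h1 := (hV hM).2 2 1 (by decide)
    simp [Matrix.mulVec, dotProduct, Fin.sum_univ_three, h M hM, h0, h1]
  rw [hspan] at hle
  have := hle (Submodule.mem_top (x := fun _ => 1))
  simp at this

lemma not_reduced_of_first_col {V : Submodule (ZMod 2) (Matrix (Fin 3) (Fin 3) (ZMod 2))}
    (hV : V ≤ J3) (h : ∀ M ∈ V, M 0 0 = 0) : ¬ Reduced (ZMod 2) V := by
  rintro ⟨hker, -⟩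
  have := hker (Pi.single 0 1) fun M hM => by
    have h1 := (hV hM).2 1 0 (by decide)
    have h2 := (hV hM).2 2 0 (by decide)
    ext i
    fin_cases i <;> simp [h M hM, h1, h2]
  simpa using congrFun this 0

lemma two_le_urk {V : Submodule (ZMod 2) (Matrix (Fin 3) (Fin 3) (ZMod 2))}
    (hV : V ≤ J3) {M : Matrix (Fin 3) (Fin 3) (ZMod 2)} (hM : M ∈ V)
    (h0 : M 0 0 = 1) (h2 : M 2 2 = 1) : 2 ≤ urk V := by
  have hrank : 2 ≤ M.rank := by
    have hunit : IsUnit (M.submatrix ![0, 2] ![0, 2]) := by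
      rw [Matrix.isUnit_iff_isUnit_det, Matrix.det_fin_two]
      simp [h0, h2, (hV hM).2 2 0 (by decide)]
    have := Matrix.rank_of_isUnit _ hunit
    have hle := Matrix.rank_submatrix_le M ![0, 2] ![0, 2]
    rw [Fintype.card_fin] at this
    omega
  refine hrank.trans (le_csSup ⟨3, ?_⟩ ⟨M, hM, rfl⟩)
  rintro _ ⟨N, -, rfl⟩
  simpa using N.rank_le_width

lemma rank_dropCol_le {M : Matrix (Fin 3) (Fin 3) (ZMod 2)} (hM : M ∈ J3) (h : M 1 1 = 0) :
    (dropCol M).rank ≤ 1 := by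
  have : dropCol M = Matrix.vecMulVec ![1, 0, 0] ![M 0 0, M 0 1] := by
    have h10 := hM.2 1 0 (by decide)
    have h20 := hM.2 2 0 (by decide)
    have h21 := hM.2 2 1 (by decide)
    ext i j
    change Fin 2 at j
    fin_cases i <;> fin_cases j <;>
      simp [dropCol, Matrix.vecMulVec_apply, h, h10, h20, h21]
  rw [this]
  exact Matrix.rank_vecMulVec_le _ _

theorem primitive_two_dimensional_subspace_of_J3
    (V : Submodule (ZMod 2) (Matrix (Fin 3) (Fin 3) (ZMod 2)))
    (hV : V ≤ J3) (hprim : Primitive (ZMod 2) V)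
    (hdim : Module.finrank (ZMod 2) V = 2) :
    MatEquiv (ZMod 2) V DiagSpace := by
  have shape {M} (hM : M ∈ V) := J3_eq (hV hM)
  have dich (x : ZMod 2) : x = 0 ∨ x = 1 := by revert x; decide
  by_cases hA : ∃ A ∈ V, A 0 0 = 1 ∧ A 2 2 = 0
  · obtain ⟨A, hAV, hA0, hA2⟩ := hA
    by_cases hrow : ∀ M ∈ V, M 2 2 = 0
    · exact absurd hprim.1.1 (not_reduced_of_last_row hV hrow)
    push Not at hrow
    obtain ⟨M, hMV, hM2⟩ := hrow
    replace hM2 := (dich _).resolve_left hM2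
    obtain ⟨B, hBV, hB0, hB2⟩ : ∃ B ∈ V, B 0 0 = 0 ∧ B 2 2 = 1 := by
      rcases dich (M 0 0) with h | h
      · exact ⟨M, hMV, h, hM2⟩
      · exact ⟨M + A, V.add_mem hMV hAV, by simp [h, hA0]; decide, by simp [hM2, hA2]⟩
    have eA := shape hAV
    have eB := shape hBV
    rw [hA0, hA2, add_zero] at eA
    rw [hB0, hB2, zero_add] at eB
    exact matEquiv_diagSpace hdim (eA ▸ hAV) (eB ▸ hBV)
  push Not at hA
  by_cases hcol : ∀ M ∈ V, M 0 0 = 0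
  · exact absurd hprim.1.1 (not_reduced_of_first_col hV hcol)
  push Not at hcol
  obtain ⟨C, hCV, hC0⟩ := hcol
  replace hC0 := (dich _).resolve_left hC0
  have hC2 := (dich _).resolve_left (hA C hCV hC0)
  -- A diagonal `(0, 1, 1)` added to that of `C` would give the excluded `(1, 1, 0)`.
  have hmid : ∀ M ∈ V, M 1 1 = 0 := by
    intro M hM
    have e : M 1 1 = M 0 0 + M 2 2 := by simpa using congrFun (congrFun (shape hM) 1) 1
    rcases dich (M 0 0) with h | h
    · have := hA (C + M) (V.add_mem hCV hM) (by simp [hC0, h])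
      rcases dich (M 2 2) with h' | h'
      · simp [e, h, h']
      · exact absurd (by simp [hC2, h']; decide) this
    · rw [e, h, (dich _).resolve_left (hA M hM h)]
      decide
  have hurk := two_le_urk hV hCV hC0 hC2
  refine absurd ⟨V, ⟨1, 1, isUnit_one, isUnit_one, by simp⟩, fun M hM => ?_⟩ hprim.1.2
  have := rank_dropCol_le (hV hM) (hmid M hM)
  omega
end

section
/- Let V be a primitive linear subspace of J3(F2) of dimension 3. Then V is equivalent to one and only one of the following four spaces of 3×3 matrices over F2, each parametrized by (a,b,c) ∈ F2^3: M1 = [[a,0,c],[0,a+b,0],[0,0,b]], M2 = [[a,c,0],[0,a+b,a],[0,0,b]], M3 = [[a,b,0],[0,a+b,c],[0,0,b]], M4 = [[a,c,0],[0,a+b,c],[0,0,b]]. -/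
/-!
Every matrix of `J3` is determined by its diagonal `(a, a + b, b)` and its entries above the
diagonal. Reducedness excludes that `a` or `b` vanishes identically on `V`; primitivity excludes
that `a = b` on `V` (`exists_diag_ne`). Hence `(a, b)` takes all values, and as `dim V = 3` the
space is spanned by two matrices with diagonals `(1, 1, 0)`, `(0, 1, 1)` and a nonzero strictly
upper-triangular matrix. Unitriangular row and column operations clear the entries above the
diagonal of the first two generators (`span_equiv_normalForm`), which leaves seven normal forms;
each is matched with a model space by explicit invertible matrices (`normalForm_cases`).

The model spaces are pairwise inequivalent because of three invariants: `SpaceM4` alone contains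
no matrix of rank one; among the others `SpaceM2` alone does not have two nonzero vectors `x` with
`dim (V x) ≤ 1`, and `SpaceM3` alone does not have two such row vectors.
-/

open Matrix

/-- The space of matrices `!![a, 0, c; 0, a + b, 0; 0, 0, b]`. -/
def SpaceM1 : Submodule (ZMod 2) (Matrix (Fin 3) (Fin 3) (ZMod 2)) where
  carrier := {M | ∃ a b c : ZMod 2, M = !![a, 0, c; 0, a + b, 0; 0, 0, b]}
  add_mem' := by
    rintro M N ⟨a, b, c, rfl⟩ ⟨a', b', c', rfl⟩
    exact ⟨a + a', b + b', c + c', by revert a b c a' b' c'; decide⟩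
  zero_mem' := ⟨0, 0, 0, by decide⟩
  smul_mem' := by
    rintro k M ⟨a, b, c, rfl⟩
    exact ⟨k * a, k * b, k * c, by revert k a b c; decide⟩

/-- The space of matrices `!![a, c, 0; 0, a + b, a; 0, 0, b]`. -/
def SpaceM2 : Submodule (ZMod 2) (Matrix (Fin 3) (Fin 3) (ZMod 2)) where
  carrier := {M | ∃ a b c : ZMod 2, M = !![a, c, 0; 0, a + b, a; 0, 0, b]}
  add_mem' := by
    rintro M N ⟨a, b, c, rfl⟩ ⟨a', b', c', rfl⟩
    exact ⟨a + a', b + b', c + c', by revert a b c a' b' c'; decide⟩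
  zero_mem' := ⟨0, 0, 0, by decide⟩
  smul_mem' := by
    rintro k M ⟨a, b, c, rfl⟩
    exact ⟨k * a, k * b, k * c, by revert k a b c; decide⟩

/-- The space of matrices `!![a, b, 0; 0, a + b, c; 0, 0, b]`. -/
def SpaceM3 : Submodule (ZMod 2) (Matrix (Fin 3) (Fin 3) (ZMod 2)) where
  carrier := {M | ∃ a b c : ZMod 2, M = !![a, b, 0; 0, a + b, c; 0, 0, b]}
  add_mem' := by
    rintro M N ⟨a, b, c, rfl⟩ ⟨a', b', c', rfl⟩
    exact ⟨a + a', b + b', c + c', by revert a b c a' b' c'; decide⟩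
  zero_mem' := ⟨0, 0, 0, by decide⟩
  smul_mem' := by
    rintro k M ⟨a, b, c, rfl⟩
    exact ⟨k * a, k * b, k * c, by revert k a b c; decide⟩

/-- The space of matrices `!![a, c, 0; 0, a + b, c; 0, 0, b]`. -/
def SpaceM4 : Submodule (ZMod 2) (Matrix (Fin 3) (Fin 3) (ZMod 2)) where
  carrier := {M | ∃ a b c : ZMod 2, M = !![a, c, 0; 0, a + b, c; 0, 0, b]}
  add_mem' := by
    rintro M N ⟨a, b, c, rfl⟩ ⟨a', b', c', rfl⟩
    exact ⟨a + a', b + b', c + c', by revert a b c a' b' c'; decide⟩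
  zero_mem' := ⟨0, 0, 0, by decide⟩
  smul_mem' := by
    rintro k M ⟨a, b, c, rfl⟩
    exact ⟨k * a, k * b, k * c, by revert k a b c; decide⟩

/-- Exactly one of four conditions holds. -/
def ExactlyOne4 (c₁ c₂ c₃ c₄ : Prop) : Prop :=
  (c₁ ∧ ¬c₂ ∧ ¬c₃ ∧ ¬c₄) ∨ (¬c₁ ∧ c₂ ∧ ¬c₃ ∧ ¬c₄) ∨
  (¬c₁ ∧ ¬c₂ ∧ c₃ ∧ ¬c₄) ∨ (¬c₁ ∧ ¬c₂ ∧ ¬c₃ ∧ c₄)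


/-! ### Matrix equivalence as an equivalence relation -/

/-- The ambient space of `3 × 3` matrices over `F2`. -/
abbrev Mat3 := Matrix (Fin 3) (Fin 3) (ZMod 2)

theorem MatEquiv.refl (V : Submodule (ZMod 2) Mat3) : MatEquiv (ZMod 2) V V :=
  ⟨1, 1, isUnit_one, isUnit_one, by simp⟩

theorem MatEquiv.symm {V W : Submodule (ZMod 2) Mat3} (h : MatEquiv (ZMod 2) V W) :
    MatEquiv (ZMod 2) W V := by
  obtain ⟨P, Q, ⟨P, rfl⟩, ⟨Q, rfl⟩, h⟩ := h
  refine ⟨(P⁻¹ : Mat3ˣ), (Q⁻¹ : Mat3ˣ), Units.isUnit _, Units.isUnit _, ?_⟩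
  rw [h, Set.image_image]
  have : ∀ M : Mat3, (↑P⁻¹ : Mat3) * ((P : Mat3) * M * (Q : Mat3)) * (↑Q⁻¹ : Mat3) = M := by
    intro M
    rw [mul_assoc (P : Mat3), Units.inv_mul_cancel_left, Units.mul_inv_cancel_right]
  simp only [this, Set.image_id']

theorem MatEquiv.trans {V W X : Submodule (ZMod 2) Mat3} (h : MatEquiv (ZMod 2) V W)
    (h' : MatEquiv (ZMod 2) W X) : MatEquiv (ZMod 2) V X := by
  obtain ⟨P, Q, hP, hQ, h⟩ := h
  obtain ⟨P', Q', hP', hQ', h'⟩ := h'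
  refine ⟨P' * P, Q * Q', hP'.mul hP, hQ.mul hQ', ?_⟩
  rw [h', h, Set.image_image]
  simp only [mul_assoc]

theorem matEquiv_span (A B N P Q : Mat3) (hP : IsUnit P) (hQ : IsUnit Q) :
    MatEquiv (ZMod 2) (Submodule.span (ZMod 2) {A, B, N})
      (Submodule.span (ZMod 2) {P * A * Q, P * B * Q, P * N * Q}) := by
  refine ⟨P, Q, hP, hQ, ?_⟩
  have h := Submodule.map_span
    ((LinearMap.mulRight (ZMod 2) Q).comp (LinearMap.mulLeft (ZMod 2) P)) {A, B, N}
  simp only [Set.image_insert_eq, Set.image_singleton, LinearMap.comp_apply,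
    LinearMap.mulLeft_apply, LinearMap.mulRight_apply] at h
  rw [← h]
  rfl

/-! ### Invariants separating the four model spaces -/

/-- `V` contains a matrix of rank one. -/
def HasRankOne (V : Submodule (ZMod 2) Mat3) : Prop :=
  ∃ u v : Fin 3 → ZMod 2, u ≠ 0 ∧ v ≠ 0 ∧ vecMulVec u v ∈ V

/-- There are two distinct nonzero vectors `x` for which `{M x : M ∈ V}` has dimension at
most one, i.e. (over `F2`) is contained in `{0, w}` for some `w`. -/
def TwoThinCols (V : Submodule (ZMod 2) Mat3) : Prop :=
  ∃ x y : Fin 3 → ZMod 2, x ≠ 0 ∧ y ≠ 0 ∧ x ≠ y ∧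
    (∃ w, ∀ M ∈ V, M *ᵥ x = 0 ∨ M *ᵥ x = w) ∧ (∃ w, ∀ M ∈ V, M *ᵥ y = 0 ∨ M *ᵥ y = w)

/-- The transposed version of `TwoThinCols`. -/
def TwoThinRows (V : Submodule (ZMod 2) Mat3) : Prop :=
  ∃ x y : Fin 3 → ZMod 2, x ≠ 0 ∧ y ≠ 0 ∧ x ≠ y ∧
    (∃ w, ∀ M ∈ V, x ᵥ* M = 0 ∨ x ᵥ* M = w) ∧ (∃ w, ∀ M ∈ V, y ᵥ* M = 0 ∨ y ᵥ* M = w)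

theorem mem_of_equiv {V W : Submodule (ZMod 2) Mat3} {P Q : Mat3}
    (h : (W : Set Mat3) = (fun M => P * M * Q) '' (V : Set Mat3)) {M : Mat3} (hM : M ∈ V) :
    P * M * Q ∈ W := by
  have : P * M * Q ∈ (W : Set Mat3) := h ▸ ⟨M, hM, rfl⟩
  exact this

theorem exists_of_equiv {V W : Submodule (ZMod 2) Mat3} {P Q : Mat3}
    (h : (W : Set Mat3) = (fun M => P * M * Q) '' (V : Set Mat3)) {M : Mat3} (hM : M ∈ W) :
    ∃ N ∈ V, P * N * Q = M := by
  have : M ∈ (W : Set Mat3) := hM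
  rw [h] at this
  exact this

theorem HasRankOne.equiv {V W : Submodule (ZMod 2) Mat3} (h : MatEquiv (ZMod 2) V W)
    (hV : HasRankOne V) : HasRankOne W := by
  obtain ⟨P, Q, hP, hQ, h⟩ := h
  obtain ⟨u, v, hu, hv, huv⟩ := hV
  refine ⟨P *ᵥ u, v ᵥ* Q, ?_, ?_, ?_⟩
  · intro h0
    exact hu (Matrix.mulVec_injective_iff_isUnit.mpr hP (by simpa using h0))
  · intro h0
    exact hv (Matrix.vecMul_injective_iff_isUnit.mpr hQ (by simpa using h0))
  · have := mem_of_equiv h huv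
    rwa [mul_vecMulVec, vecMulVec_mul] at this

theorem TwoThinCols.equiv {V W : Submodule (ZMod 2) Mat3} (h : MatEquiv (ZMod 2) W V)
    (hV : TwoThinCols V) : TwoThinCols W := by
  obtain ⟨P, Q, hP, hQ, h⟩ := h.symm
  obtain ⟨x, y, hx, hy, hxy, ⟨w, hw⟩, ⟨z, hz⟩⟩ := hV
  obtain ⟨x, rfl⟩ := Matrix.mulVec_surjective_iff_isUnit.mpr hQ x
  obtain ⟨y, rfl⟩ := Matrix.mulVec_surjective_iff_isUnit.mpr hQ y
  refine ⟨x, y, ?_, ?_, ?_, ⟨P *ᵥ w, ?_⟩, ⟨P *ᵥ z, ?_⟩⟩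
  · rintro rfl; simp at hx
  · rintro rfl; simp at hy
  · rintro rfl; simp at hxy
  · intro M hM
    obtain ⟨N, hN, rfl⟩ := exists_of_equiv h hM
    rw [← mulVec_mulVec, ← mulVec_mulVec]
    rcases hw N hN with h | h <;> simp [h]
  · intro M hM
    obtain ⟨N, hN, rfl⟩ := exists_of_equiv h hM
    rw [← mulVec_mulVec, ← mulVec_mulVec]
    rcases hz N hN with h | h <;> simp [h]

theorem TwoThinRows.equiv {V W : Submodule (ZMod 2) Mat3} (h : MatEquiv (ZMod 2) W V)
    (hV : TwoThinRows V) : TwoThinRows W := by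
  obtain ⟨P, Q, hP, hQ, h⟩ := h.symm
  obtain ⟨x, y, hx, hy, hxy, ⟨w, hw⟩, ⟨z, hz⟩⟩ := hV
  obtain ⟨x, rfl⟩ := Matrix.vecMul_surjective_iff_isUnit.mpr hP x
  obtain ⟨y, rfl⟩ := Matrix.vecMul_surjective_iff_isUnit.mpr hP y
  refine ⟨x, y, ?_, ?_, ?_, ⟨w ᵥ* Q, ?_⟩, ⟨z ᵥ* Q, ?_⟩⟩
  · rintro rfl; simp at hx
  · rintro rfl; simp at hy
  · rintro rfl; simp at hxy
  · intro M hM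
    obtain ⟨N, hN, rfl⟩ := exists_of_equiv h hM
    rw [← vecMul_vecMul, ← vecMul_vecMul]
    rcases hw N hN with h | h <;> simp [h]
  · intro M hM
    obtain ⟨N, hN, rfl⟩ := exists_of_equiv h hM
    rw [← vecMul_vecMul, ← vecMul_vecMul]
    rcases hz N hN with h | h <;> simp [h]

theorem hasRankOne_M1 : HasRankOne SpaceM1 :=
  ⟨![1, 0, 0], ![0, 0, 1], by decide, by decide, 0, 0, 1, by decide⟩

theorem hasRankOne_M2 : HasRankOne SpaceM2 :=
  ⟨![1, 0, 0], ![0, 1, 0], by decide, by decide, 0, 0, 1, by decide⟩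

theorem hasRankOne_M3 : HasRankOne SpaceM3 :=
  ⟨![0, 1, 0], ![0, 0, 1], by decide, by decide, 0, 0, 1, by decide⟩

theorem not_hasRankOne_M4 : ¬ HasRankOne SpaceM4 := by
  rintro ⟨u, v, hu, hv, a, b, c, h⟩
  have e : ∀ i j, u i * v j = !![a, c, 0; 0, a + b, c; 0, 0, b] i j :=
    fun i j => congrFun (congrFun h i) j
  have h00 : u 0 * v 0 = a := e 0 0
  have h01 : u 0 * v 1 = c := e 0 1
  have h11 : u 1 * v 1 = a + b := e 1 1
  have h12 : u 1 * v 2 = c := e 1 2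
  have h22 : u 2 * v 2 = b := e 2 2
  rw [← h00, ← h22] at h11
  rw [← h01] at h12
  have aux : ∀ x y z x' y' z' : ZMod 2, x * z' = 0 ∧ y * x' = 0 ∧ z * x' = 0 ∧ z * y' = 0 ∧
      y * y' = x * x' + z * z' ∧ y * z' = x * y' →
      (x = 0 ∧ y = 0 ∧ z = 0) ∨ (x' = 0 ∧ y' = 0 ∧ z' = 0) := by decide
  rcases aux _ _ _ _ _ _ ⟨e 0 2, e 1 0, e 2 0, e 2 1, h11, h12⟩ with ⟨h, h', h''⟩ | ⟨h, h', h''⟩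
  · exact hu (by ext i; fin_cases i <;> assumption)
  · exact hv (by ext i; fin_cases i <;> assumption)

theorem twoThinCols_M1 : TwoThinCols SpaceM1 := by
  refine ⟨![1, 0, 0], ![0, 1, 0], by decide, by decide, by decide,
    ⟨![1, 0, 0], ?_⟩, ⟨![0, 1, 0], ?_⟩⟩
  all_goals
    rintro M ⟨a, b, c, rfl⟩
    revert a b c
    decide

theorem twoThinRows_M1 : TwoThinRows SpaceM1 := by
  refine ⟨![0, 1, 0], ![0, 0, 1], by decide, by decide, by decide,
    ⟨![0, 1, 0], ?_⟩, ⟨![0, 0, 1], ?_⟩⟩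
  all_goals
    rintro M ⟨a, b, c, rfl⟩
    revert a b c
    decide

theorem twoThinCols_M3 : TwoThinCols SpaceM3 := by
  refine ⟨![1, 0, 0], ![1, 1, 0], by decide, by decide, by decide,
    ⟨![1, 0, 0], ?_⟩, ⟨![1, 1, 0], ?_⟩⟩
  all_goals
    rintro M ⟨a, b, c, rfl⟩
    revert a b c
    decide

/-- The only nonzero `x` for which `{M x : M ∈ SpaceM2}` has dimension at most one is `e₁`. -/
theorem thin_M2 (x : Fin 3 → ZMod 2) (hx : x ≠ 0)
    (h : ∃ w, ∀ M ∈ SpaceM2, M *ᵥ x = 0 ∨ M *ᵥ x = w) : x = ![1, 0, 0] := by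
  obtain ⟨w, hw⟩ := h
  have hw' : ∀ a b c : ZMod 2, !![a, c, 0; 0, a + b, a; 0, 0, b] *ᵥ x = 0 ∨
      !![a, c, 0; 0, a + b, a; 0, 0, b] *ᵥ x = w := fun a b c => hw _ ⟨a, b, c, rfl⟩
  clear hw
  have aux : ∀ x w : Fin 3 → ZMod 2, x ≠ 0 →
      (∀ a b c : ZMod 2, !![a, c, 0; 0, a + b, a; 0, 0, b] *ᵥ x = 0 ∨
      !![a, c, 0; 0, a + b, a; 0, 0, b] *ᵥ x = w) → x = ![1, 0, 0] := by decide +kernel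
  exact aux x w hx hw'

/-- The only nonzero row vector `x` for which `{x M : M ∈ SpaceM3}` has dimension at most one
is `e₃`. -/
theorem thin_M3 (x : Fin 3 → ZMod 2) (hx : x ≠ 0)
    (h : ∃ w, ∀ M ∈ SpaceM3, x ᵥ* M = 0 ∨ x ᵥ* M = w) : x = ![0, 0, 1] := by
  obtain ⟨w, hw⟩ := h
  have hw' : ∀ a b c : ZMod 2, x ᵥ* !![a, b, 0; 0, a + b, c; 0, 0, b] = 0 ∨
      x ᵥ* !![a, b, 0; 0, a + b, c; 0, 0, b] = w := fun a b c => hw _ ⟨a, b, c, rfl⟩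
  clear hw
  have aux : ∀ x w : Fin 3 → ZMod 2, x ≠ 0 →
      (∀ a b c : ZMod 2, x ᵥ* !![a, b, 0; 0, a + b, c; 0, 0, b] = 0 ∨
      x ᵥ* !![a, b, 0; 0, a + b, c; 0, 0, b] = w) → x = ![0, 0, 1] := by decide +kernel
  exact aux x w hx hw'

theorem not_twoThinCols_M2 : ¬ TwoThinCols SpaceM2 := by
  rintro ⟨x, y, hx, hy, hxy, h, hthin⟩
  exact hxy ((thin_M2 x hx h).trans (thin_M2 y hy hthin).symm)

theorem not_twoThinRows_M3 : ¬ TwoThinRows SpaceM3 := by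
  rintro ⟨x, y, hx, hy, hxy, h, hthin⟩
  exact hxy ((thin_M3 x hx h).trans (thin_M3 y hy hthin).symm)

/-! ### The seven normal forms -/

/-- The space of matrices `!![a, p c, q c; 0, a + b, r c; 0, 0, b]`, presented by generators. -/
def normalForm (p q r : ZMod 2) : Submodule (ZMod 2) Mat3 :=
  Submodule.span (ZMod 2)
    {!![1, 0, 0; 0, 1, 0; 0, 0, 0], !![0, 0, 0; 0, 1, 0; 0, 0, 1], !![0, p, q; 0, 0, r; 0, 0, 0]}

theorem mem_normalForm {p q r : ZMod 2} {M : Mat3} : M ∈ normalForm p q r ↔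
    ∃ a b c : ZMod 2, !![a, c * p, c * q; 0, a + b, c * r; 0, 0, b] = M := by
  rw [normalForm, Submodule.mem_span_triple]
  have : ∀ a b c p q r : ZMod 2, a • !![1, 0, 0; 0, 1, 0; 0, 0, 0] +
      b • !![0, 0, 0; 0, 1, 0; 0, 0, 1] + c • !![0, p, q; 0, 0, r; 0, 0, 0] =
      !![a, c * p, c * q; 0, a + b, c * r; 0, 0, b] := by
    intro a b c p q r
    ext i j
    fin_cases i <;> fin_cases j <;> simp
  simp only [this]

theorem normalForm_equiv {p q r : ZMod 2} {W : Submodule (ZMod 2) Mat3}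
    (f : ZMod 2 → ZMod 2 → ZMod 2 → Mat3) (hW : ∀ M, M ∈ W ↔ ∃ a b c, M = f a b c)
    (P Q : Mat3) (hP : IsUnit P) (hQ : IsUnit Q)
    (h₁ : ∀ a b c, ∃ a' b' c' : ZMod 2, f a b c =
      P * !![a', c' * p, c' * q; 0, a' + b', c' * r; 0, 0, b'] * Q)
    (h₂ : ∀ a' b' c' : ZMod 2, ∃ a b c,
      P * !![a', c' * p, c' * q; 0, a' + b', c' * r; 0, 0, b'] * Q = f a b c) :
    MatEquiv (ZMod 2) (normalForm p q r) W := by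
  refine ⟨P, Q, hP, hQ, ?_⟩
  ext M
  simp only [SetLike.mem_coe, Set.mem_image, mem_normalForm, hW]
  constructor
  · rintro ⟨a, b, c, rfl⟩
    obtain ⟨a', b', c', h⟩ := h₁ a b c
    exact ⟨_, ⟨a', b', c', rfl⟩, h.symm⟩
  · rintro ⟨_, ⟨a', b', c', rfl⟩, rfl⟩
    exact h₂ a' b' c'

theorem isUnit_of_mul_self_four {P : Mat3} (h : P * (P * (P * P)) = 1) : IsUnit P :=
  IsUnit.of_mul_eq_one _ h

theorem normalForm_cases (p q r : ZMod 2) (h : p ≠ 0 ∨ q ≠ 0 ∨ r ≠ 0) :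
    MatEquiv (ZMod 2) (normalForm p q r) SpaceM1 ∨ MatEquiv (ZMod 2) (normalForm p q r) SpaceM2 ∨
    MatEquiv (ZMod 2) (normalForm p q r) SpaceM3 ∨
    MatEquiv (ZMod 2) (normalForm p q r) SpaceM4 := by
  have h01 : ∀ x : ZMod 2, x = 0 ∨ x = 1 := by decide
  rcases h01 p with rfl | rfl <;> rcases h01 q with rfl | rfl <;> rcases h01 r with rfl | rfl
  · simp at h
  · left
    exact normalForm_equiv _ (fun _ => Iff.rfl) !![0, 1, 0; 1, 0, 0; 0, 0, 1]
      !![0, 1, 0; 1, 0, 0; 0, 0, 1] (isUnit_of_mul_self_four (by decide))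
      (isUnit_of_mul_self_four (by decide)) (by decide +kernel) (by decide +kernel)
  · left
    exact normalForm_equiv _ (fun _ => Iff.rfl) 1 1 isUnit_one isUnit_one
      (by decide +kernel) (by decide +kernel)
  · right; right; left
    exact normalForm_equiv _ (fun _ => Iff.rfl) !![1, 1, 0; 0, 1, 0; 0, 0, 1]
      !![1, 1, 0; 0, 1, 0; 0, 0, 1] (isUnit_of_mul_self_four (by decide))
      (isUnit_of_mul_self_four (by decide)) (by decide +kernel) (by decide +kernel)
  · left
    exact normalForm_equiv _ (fun _ => Iff.rfl) !![1, 0, 0; 0, 0, 1; 0, 1, 0]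
      !![1, 0, 0; 0, 0, 1; 0, 1, 0] (isUnit_of_mul_self_four (by decide))
      (isUnit_of_mul_self_four (by decide)) (by decide +kernel) (by decide +kernel)
  · right; right; right
    exact normalForm_equiv _ (fun _ => Iff.rfl) 1 1 isUnit_one isUnit_one
      (by decide +kernel) (by decide +kernel)
  · right; left
    exact normalForm_equiv _ (fun _ => Iff.rfl) !![1, 0, 0; 0, 1, 1; 0, 0, 1]
      !![1, 0, 0; 0, 1, 1; 0, 0, 1] (isUnit_of_mul_self_four (by decide))
      (isUnit_of_mul_self_four (by decide)) (by decide +kernel) (by decide +kernel)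
  · right; right; right
    exact normalForm_equiv _ (fun _ => Iff.rfl) !![1, 0, 0; 0, 1, 1; 0, 0, 1]
      !![1, 1, 0; 0, 1, 1; 0, 0, 1] (isUnit_of_mul_self_four (by decide))
      (isUnit_of_mul_self_four (by decide)) (by decide +kernel) (by decide +kernel)

/-- Upper unitriangular row and column operations clear the entries above the diagonal of the
first two generators; they leave the entries `p₃`, `r₃` of the third generator unchanged. -/
theorem span_equiv_normalForm (p₁ q₁ r₁ p₂ q₂ r₂ p₃ q₃ r₃ : ZMod 2) :
    MatEquiv (ZMod 2)
      (Submodule.span (ZMod 2) {!![1, p₁, q₁; 0, 1, r₁; 0, 0, 0],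
        !![0, p₂, q₂; 0, 1, r₂; 0, 0, 1], !![0, p₃, q₃; 0, 0, r₃; 0, 0, 0]})
      (normalForm p₃ (q₃ + p₂ * r₃ + r₁ * p₃) r₃) := by
  have hunit : ∀ x y z : ZMod 2, IsUnit !![1, x, y; 0, 1, z; 0, 0, 1] := by
    intro x y z
    rw [Matrix.isUnit_iff_isUnit_det]
    simp [Matrix.det_fin_three]
  have h := matEquiv_span !![1, p₁, q₁; 0, 1, r₁; 0, 0, 0]
        !![0, p₂, q₂; 0, 1, r₂; 0, 0, 1] !![0, p₃, q₃; 0, 0, r₃; 0, 0, 0]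
        !![1, p₂, q₂ + p₂ * r₂; 0, 1, r₁ + r₂; 0, 0, 1]
        !![1, p₁ + p₂, r₁ * p₁ + q₁; 0, 1, r₁; 0, 0, 1] (hunit _ _ _) (hunit _ _ _)
  rw [normalForm]
  convert h using 5
  all_goals
    ext i j
    fin_cases i <;> fin_cases j <;> simp [Matrix.mul_apply, Fin.sum_univ_three] <;> grind

/-! ### Generators of a primitive three-dimensional subspace -/

theorem J3_form {M : Mat3} (hM : M ∈ J3) :
    M = !![M 0 0, M 0 1, M 0 2; 0, M 0 0 + M 2 2, M 1 2; 0, 0, M 2 2] := by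
  obtain ⟨htr, htri⟩ := hM
  rw [Matrix.trace_fin_three] at htr
  have h11 : M 1 1 = M 0 0 + M 2 2 := by
    have : ∀ x y z : ZMod 2, x + y + z = 0 → y = x + z := by decide
    exact this _ _ _ htr
  ext i j
  fin_cases i <;> fin_cases j <;> simp [h11, htri]

theorem exists_00_ne {V : Submodule (ZMod 2) Mat3} (hV : V ≤ J3) (hred : Reduced (ZMod 2) V) :
    ∃ M ∈ V, M 0 0 = 1 := by
  by_contra! hcon
  have h := hred.1 ![1, 0, 0] (by
    intro M hM
    have h0 : M 0 0 = 0 := by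
      have : ∀ x : ZMod 2, x ≠ 1 → x = 0 := by decide
      exact this _ (hcon M hM)
    rw [J3_form (hV hM), h0]
    ext i
    fin_cases i <;> simp [Matrix.mulVec, dotProduct, Fin.sum_univ_three])
  exact absurd h (by decide)

theorem exists_22_ne {V : Submodule (ZMod 2) Mat3} (hV : V ≤ J3) (hred : Reduced (ZMod 2) V) :
    ∃ M ∈ V, M 2 2 = 1 := by
  by_contra! hcon
  have hle : Submodule.span (ZMod 2)
      {y : Fin 3 → ZMod 2 | ∃ M ∈ V, ∃ x : Fin 3 → ZMod 2, M.mulVec x = y} ≤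
      LinearMap.ker (LinearMap.proj (R := ZMod 2) (φ := fun _ : Fin 3 => ZMod 2) 2) := by
    rw [Submodule.span_le]
    rintro y ⟨M, hM, x, rfl⟩
    have h0 : M 2 2 = 0 := by
      have : ∀ x : ZMod 2, x ≠ 1 → x = 0 := by decide
      exact this _ (hcon M hM)
    rw [J3_form (hV hM), h0]
    simp [dotProduct, Fin.sum_univ_three]
  rw [hred.2] at hle
  have : (![0, 0, 1] : Fin 3 → ZMod 2) ∈
      LinearMap.ker (LinearMap.proj (R := ZMod 2) (φ := fun _ : Fin 3 => ZMod 2) 2) :=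
    hle Submodule.mem_top
  simp at this

/-- If both outer diagonal entries agree on all of `V`, the middle one vanishes, so that the
first two columns of every matrix have rank at most one, whereas `V` has upper rank at least
two. This contradicts primitivity. -/
theorem exists_diag_ne {V : Submodule (ZMod 2) Mat3} (hV : V ≤ J3)
    (hprim : Primitive (ZMod 2) V) : ∃ M ∈ V, M 0 0 ≠ M 2 2 := by
  by_contra! hcon
  have hself : ∀ x : ZMod 2, x + x = 0 := by decide
  obtain ⟨M₀, hM₀, h00⟩ := exists_00_ne hV hprim.1.1
  have hurk : 2 ≤ urk V := by
    have hr : 2 ≤ M₀.rank := by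
      have hdet : (M₀.submatrix ![0, 2] ![0, 2]).rank = 2 := by
        rw [Matrix.rank_of_isUnit, Fintype.card_fin]
        rw [Matrix.isUnit_iff_isUnit_det, Matrix.det_fin_two]
        have h20 : M₀ 2 0 = 0 := (hV hM₀).2 2 0 (by decide)
        simp [h20, h00, ← hcon M₀ hM₀]
      exact hdet.ge.trans (Matrix.rank_submatrix_le _ _ _)
    refine hr.trans (le_csSup ⟨3, ?_⟩ ⟨M₀, hM₀, rfl⟩)
    rintro _ ⟨M, -, rfl⟩
    exact Matrix.rank_le_width M
  refine hprim.1.2 ⟨V, MatEquiv.refl V, fun M hM => ?_⟩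
  have : dropCol M = vecMulVec ![1, 0, 0] ![M 0 0, M 0 1] := by
    rw [J3_form (hV hM), ← hcon M hM]
    ext i j
    fin_cases i <;> fin_cases j <;> simp [dropCol, vecMulVec_apply, hself]
  rw [this]
  have := Matrix.rank_vecMulVec_le ![1, 0, 0] ![M 0 0, M 0 1]
  exact this.trans (by omega)

theorem exists_diag_gens {V : Submodule (ZMod 2) Mat3} (hV : V ≤ J3)
    (hprim : Primitive (ZMod 2) V) :
    (∃ A ∈ V, A 0 0 = 1 ∧ A 2 2 = 0) ∧ ∃ B ∈ V, B 0 0 = 0 ∧ B 2 2 = 1 := by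
  obtain ⟨M, hM, h⟩ := exists_00_ne hV hprim.1.1
  obtain ⟨M', hM', h'⟩ := exists_22_ne hV hprim.1.1
  obtain ⟨D, hD, hne⟩ := exists_diag_ne hV hprim
  have h01 : ∀ x : ZMod 2, x = 0 ∨ x = 1 := by decide
  have h11 : (1 + 1 : ZMod 2) = 0 := by decide
  rcases h01 (D 0 0) with h0 | h0 <;> rcases h01 (D 2 2) with h2 | h2
  · simp [h0, h2] at hne
  · refine ⟨?_, D, hD, h0, h2⟩
    rcases h01 (M 2 2) with h3 | h3
    · exact ⟨M, hM, h, h3⟩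
    · exact ⟨M + D, V.add_mem hM hD, by simp [h, h0], by simp [h3, h2, h11]⟩
  · refine ⟨⟨D, hD, h0, h2⟩, ?_⟩
    rcases h01 (M' 0 0) with h3 | h3
    · exact ⟨M', hM', h3, h'⟩
    · exact ⟨M' + D, V.add_mem hM' hD, by simp [h3, h0, h11], by simp [h', h2]⟩
  · simp [h0, h2] at hne

/-- Since `V` has dimension three, the projection to the outer diagonal entries has a kernel. -/
theorem exists_nilp {V : Submodule (ZMod 2) Mat3}
    (hdim : Module.finrank (ZMod 2) V = 3) : ∃ N ∈ V, N ≠ 0 ∧ N 0 0 = 0 ∧ N 2 2 = 0 := by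
  let f : Mat3 →ₗ[ZMod 2] (Fin 2 → ZMod 2) :=
    { toFun := fun M => ![M 0 0, M 2 2]
      map_add' := by intro M N; ext i; fin_cases i <;> simp
      map_smul' := by intro c M; ext i; fin_cases i <;> simp }
  have hker : LinearMap.ker (f.comp V.subtype) ≠ ⊥ := by
    apply LinearMap.ker_ne_bot_of_finrank_lt
    rw [hdim]
    simp
  obtain ⟨N, hN, hN0⟩ := Submodule.exists_mem_ne_zero_of_ne_bot hker
  have hf : f N = 0 := hN
  exact ⟨N, N.2, by simpa using hN0, congrFun hf 0, congrFun hf 1⟩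

theorem exists_normalForm {V : Submodule (ZMod 2) Mat3} (hV : V ≤ J3)
    (hprim : Primitive (ZMod 2) V) (hdim : Module.finrank (ZMod 2) V = 3) :
    ∃ p q r : ZMod 2, (p ≠ 0 ∨ q ≠ 0 ∨ r ≠ 0) ∧ MatEquiv (ZMod 2) V (normalForm p q r) := by
  obtain ⟨⟨A, hA, hA0, hA2⟩, B, hB, hB0, hB2⟩ := exists_diag_gens hV hprim
  obtain ⟨N, hN, hNne, hN0, hN2⟩ := exists_nilp hdim
  have hspan : Submodule.span (ZMod 2) {A, B, N} = V := by
    have hli : LinearIndependent (ZMod 2) ![A, B, N] := by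
      rw [Fintype.linearIndependent_iff]
      intro g hg
      rw [Fin.sum_univ_three] at hg
      have e0 := congrFun (congrFun hg 0) 0
      have e2 := congrFun (congrFun hg 2) 2
      simp [hA0, hB0, hN0] at e0
      simp [hA2, hB2, hN2] at e2
      simp [e0, e2, hNne] at hg
      intro i
      fin_cases i <;> assumption
    have hr : Set.range ![A, B, N] = {A, B, N} := by
      simp only [Matrix.range_cons, Matrix.range_empty, Set.union_empty, Set.singleton_union]
    apply Submodule.eq_of_le_of_finrank_eq
    · rw [Submodule.span_le]
      rintro x (rfl | rfl | rfl) <;> assumption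
    · rw [hdim, ← hr, finrank_span_eq_card hli, Fintype.card_fin]
  have fA := J3_form (hV hA)
  have fB := J3_form (hV hB)
  have fN := J3_form (hV hN)
  rw [hA0, hA2, add_zero] at fA
  rw [hB0, hB2, zero_add] at fB
  rw [hN0, hN2, add_zero] at fN
  refine ⟨N 0 1, N 0 2 + B 0 1 * N 1 2 + A 1 2 * N 0 1, N 1 2, ?_, ?_⟩
  · by_contra! hcon
    obtain ⟨h1, h2, h3⟩ := hcon
    simp only [h1, h3, mul_zero, add_zero] at h2
    apply hNne
    rw [fN, h1, h2, h3]
    decide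
  · have := span_equiv_normalForm (A 0 1) (A 0 2) (A 1 2) (B 0 1) (B 0 2) (B 1 2)
      (N 0 1) (N 0 2) (N 1 2)
    rwa [← fA, ← fB, ← fN, hspan] at this

theorem exactlyOne4_of {c₁ c₂ c₃ c₄ : Prop} (hex : c₁ ∨ c₂ ∨ c₃ ∨ c₄) (h12 : c₁ → c₂ → False)
    (h13 : c₁ → c₃ → False) (h23 : c₂ → c₃ → False) (h14 : c₁ → c₄ → False)
    (h24 : c₂ → c₄ → False) (h34 : c₃ → c₄ → False) : ExactlyOne4 c₁ c₂ c₃ c₄ := by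
  unfold ExactlyOne4
  tauto

theorem primitive_three_dimensional_subspace_of_J3
    (V : Submodule (ZMod 2) (Matrix (Fin 3) (Fin 3) (ZMod 2)))
    (hV : V ≤ J3) (hprim : Primitive (ZMod 2) V)
    (hdim : Module.finrank (ZMod 2) V = 3) :
    ExactlyOne4 (MatEquiv (ZMod 2) V SpaceM1) (MatEquiv (ZMod 2) V SpaceM2)
      (MatEquiv (ZMod 2) V SpaceM3) (MatEquiv (ZMod 2) V SpaceM4) := by
  obtain ⟨p, q, r, hne, hVN⟩ := exists_normalForm hV hprim hdim
  have hex : MatEquiv (ZMod 2) V SpaceM1 ∨ MatEquiv (ZMod 2) V SpaceM2 ∨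
      MatEquiv (ZMod 2) V SpaceM3 ∨ MatEquiv (ZMod 2) V SpaceM4 := by
    rcases normalForm_cases p q r hne with h | h | h | h
    · exact Or.inl (hVN.trans h)
    · exact Or.inr (Or.inl (hVN.trans h))
    · exact Or.inr (Or.inr (Or.inl (hVN.trans h)))
    · exact Or.inr (Or.inr (Or.inr (hVN.trans h)))
  have h12 : MatEquiv (ZMod 2) V SpaceM1 → MatEquiv (ZMod 2) V SpaceM2 → False := fun h h' =>
    not_twoThinCols_M2 (twoThinCols_M1.equiv (h'.symm.trans h))
  have h13 : MatEquiv (ZMod 2) V SpaceM1 → MatEquiv (ZMod 2) V SpaceM3 → False := fun h h' =>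
    not_twoThinRows_M3 (twoThinRows_M1.equiv (h'.symm.trans h))
  have h23 : MatEquiv (ZMod 2) V SpaceM2 → MatEquiv (ZMod 2) V SpaceM3 → False := fun h h' =>
    not_twoThinCols_M2 (twoThinCols_M3.equiv (h.symm.trans h'))
  have h14 : MatEquiv (ZMod 2) V SpaceM1 → MatEquiv (ZMod 2) V SpaceM4 → False := fun h h' =>
    not_hasRankOne_M4 (hasRankOne_M1.equiv (h.symm.trans h'))
  have h24 : MatEquiv (ZMod 2) V SpaceM2 → MatEquiv (ZMod 2) V SpaceM4 → False := fun h h' =>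
    not_hasRankOne_M4 (hasRankOne_M2.equiv (h.symm.trans h'))
  have h34 : MatEquiv (ZMod 2) V SpaceM3 → MatEquiv (ZMod 2) V SpaceM4 → False := fun h h' =>
    not_hasRankOne_M4 (hasRankOne_M3.equiv (h.symm.trans h'))
  exact exactlyOne4_of hex h12 h13 h23 h14 h24 h34
end
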